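/- Inhomogeneous boundary Harnack inequality in half-balls. For every integer n ≥ 2, reals 0 < λ ≤ Λ, exponents q > n and p with n ≤ p ≤ q, d₀ ∈ (0,1/4], and K > 0, there exists a constant C > 0 such that the following holds. Let b, f : B₂⁺ → ℝ be continuous with b ≥ 0 and ‖b‖_{L^q(B₂⁺)} ≤ K, and let u be continuous on B₂⁺ ∪ B₂⁰ and C² on B₂⁺, with L⁻[u] ≤ f⁺ and L⁺[u] ≥ −f⁻ in B₂⁺, u > 0 in B₂⁺, and u = 0 on B₂⁰. Then sup_{x ∈ B₁⁺} u(x)/x_n ≤ C·( inf_{x ∈ B_{3/2}⁺} u(x)/x_n + ‖f‖_{L^{p,q}(B₂⁺)} ). -/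

import Mathlib

open MeasureTheory
open scoped ENNReal

/-- The Pucci minimal extremal operator `𝓜⁻(M)` with ellipticity constants `lam ≤ Lam`:
the infimum of `tr(A*M)` over symmetric matrices `A` with `lam•I ≤ A ≤ Lam•I`. -/
noncomputable def pucciMinus (n : ℕ) (lam Lam : ℝ) (M : Matrix (Fin n) (Fin n) ℝ) : ℝ :=
  sInf { t : ℝ | ∃ A : Matrix (Fin n) (Fin n) ℝ, A.IsSymm ∧
    (A - lam • (1 : Matrix (Fin n) (Fin n) ℝ)).PosSemidef ∧
    (Lam • (1 : Matrix (Fin n) (Fin n) ℝ) - A).PosSemidef ∧ t = (A * M).trace }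

/-- The Pucci maximal extremal operator `𝓜⁺(M)`. -/
noncomputable def pucciPlus (n : ℕ) (lam Lam : ℝ) (M : Matrix (Fin n) (Fin n) ℝ) : ℝ :=
  sSup { t : ℝ | ∃ A : Matrix (Fin n) (Fin n) ℝ, A.IsSymm ∧
    (A - lam • (1 : Matrix (Fin n) (Fin n) ℝ)).PosSemidef ∧
    (Lam • (1 : Matrix (Fin n) (Fin n) ℝ) - A).PosSemidef ∧ t = (A * M).trace }

/-- The Hessian matrix `D²u(x)` of `u` at `x`. -/
noncomputable def hess (n : ℕ) (u : EuclideanSpace ℝ (Fin n) → ℝ)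
    (x : EuclideanSpace ℝ (Fin n)) : Matrix (Fin n) (Fin n) ℝ :=
  fun i j => fderiv ℝ (fun y => fderiv ℝ u y (EuclideanSpace.single j (1 : ℝ))) x
    (EuclideanSpace.single i (1 : ℝ))

/-- The euclidean norm `|Du(x)|` of the gradient of `u` at `x`. -/
noncomputable def gradNorm (n : ℕ) (u : EuclideanSpace ℝ (Fin n) → ℝ)
    (x : EuclideanSpace ℝ (Fin n)) : ℝ := ‖fderiv ℝ u x‖

/-- The `L^p` norm `(∫_E |g|^p)^(1/p)`, as a Lebesgue integral valued in `[0,∞]`. -/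
noncomputable def LpNormE (n : ℕ) (p : ℝ) (g : EuclideanSpace ℝ (Fin n) → ℝ)
    (E : Set (EuclideanSpace ℝ (Fin n))) : ℝ≥0∞ :=
  (∫⁻ x in E, ENNReal.ofReal (|g x| ^ p)) ^ (1 / p)

/-- The last (`n`-th) coordinate `x_n` of a point of `ℝⁿ`. -/
def lastC (n : ℕ) (hn : 1 ≤ n) (x : EuclideanSpace ℝ (Fin n)) : ℝ := x ⟨n - 1, by omega⟩

/-- The open half-ball `B_R⁺ = {|x| < R, x_n > 0}`. -/
def halfBall (n : ℕ) (hn : 1 ≤ n) (R : ℝ) : Set (EuclideanSpace ℝ (Fin n)) :=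
  {x | ‖x‖ < R ∧ 0 < lastC n hn x}

/-- The flat boundary part `B_R⁰ = {|x| ≤ R, x_n = 0}`. -/
def flatB (n : ℕ) (hn : 1 ≤ n) (R : ℝ) : Set (EuclideanSpace ℝ (Fin n)) :=
  {x | ‖x‖ ≤ R ∧ lastC n hn x = 0}

/-- The norm `‖g‖_{L^{p,q}(B_R⁺)} = ‖g‖_{L^p(B_R⁺)} + ‖g‖_{L^q(B_R⁺ ∩ {x_n < d0})}`. -/
noncomputable def LpqNormHB (n : ℕ) (hn : 1 ≤ n) (p q d0 R : ℝ)
    (g : EuclideanSpace ℝ (Fin n) → ℝ) : ℝ≥0∞ :=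
  LpNormE n p g (halfBall n hn R) +
    LpNormE n q g {x ∈ halfBall n hn R | lastC n hn x < d0}

/-- The open cube `Q_ρ` of side `ρ` centered at `(0,…,0,ρ/2)`. -/
def cubeQ (n : ℕ) (hn : 1 ≤ n) (ρ : ℝ) : Set (EuclideanSpace ℝ (Fin n)) :=
  {x | (∀ i : Fin n, i.1 ≠ n - 1 → |x i| < ρ / 2) ∧ 0 < lastC n hn x ∧ lastC n hn x < ρ}

/-- The norm `‖g‖_{L^{p,q}(Q₂)} = ‖g‖_{L^p(Q₂)} + ‖g‖_{L^q(Q₂ ∩ {x_n < d0})}`. -/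
noncomputable def LpqNormQ (n : ℕ) (hn : 1 ≤ n) (p q d0 : ℝ)
    (g : EuclideanSpace ℝ (Fin n) → ℝ) : ℝ≥0∞ :=
  LpNormE n p g (cubeQ n hn 2) +
    LpNormE n q g {x ∈ cubeQ n hn 2 | lastC n hn x < d0}

/-!
Suppose that `u / xₙ` is small at a point `y`. By the Hopf lemma `u` must then be comparably small
at some point `z` whose distance to the boundary is bounded below. The weak Harnack inequality,
with the growth lemma iterated through the whole half-ball, turns the value `u z` into a bound on
the integral of a small power of `u`, and the local maximum principle, which holds up to the flat
boundary because `u` vanishes there, turns this moment into a pointwise bound on `u`. The boundary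
Lipschitz estimate finally bounds `u / xₙ` by the supremum of `u`.

Each of these estimates comes from the Alexandrov–Bakelman–Pucci estimate, applied to `u` with a
barrier added or to the product of `u` and a cutoff function. Since `q > n`, the `Lⁿ` norm of a
function in `L^q` over a ball of radius `ρ` is `O(ρ ^ (1 - n / q))`, which makes the drift a small
perturbation on small balls; near the flat boundary, where such decay is needed of the source as
well, `f` is bounded in `L^q` too.
-/

namespace BoundaryHarnack

open Set Metric Filter Topology Module Laplacian

local notation "dim" => Module.finrank ℝ

variable {E : Type*} [NormedAddCommGroup E] [InnerProductSpace ℝ E] {lam Lam : ℝ}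
  {w v φ : E → ℝ} {x : E}

/-! ### Second derivatives along a direction -/

/-- The Hessian quadratic form `⟨D²w(x) z, z⟩`. -/
noncomputable def hessAt (w : E → ℝ) (x z : E) : ℝ := fderiv ℝ (fderiv ℝ w) x z z

lemma differentiableAt_fderiv_of_contDiffAt_two (hw : ContDiffAt ℝ 2 w x) :
    DifferentiableAt ℝ (fderiv ℝ w) x :=
  (hw.fderiv_right (m := 1) (by norm_num)).differentiableAt (by norm_num)

lemma eventually_differentiableAt_of_contDiffAt_two (hw : ContDiffAt ℝ 2 w x) :
    ∀ᶠ y in 𝓝 x, DifferentiableAt ℝ w y :=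
  (hw.eventually (by simp)).mono fun _ hy => hy.differentiableAt (by norm_num)

lemma hessAt_congr (h : w =ᶠ[𝓝 x] v) : hessAt w x = hessAt v x := by
  ext z
  rw [hessAt, hessAt, h.fderiv.fderiv_eq]

lemma hessAt_add (hw : ContDiffAt ℝ 2 w x) (hv : ContDiffAt ℝ 2 v x) (z : E) :
    hessAt (fun y => w y + v y) x z = hessAt w x z + hessAt v x z := by
  have hfderiv : fderiv ℝ (fun y => w y + v y) =ᶠ[𝓝 x] fun y => fderiv ℝ w y + fderiv ℝ v y := by
    filter_upwards [eventually_differentiableAt_of_contDiffAt_two hw,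
      eventually_differentiableAt_of_contDiffAt_two hv] with y using fderiv_fun_add
  rw [hessAt, hfderiv.fderiv_eq, fderiv_fun_add (differentiableAt_fderiv_of_contDiffAt_two hw)
    (differentiableAt_fderiv_of_contDiffAt_two hv)]
  rfl

lemma hessAt_mul (hw : ContDiffAt ℝ 2 w x) (hv : ContDiffAt ℝ 2 v x) (z : E) :
    hessAt (fun y => w y * v y) x z =
      w x * hessAt v x z + 2 * (fderiv ℝ w x z * fderiv ℝ v x z) + v x * hessAt w x z := by
  have hfderiv : fderiv ℝ (fun y => w y * v y) =ᶠ[𝓝 x]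
      fun y => w y • fderiv ℝ v y + v y • fderiv ℝ w y := by
    filter_upwards [eventually_differentiableAt_of_contDiffAt_two hw,
      eventually_differentiableAt_of_contDiffAt_two hv] with y using fderiv_fun_mul
  have hw₁ := (hw.differentiableAt two_ne_zero).hasFDerivAt
  have hv₁ := (hv.differentiableAt two_ne_zero).hasFDerivAt
  have hw₂ := (differentiableAt_fderiv_of_contDiffAt_two hw).hasFDerivAt
  have hv₂ := (differentiableAt_fderiv_of_contDiffAt_two hv).hasFDerivAt
  rw [hessAt, hfderiv.fderiv_eq, ((hw₁.fun_smul hv₂).fun_add (hv₁.fun_smul hw₂)).fderiv]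
  simp [hessAt]
  ring

lemma hessAt_const (r : ℝ) (x z : E) : hessAt (fun _ => r) x z = 0 := by
  simp [hessAt, fderiv_fun_const]

lemma hessAt_clm (l : E →L[ℝ] ℝ) (x z : E) : hessAt (fun y => l y) x z = 0 := by
  have hfderiv : fderiv ℝ (fun y => l y) = fun _ => l := funext fun _ => l.fderiv
  simp [hessAt, hfderiv]

lemma hessAt_const_mul (hw : ContDiffAt ℝ 2 w x) (r : ℝ) (z : E) :
    hessAt (fun y => r * w y) x z = r * hessAt w x z := by
  rw [hessAt_mul contDiffAt_const hw]
  simp [hessAt_const]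

lemma hessAt_neg (w : E → ℝ) (x z : E) : hessAt (fun y => -w y) x z = -hessAt w x z := by
  have hfderiv : fderiv ℝ (fun y => -w y) = fun y => -fderiv ℝ w y := funext fun _ => fderiv_fun_neg
  rw [hessAt, hfderiv, fderiv_fun_neg]
  rfl

lemma fderiv_norm_sub_sq (c y : E) :
    fderiv ℝ (fun y => ‖y - c‖ ^ 2) y = (2 : ℝ) • innerSL ℝ (y - c) := by
  rw [fderiv_comp_sub (f := fun y => ‖y‖ ^ 2), fderiv_norm_sq_apply, two_smul, two_smul]

lemma contDiff_norm_sub_sq (c : E) : ContDiff ℝ 2 (fun y => ‖y - c‖ ^ 2) :=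
  (contDiff_id.sub contDiff_const).norm_sq ℝ

lemma hessAt_norm_sub_sq (c x z : E) : hessAt (fun y => ‖y - c‖ ^ 2) x z = 2 * ‖z‖ ^ 2 := by
  have hfderiv : fderiv ℝ (fun y : E => ‖y - c‖ ^ 2) = fun y => ((2 : ℝ) • innerSL ℝ) (y - c) :=
    funext (fderiv_norm_sub_sq c)
  rw [hessAt, hfderiv, fderiv_comp_sub (f := ⇑((2 : ℝ) • innerSL ℝ)),
    ContinuousLinearMap.fderiv, ← real_inner_self_eq_norm_sq]
  rfl

lemma fderiv_real_comp {F : ℝ → ℝ} (hF : DifferentiableAt ℝ F (w x))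
    (hw : DifferentiableAt ℝ w x) :
    fderiv ℝ (fun y => F (w y)) x = deriv F (w x) • fderiv ℝ w x :=
  (hF.hasDerivAt.comp_hasFDerivAt x hw.hasFDerivAt).fderiv

lemma hessAt_real_comp {F : ℝ → ℝ} (hF : ContDiff ℝ 2 F) (hw : ContDiffAt ℝ 2 w x) (z : E) :
    hessAt (fun y => F (w y)) x z =
      deriv (deriv F) (w x) * (fderiv ℝ w x z) ^ 2 + deriv F (w x) * hessAt w x z := by
  have hF₁ : Differentiable ℝ F := hF.differentiable two_ne_zero
  have hF₂ : Differentiable ℝ (deriv F) :=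
    ContDiff.differentiable (n := 1) hF.deriv' one_ne_zero
  have hfderiv : fderiv ℝ (fun y => F (w y)) =ᶠ[𝓝 x] fun y => deriv F (w y) • fderiv ℝ w y := by
    filter_upwards [eventually_differentiableAt_of_contDiffAt_two hw] with y hy
    exact fderiv_real_comp (hF₁ _) hy
  have hw₁ := (hw.differentiableAt two_ne_zero).hasFDerivAt
  have hw₂ := (differentiableAt_fderiv_of_contDiffAt_two hw).hasFDerivAt
  have hcomp : HasFDerivAt (fun y => deriv F (w y)) (deriv (deriv F) (w x) • fderiv ℝ w x) x :=
    (hF₂ (w x)).hasDerivAt.comp_hasFDerivAt x hw₁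
  rw [hessAt, hfderiv.fderiv_eq, (hcomp.fun_smul hw₂).fderiv]
  simp [hessAt]
  ring

lemma hasDerivAt_along_line {F : Type*} [NormedAddCommGroup F] [NormedSpace ℝ F] {G : E → F}
    {x z : E} {t : ℝ} (hG : DifferentiableAt ℝ G (x + t • z)) :
    HasDerivAt (fun s : ℝ => G (x + s • z)) (fderiv ℝ G (x + t • z) z) t := by
  have hline : HasDerivAt (fun s : ℝ => x + s • z) z t := by
    simpa using ((hasDerivAt_id t).smul_const z).const_add x
  exact hG.hasFDerivAt.comp_hasDerivAt t hline

lemma tendsto_along_line (x z : E) : Tendsto (fun s : ℝ => x + s • z) (𝓝 0) (𝓝 x) := by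
  have hline : Continuous fun s : ℝ => x + s • z := by fun_prop
  simpa using hline.tendsto 0

lemma hessAt_eq_deriv_deriv (hw : ContDiffAt ℝ 2 w x) (z : E) :
    hessAt w x z = deriv (deriv fun s : ℝ => w (x + s • z)) 0 := by
  have hderiv : deriv (fun s : ℝ => w (x + s • z)) =ᶠ[𝓝 0] fun s => fderiv ℝ w (x + s • z) z := by
    filter_upwards [(tendsto_along_line x z).eventually
      (eventually_differentiableAt_of_contDiffAt_two hw)] with s hs
    exact (hasDerivAt_along_line hs).deriv
  have hfderiv : DifferentiableAt ℝ (fderiv ℝ w) (x + (0 : ℝ) • z) := by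
    simpa using differentiableAt_fderiv_of_contDiffAt_two hw
  have happly := (ContinuousLinearMap.apply ℝ ℝ z).hasFDerivAt.comp_hasDerivAt 0
    (hasDerivAt_along_line hfderiv)
  rw [hderiv.deriv_eq, hessAt]
  simpa using happly.deriv.symm.trans (by rfl)

lemma deriv_deriv_nonpos_of_isLocalMax {g : ℝ → ℝ} {t : ℝ}
    (hmax : IsLocalMax g t) (hcont : ContinuousAt g t) : deriv (deriv g) t ≤ 0 := by
  by_contra! hpos
  have hmin := isLocalMin_of_deriv_deriv_pos hpos hmax.deriv_eq_zero hcont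
  have hconst : g =ᶠ[𝓝 t] fun _ => g t := by
    filter_upwards [hmin, hmax] with s h₁ h₂ using le_antisymm h₂ h₁
  rw [hconst.deriv.deriv_eq] at hpos
  simp at hpos

lemma hessAt_nonpos_of_isLocalMax (hw : ContDiffAt ℝ 2 w x) (hmax : IsLocalMax w x) (z : E) :
    hessAt w x z ≤ 0 := by
  have hcont : ContinuousAt (fun s : ℝ => w (x + s • z)) 0 := by
    refine ContinuousAt.comp (g := w) ?_ (by fun_prop)
    simpa using hw.continuousAt
  rw [hessAt_eq_deriv_deriv hw]
  refine deriv_deriv_nonpos_of_isLocalMax ?_ hcont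
  simpa [IsLocalMax, IsMaxFilter] using (tendsto_along_line x z).eventually hmax

lemma hessAt_nonpos_of_le_tangent (hw : ContDiffAt ℝ 2 w x)
    (hle : ∀ᶠ y in 𝓝 x, w y ≤ w x + fderiv ℝ w x (y - x)) (z : E) : hessAt w x z ≤ 0 := by
  set l := -fderiv ℝ w x
  have hmax : IsLocalMax (fun y => w y + l y) x := by
    filter_upwards [hle] with y hy
    simp only [l, map_sub, neg_apply] at hy ⊢
    linarith
  simpa [hessAt_add hw l.contDiff.contDiffAt, hessAt_clm] using
    hessAt_nonpos_of_isLocalMax (hw.add l.contDiff.contDiffAt) hmax z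

/-! ### Pucci inequalities at a point -/

section Pucci

variable {m m' : ℝ}

/-- `𝓜⁺(D²w(x)) ≥ m`, expressed through a frame: some operator diagonal in an orthonormal basis,
with coefficients in `[lam, Lam]`, takes a value at least `m` on the Hessian. -/
def PucciPlusGe (lam Lam : ℝ) (w : E → ℝ) (x : E) (m : ℝ) : Prop :=
  ∃ (ξ : OrthonormalBasis (Fin (dim E)) ℝ E) (a : Fin (dim E) → ℝ),
    (∀ k, a k ∈ Icc lam Lam) ∧ m ≤ ∑ k, a k * hessAt w x (ξ k)

/-- `𝓜⁻(D²w(x)) ≥ m`, expressed through frames as in `PucciPlusGe`. -/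
def PucciMinusGe (lam Lam : ℝ) (w : E → ℝ) (x : E) (m : ℝ) : Prop :=
  ∀ (ξ : OrthonormalBasis (Fin (dim E)) ℝ E) (a : Fin (dim E) → ℝ),
    (∀ k, a k ∈ Icc lam Lam) → m ≤ ∑ k, a k * hessAt w x (ξ k)

lemma sum_sq_inner_orthonormalBasis {ι : Type*} [Fintype ι] (ξ : OrthonormalBasis ι ℝ E) (y : E) :
    ∑ k, (inner ℝ y (ξ k)) ^ 2 = ‖y‖ ^ 2 := by
  simpa using ξ.sum_sq_norm_inner_left y

lemma PucciPlusGe.mono (hw : PucciPlusGe lam Lam w x m) (hm : m' ≤ m) :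
    PucciPlusGe lam Lam w x m' := by
  obtain ⟨ξ, a, ha, hsum⟩ := hw
  exact ⟨ξ, a, ha, hm.trans hsum⟩

lemma PucciMinusGe.mono (hw : PucciMinusGe lam Lam w x m) (hm : m' ≤ m) :
    PucciMinusGe lam Lam w x m' :=
  fun ξ a ha => hm.trans (hw ξ a ha)

lemma PucciPlusGe.congr (hw : PucciPlusGe lam Lam w x m) (h : v =ᶠ[𝓝 x] w) :
    PucciPlusGe lam Lam v x m := by
  simpa only [PucciPlusGe, hessAt_congr h] using hw

lemma PucciPlusGe.add (hw : PucciPlusGe lam Lam w x m) (hφ : PucciMinusGe lam Lam φ x m')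
    (hw₂ : ContDiffAt ℝ 2 w x) (hφ₂ : ContDiffAt ℝ 2 φ x) :
    PucciPlusGe lam Lam (fun y => w y + φ y) x (m + m') := by
  obtain ⟨ξ, a, ha, hsum⟩ := hw
  refine ⟨ξ, a, ha, ?_⟩
  simp only [hessAt_add hw₂ hφ₂, mul_add, Finset.sum_add_distrib]
  exact add_le_add hsum (hφ ξ a ha)

lemma PucciPlusGe.const_mul {r : ℝ} (hw : PucciPlusGe lam Lam w x m) (hr : 0 ≤ r)
    (hw₂ : ContDiffAt ℝ 2 w x) : PucciPlusGe lam Lam (fun y => r * w y) x (r * m) := by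
  obtain ⟨ξ, a, ha, hsum⟩ := hw
  refine ⟨ξ, a, ha, ?_⟩
  simp only [hessAt_const_mul hw₂, mul_left_comm _ r, ← Finset.mul_sum]
  gcongr

/-- `w` is a classical subsolution at `x` of `𝓜⁺(D²w) + b |Dw| ≥ -g`, in the frame form of
`PucciPlusGe`. -/
structure IsSubsolutionAt (lam Lam : ℝ) (b g w : E → ℝ) (x : E) : Prop where
  contDiffAt : ContDiffAt ℝ 2 w x
  pucciPlusGe : PucciPlusGe lam Lam w x (-(b x * ‖fderiv ℝ w x‖ + g x))

lemma IsSubsolutionAt.const_mul {b g : E → ℝ} {r : ℝ} (hw : IsSubsolutionAt lam Lam b g w x)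
    (hr : 0 ≤ r) : IsSubsolutionAt lam Lam b (fun y => r * g y) (fun y => r * w y) x where
  contDiffAt := contDiffAt_const.mul hw.contDiffAt
  pucciPlusGe := by
    rw [fderiv_const_mul (hw.contDiffAt.differentiableAt two_ne_zero), norm_smul,
      Real.norm_of_nonneg hr]
    convert hw.pucciPlusGe.const_mul hr hw.contDiffAt using 1
    ring

lemma IsSubsolutionAt.add {b g g' : E → ℝ} {D : ℝ} (hw : IsSubsolutionAt lam Lam b g w x)
    (hφ : ContDiffAt ℝ 2 φ x) (hb : 0 ≤ b x) (hD : ‖fderiv ℝ φ x‖ ≤ D)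
    (hm : PucciMinusGe lam Lam φ x m) (hg' : g x + D * b x - m ≤ g' x) :
    IsSubsolutionAt lam Lam b g' (fun y => w y + φ y) x where
  contDiffAt := hw.contDiffAt.add hφ
  pucciPlusGe := by
    refine (hw.pucciPlusGe.add hm hw.contDiffAt hφ).mono ?_
    have hfderiv : fderiv ℝ w x = fderiv ℝ (fun y => w y + φ y) x - fderiv ℝ φ x := by
      rw [fderiv_fun_add (hw.contDiffAt.differentiableAt two_ne_zero)
        (hφ.differentiableAt two_ne_zero), add_sub_cancel_right]
    have hnorm : ‖fderiv ℝ w x‖ ≤ ‖fderiv ℝ (fun y => w y + φ y) x‖ + D := by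
      rw [hfderiv]
      exact (norm_sub_le _ _).trans (by gcongr)
    linarith [mul_le_mul_of_nonneg_left hnorm hb]

end Pucci

/-! ### The Alexandrov–Bakelman–Pucci estimate -/

section HessianOperator

variable [FiniteDimensional ℝ E]

/-- The Hessian `D²w(x)` as an operator, the derivative of the gradient. -/
noncomputable def hessOp (w : E → ℝ) (x : E) : E →L[ℝ] E :=
  (InnerProductSpace.toDual ℝ E).symm.toContinuousLinearEquiv.toContinuousLinearMap ∘L
    fderiv ℝ (fderiv ℝ w) x

lemma inner_hessOp (w : E → ℝ) (x y z : E) :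
    inner ℝ (hessOp w x y) z = fderiv ℝ (fderiv ℝ w) x y z := by
  simp [hessOp]

lemma laplacian_eq_sum_hessAt {ι : Type*} [Fintype ι] (w : E → ℝ) (x : E)
    (ξ : OrthonormalBasis ι ℝ E) : Δ w x = ∑ k, hessAt w x (ξ k) := by
  simp [InnerProductSpace.laplacian_eq_iteratedFDeriv_orthonormalBasis w ξ,
    iteratedFDeriv_two_apply, hessAt]

lemma isSymmetric_hessOp (hw : ContDiffAt ℝ 2 w x) : (hessOp w x).toLinearMap.IsSymmetric := by
  intro y z
  change inner ℝ (hessOp w x y) z = inner ℝ y (hessOp w x z)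
  rw [inner_hessOp, real_inner_comm, inner_hessOp]
  exact hw.isSymmSndFDerivAt (by simp) y z

lemma hessAt_eigenvectorBasis (hw : ContDiffAt ℝ 2 w x) (i : Fin (dim E)) :
    hessAt w x ((isSymmetric_hessOp hw).eigenvectorBasis rfl i) =
      (isSymmetric_hessOp hw).eigenvalues rfl i := by
  set ξ := (isSymmetric_hessOp hw).eigenvectorBasis rfl
  have heigen : hessOp w x (ξ i) = (isSymmetric_hessOp hw).eigenvalues rfl i • ξ i :=
    (isSymmetric_hessOp hw).apply_eigenvectorBasis rfl i
  rw [hessAt, ← inner_hessOp, heigen, real_inner_smul_left, real_inner_self_eq_norm_sq]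
  simp

lemma laplacian_nonpos (hneg : ∀ z, hessAt w x z ≤ 0) : Δ w x ≤ 0 := by
  rw [laplacian_eq_sum_hessAt w x (stdOrthonormalBasis ℝ E)]
  exact Finset.sum_nonpos fun i _ => hneg _

lemma abs_det_hessOp_le (hw : ContDiffAt ℝ 2 w x) (hneg : ∀ z, hessAt w x z ≤ 0) :
    |(hessOp w x).det| ≤ (-Δ w x) ^ dim E := by
  set hsymm := isSymmetric_hessOp hw
  have heigen_nonpos (i) : hsymm.eigenvalues rfl i ≤ 0 :=
    (hessAt_eigenvectorBasis hw i).symm.trans_le (hneg _)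
  have hdet : (hessOp w x).det = ∏ i, hsymm.eigenvalues rfl i := by
    rw [ContinuousLinearMap.det]
    exact_mod_cast hsymm.det_eq_prod_eigenvalues rfl
  have hlap : Δ w x = ∑ i, hsymm.eigenvalues rfl i := by
    simp only [laplacian_eq_sum_hessAt w x (hsymm.eigenvectorBasis rfl),
      hessAt_eigenvectorBasis hw]
  calc |(hessOp w x).det| = ∏ i, |hsymm.eigenvalues rfl i| := by rw [hdet, Finset.abs_prod]
    _ ≤ ∏ _i : Fin (dim E), (-Δ w x) := by
        refine Finset.prod_le_prod (fun _ _ => abs_nonneg _) fun i hi => ?_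
        rw [abs_of_nonpos (heigen_nonpos i), hlap, ← Finset.sum_neg_distrib]
        exact Finset.single_le_sum (f := fun i => -hsymm.eigenvalues rfl i)
          (fun j _ => neg_nonneg.2 (heigen_nonpos j)) hi
    _ = (-Δ w x) ^ dim E := by simp

lemma PucciPlusGe.mul_neg_laplacian_le {m : ℝ} (hw : PucciPlusGe lam Lam w x (-m))
    (hneg : ∀ z, hessAt w x z ≤ 0) : lam * (-Δ w x) ≤ m := by
  obtain ⟨ξ, a, ha, hsum⟩ := hw
  have hle : ∑ k, a k * hessAt w x (ξ k) ≤ lam * Δ w x := by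
    rw [laplacian_eq_sum_hessAt w x ξ, Finset.mul_sum]
    exact Finset.sum_le_sum fun k _ => mul_le_mul_of_nonpos_right (ha k).1 (hneg _)
  linarith

lemma IsSubsolutionAt.neg_laplacian_pow_le_enorm_pow {W b g : E → ℝ} {s : ℝ} (hlam : 0 < lam)
    (hW : IsSubsolutionAt lam Lam b g W x)
    (hneg : ∀ z, hessAt W x z ≤ 0) (hslope : ‖fderiv ℝ W x‖ ≤ s) :
    ENNReal.ofReal ((-Δ W x) ^ dim E) ≤ ‖lam⁻¹ * (s * |b x| + |g x|)‖ₑ ^ dim E := by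
  have hlap : 0 ≤ -Δ W x := neg_nonneg.2 (laplacian_nonpos hneg)
  have hle : -Δ W x ≤ lam⁻¹ * (s * |b x| + |g x|) := by
    rw [le_inv_mul_iff₀ hlam]
    refine (hW.pucciPlusGe.mul_neg_laplacian_le hneg).trans ?_
    rw [mul_comm s]
    gcongr <;> exact le_abs_self _
  rw [ENNReal.ofReal_pow hlap]
  gcongr
  rw [Real.enorm_eq_ofReal_abs]
  exact ENNReal.ofReal_le_ofReal (hle.trans (le_abs_self _))

end HessianOperator

section ContactSet

variable {K U : Set E} {d s : ℝ}

/-- The points of `U` where `W > 0`, the graph of `W` over `K` lies below its tangent plane, and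
the slope of this plane is less than `s`. -/
def contactSet (K U : Set E) (s : ℝ) (W : E → ℝ) : Set E :=
  {x ∈ U | 0 < W x ∧ (∀ y ∈ K, W y ≤ W x + fderiv ℝ W x (y - x)) ∧ ‖fderiv ℝ W x‖ < s}

variable {W : E → ℝ} (hU : IsOpen U) (hUK : U ⊆ K) (hW : ContinuousOn W K)
  (hW₂ : ∀ x ∈ U, 0 < W x → ContDiffAt ℝ 2 W x)

include hU hUK hW₂ in
lemma hessAt_nonpos_of_mem_contactSet (hx : x ∈ contactSet K U s W) (z : E) :
    hessAt W x z ≤ 0 :=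
  hessAt_nonpos_of_le_tangent (hW₂ x hx.1 hx.2.1)
    (mem_of_superset (hU.mem_nhds hx.1) fun y hy => hx.2.2.1 y (hUK hy)) z

include hU hUK hW hW₂ in
lemma measurableSet_contactSet [MeasurableSpace E] [BorelSpace E] :
    MeasurableSet (contactSet K U s W) := by
  set V := {x ∈ U | 0 < W x}
  have hV : IsOpen V := (hW.mono hUK).isOpen_inter_preimage hU isOpen_Ioi
  have hcont : Continuous fun x : V => W x :=
    continuousOn_iff_continuous_domRestrict.1 (hW.mono fun x hx => hUK hx.1)
  have hcont' : Continuous fun x : V => fderiv ℝ W x :=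
    continuousOn_iff_continuous_domRestrict.1 fun x hx =>
      (differentiableAt_fderiv_of_contDiffAt_two
        (hW₂ x hx.1 hx.2)).continuousAt.continuousWithinAt
  have hclosed : IsClosed {x : V | ∀ y ∈ K, W y ≤ W x + fderiv ℝ W x (y - (x : E))} := by
    simp only [ofPred_forall]
    exact isClosed_biInter fun y _ =>
      isClosed_le continuous_const (hcont.add (hcont'.clm_apply (by fun_prop)))
  have hopen : IsOpen {x : V | ‖fderiv ℝ W x‖ < s} := isOpen_lt hcont'.norm continuous_const
  convert hV.measurableSet.subtype_image (hclosed.measurableSet.inter hopen.measurableSet) using 1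
  ext x
  constructor
  · rintro ⟨hxU, hpos, htangent, hslope⟩
    exact ⟨⟨x, hxU, hpos⟩, ⟨htangent, hslope⟩, rfl⟩
  · rintro ⟨⟨y, hy⟩, ⟨htangent, hslope⟩, rfl⟩
    exact ⟨hy.1, hy.2, htangent, hslope⟩

include hU hUK hW hW₂ in
-- Lower the graph of `⟨p, ·⟩` until it touches the graph of `W`.
lemma ball_subset_image_gradient_contactSet [FiniteDimensional ℝ E] (hK : IsCompact K)
    (hneg : ∀ x ∈ K \ U, W x ≤ 0) (hd : ∀ x ∈ K, ∀ y ∈ K, dist x y ≤ d) {x₀ : E}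
    (hx₀ : x₀ ∈ K) (hs : s * d < W x₀) :
    ball 0 s ⊆ (fun x => (InnerProductSpace.toDual ℝ E).symm (fderiv ℝ W x)) ''
      contactSet K U s W := by
  intro p hp
  rw [mem_ball_zero_iff] at hp
  set l := -innerSL ℝ p
  obtain ⟨x₁, hx₁, hmax⟩ := hK.exists_isMaxOn ⟨x₀, hx₀⟩
    (f := fun y => W y + l y) (hW.add (by fun_prop))
  have hpos : 0 < W x₁ := by
    have hle : W x₀ - inner ℝ p x₀ ≤ W x₁ - inner ℝ p x₁ := by
      simpa [l, sub_eq_add_neg] using hmax hx₀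
    have hinner : inner ℝ p (x₀ - x₁) ≤ s * d := by
      refine (real_inner_le_norm p _).trans ?_
      rw [← dist_eq_norm]
      exact mul_le_mul hp.le (hd x₀ hx₀ x₁ hx₁) dist_nonneg ((norm_nonneg p).trans hp.le)
    rw [inner_sub_right] at hinner
    linarith
  have hx₁U : x₁ ∈ U := by
    by_contra h
    exact hpos.not_ge (hneg x₁ ⟨hx₁, h⟩)
  have hcrit : fderiv ℝ W x₁ = InnerProductSpace.toDual ℝ E p := by
    have hderiv := ((hW₂ x₁ hx₁U hpos).differentiableAt two_ne_zero).hasFDerivAt.add l.hasFDerivAt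
    have hloc : IsLocalMax (fun y => W y + l y) x₁ :=
      mem_of_superset (hU.mem_nhds hx₁U) fun y hy => hmax (hUK hy)
    exact sub_eq_zero.1 ((sub_eq_add_neg _ _).trans (hloc.hasFDerivAt_eq_zero hderiv))
  refine ⟨x₁, ⟨hx₁U, hpos, fun y hy => ?_, by simpa [hcrit] using hp⟩, by simp [hcrit]⟩
  have hle : W y - inner ℝ p y ≤ W x₁ - inner ℝ p x₁ := by
    simpa [l, sub_eq_add_neg] using hmax hy
  simp only [hcrit, InnerProductSpace.toDual_apply_apply, inner_sub_right]
  linarith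

include hU hUK hW hW₂ in
lemma volume_ball_le_lintegral_contactSet [FiniteDimensional ℝ E] [MeasurableSpace E]
    [BorelSpace E] (hK : IsCompact K) (hneg : ∀ x ∈ K \ U, W x ≤ 0)
    (hd : ∀ x ∈ K, ∀ y ∈ K, dist x y ≤ d) {x₀ : E} (hx₀ : x₀ ∈ K) (hs : s * d < W x₀) :
    volume (ball (0 : E) s) ≤
      ∫⁻ x in contactSet K U s W, ENNReal.ofReal ((-Δ W x) ^ dim E) := by
  let J := (InnerProductSpace.toDual ℝ E).symm.toContinuousLinearEquiv.toContinuousLinearMap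
  have hgrad : ∀ x ∈ contactSet K U s W,
      HasFDerivWithinAt (fun x => J (fderiv ℝ W x)) (hessOp W x) (contactSet K U s W) x := by
    intro x hx
    have hfderiv := (differentiableAt_fderiv_of_contDiffAt_two (hW₂ x hx.1 hx.2.1)).hasFDerivAt
    exact (J.hasFDerivAt.comp x hfderiv).hasFDerivWithinAt
  have hmeas := measurableSet_contactSet (s := s) hU hUK hW hW₂
  calc volume (ball (0 : E) s) ≤ volume ((fun x => J (fderiv ℝ W x)) '' contactSet K U s W) :=
        measure_mono (ball_subset_image_gradient_contactSet hU hUK hW hW₂ hK hneg hd hx₀ hs)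
    _ ≤ ∫⁻ x in contactSet K U s W, ENNReal.ofReal |(hessOp W x).det| :=
        addHaar_image_le_lintegral_abs_det_fderiv volume hmeas hgrad
    _ ≤ ∫⁻ x in contactSet K U s W, ENNReal.ofReal ((-Δ W x) ^ dim E) :=
        setLIntegral_mono' hmeas fun x hx => ENNReal.ofReal_le_ofReal <|
          abs_det_hessOp_le (hW₂ x hx.1 hx.2.1)
            (hessAt_nonpos_of_mem_contactSet hU hUK hW₂ hx)

end ContactSet

section ABP

variable [FiniteDimensional ℝ E] [MeasurableSpace E] [BorelSpace E]

/-- The norm of `Lⁿ(S)`, where `n` is the dimension of the space. -/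
noncomputable abbrev dimNorm (g : E → ℝ) (S : Set E) : ℝ≥0∞ :=
  eLpNorm g (dim E) (volume.restrict S)

lemma dimNorm_mono_set {g : E → ℝ} {S S' : Set E} (h : S ⊆ S') : dimNorm g S ≤ dimNorm g S' :=
  eLpNorm_mono_measure g (Measure.restrict_mono_set volume h)

lemma dimNorm_const_mul (r : ℝ) (g : E → ℝ) (S : Set E) :
    dimNorm (fun x => r * g x) S = ENNReal.ofReal |r| * dimNorm g S := by
  rw [← Real.enorm_eq_ofReal_abs]
  exact eLpNorm_const_smul r g _ _

variable [Nontrivial E]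

lemma lintegral_enorm_pow_dim (g : E → ℝ) (S : Set E) :
    ∫⁻ x in S, ‖g x‖ₑ ^ dim E = dimNorm g S ^ dim E := by
  have hdim : dim E ≠ 0 := finrank_pos.ne'
  simpa using (eLpNorm_nnreal_pow_eq_lintegral (f := g) (μ := volume.restrict S) (p := dim E)
    (by exact_mod_cast hdim)).symm

lemma dimNorm_add_le {f g : E → ℝ} {S : Set E} (hf : Measurable f) (hg : Measurable g) :
    dimNorm (fun x => f x + g x) S ≤ dimNorm f S + dimNorm g S :=
  eLpNorm_add_le hf.aestronglyMeasurable hg.aestronglyMeasurable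
    (by exact_mod_cast Nat.one_le_iff_ne_zero.2 (finrank_pos (R := ℝ) (M := E)).ne')

/-- The `n`-th root of the volume of the unit ball: `|B_r| = (ballRoot E * r) ^ n`. -/
noncomputable def ballRoot (E : Type*) [NormedAddCommGroup E] [InnerProductSpace ℝ E]
    [FiniteDimensional ℝ E] [MeasurableSpace E] [BorelSpace E] : ℝ :=
  (volume.real (ball (0 : E) 1)) ^ ((dim E : ℝ)⁻¹)

omit [Nontrivial E] in
lemma ballRoot_pos : 0 < ballRoot E :=
  Real.rpow_pos_of_pos (ENNReal.toReal_pos (measure_ball_pos _ _ one_pos).ne'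
    measure_ball_lt_top.ne) _

lemma volume_ball_eq_ofReal_pow (y : E) {r : ℝ} (hr : 0 ≤ r) :
    volume (ball y r) = ENNReal.ofReal (ballRoot E * r) ^ dim E := by
  have hroot : ballRoot E ^ dim E = volume.real (ball (0 : E) 1) :=
    Real.rpow_inv_natCast_pow measureReal_nonneg finrank_pos.ne'
  rw [Measure.addHaar_ball volume y hr, ← ENNReal.ofReal_pow (mul_nonneg ballRoot_pos.le hr),
    mul_pow, hroot, mul_comm (volume.real _), ENNReal.ofReal_mul (by positivity),
    ofReal_measureReal measure_ball_lt_top.ne]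

lemma dimNorm_add_const_mul_le {f g : E → ℝ} {S : Set E} {D B G : ℝ} (hf : Measurable f)
    (hg : Measurable g) (hD : 0 ≤ D) (hB : 0 ≤ B) (hG : 0 ≤ G)
    (hgG : dimNorm g S ≤ ENNReal.ofReal G) (hfB : dimNorm f S ≤ ENNReal.ofReal B) :
    dimNorm (fun x => g x + D * f x) S ≤ ENNReal.ofReal (G + D * B) := by
  refine (dimNorm_add_le hg (by fun_prop)).trans ?_
  rw [dimNorm_const_mul, abs_of_nonneg hD, ENNReal.ofReal_add hG (by positivity),
    ENNReal.ofReal_mul hD]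
  gcongr

lemma dimNorm_slope_le {b g : E → ℝ} {S : Set E} {κ T s : ℝ} (hb : Measurable b)
    (hg : Measurable g) (hlam : 0 < lam) (hs : 0 ≤ s) (hκ : 0 ≤ κ) (hT : 0 ≤ T)
    (hbκ : dimNorm b S ≤ ENNReal.ofReal κ) (hgT : dimNorm g S ≤ ENNReal.ofReal T) :
    dimNorm (fun x => lam⁻¹ * (s * |b x| + |g x|)) S ≤ ENNReal.ofReal (lam⁻¹ * (s * κ + T)) := by
  have hb_abs : dimNorm (fun x => |b x|) S = dimNorm b S := eLpNorm_norm b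
  have hg_abs : dimNorm (fun x => |g x|) S = dimNorm g S := eLpNorm_norm g
  rw [dimNorm_const_mul, abs_of_pos (inv_pos.2 hlam), ENNReal.ofReal_mul (by positivity)]
  gcongr
  simp only [add_comm (s * _)]
  exact dimNorm_add_const_mul_le (by fun_prop) (by fun_prop) hs hκ hT (hg_abs.trans_le hgT)
    (hb_abs.trans_le hbκ)

lemma exists_abp_constants (E : Type*) [NormedAddCommGroup E] [InnerProductSpace ℝ E]
    [FiniteDimensional ℝ E] [MeasurableSpace E] [BorelSpace E] [Nontrivial E] (hlam : 0 < lam)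
    (Lam : ℝ) :
    ∃ κ > 0, ∃ C > 0, ∀ {K U : Set E} {W b g : E → ℝ} {d T : ℝ}, IsCompact K → IsOpen U → U ⊆ K →
      0 < d → (∀ x ∈ K, ∀ y ∈ K, dist x y ≤ d) → ContinuousOn W K → (∀ x ∈ K \ U, W x ≤ 0) →
      (∀ x ∈ U, 0 < W x → IsSubsolutionAt lam Lam b g W x) → Measurable b → Measurable g →
      dimNorm b U ≤ ENNReal.ofReal κ → 0 ≤ T →
      dimNorm g {x ∈ U | 0 < W x} ≤ ENNReal.ofReal T → ∀ x ∈ K, W x ≤ C * d * T := by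
  set r := ballRoot E
  have hr : 0 < r := ballRoot_pos
  refine ⟨lam * r / 2, by positivity, 2 / (lam * r), by positivity, ?_⟩
  intro K U W b g d T hK hU hUK hd₀ hd hW hneg hsub hb hg hbκ hT hgT x₀ hx₀
  have hW₂ : ∀ x ∈ U, 0 < W x → ContDiffAt ℝ 2 W x := fun x hxU hx => (hsub x hxU hx).contDiffAt
  suffices h : ∀ s, 0 ≤ s → s < W x₀ / d → s ≤ 2 / (lam * r) * T by
    rw [mul_right_comm, ← div_le_iff₀ hd₀]
    exact le_of_forall_lt_imp_le_of_dense fun s hs =>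
      (lt_or_ge s 0).elim (fun hs₀ => hs₀.le.trans (by positivity)) fun hs₀ => h s hs₀ hs
  intro s hs₀ hs
  set Γ := contactSet K U s W
  set h : E → ℝ := fun x => lam⁻¹ * (s * |b x| + |g x|)
  have hΓb : dimNorm b Γ ≤ ENNReal.ofReal (lam * r / 2) :=
    (dimNorm_mono_set fun x hx => hx.1).trans hbκ
  have hΓg : dimNorm g Γ ≤ ENNReal.ofReal T :=
    (dimNorm_mono_set (S' := {x ∈ U | 0 < W x}) fun x hx => ⟨hx.1, hx.2.1⟩).trans hgT
  have hpow : ENNReal.ofReal (r * s) ^ dim E ≤ dimNorm h Γ ^ dim E := by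
    rw [← volume_ball_eq_ofReal_pow 0 hs₀, ← lintegral_enorm_pow_dim]
    refine (volume_ball_le_lintegral_contactSet hU hUK hW hW₂ hK hneg hd hx₀
      ((lt_div_iff₀ hd₀).1 hs)).trans ?_
    refine setLIntegral_mono' (measurableSet_contactSet hU hUK hW hW₂) fun x hx => ?_
    exact (hsub x hx.1 hx.2.1).neg_laplacian_pow_le_enorm_pow hlam
      (hessAt_nonpos_of_mem_contactSet hU hUK hW₂ hx) hx.2.2.2.le
  have hle : r * s ≤ lam⁻¹ * (s * (lam * r / 2) + T) := by
    rw [← ENNReal.ofReal_le_ofReal_iff (by positivity)]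
    exact ((ENNReal.pow_le_pow_left_iff finrank_pos.ne').1 hpow).trans
      (dimNorm_slope_le hb hg hlam hs₀ (by positivity) hT hΓb hΓg)
  field_simp at hle ⊢
  linarith

end ABP

/-! ### The boundary Lipschitz estimate -/

section Barrier

variable {e x₀ : E} {ρ N : ℝ}

/-- The closed half ball of centre `x₀` and radius `r` on the side of `e`. -/
def halfClosedBall (e x₀ : E) (r : ℝ) : Set E := closedBall x₀ r ∩ {y | 0 ≤ inner ℝ e y}

/-- The open half ball of centre `x₀` and radius `r` on the side of `e`. -/
def halfOpenBall (e x₀ : E) (r : ℝ) : Set E := ball x₀ r ∩ {y | 0 < inner ℝ e y}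

/-- The boundary barrier at `x₀` at scale `ρ`: it dominates `ρ⁻¹ * ‖y - x₀‖ ^ 2` on the half ball,
it grows linearly in `⟪e, y⟫`, and the concave last term makes it a supersolution. -/
noncomputable def barrier (e x₀ : E) (ρ N : ℝ) (y : E) : ℝ :=
  ρ⁻¹ * ‖y - x₀‖ ^ 2 + N * innerSL ℝ e y + -(N / ρ) * (innerSL ℝ e y * innerSL ℝ e y)

lemma contDiff_barrier : ContDiff ℝ 2 (barrier e x₀ ρ N) := by
  have hsq := contDiff_norm_sub_sq x₀
  unfold barrier
  fun_prop

lemma hessAt_barrier (x z : E) : hessAt (barrier e x₀ ρ N) x z =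
    2 * ρ⁻¹ * ‖z‖ ^ 2 - 2 * (N / ρ) * (inner ℝ e z) ^ 2 := by
  have hsq := (contDiff_norm_sub_sq x₀).contDiffAt (x := x)
  have hfderiv : fderiv ℝ (fun y => innerSL ℝ e y) x = innerSL ℝ e := (innerSL ℝ e).fderiv
  unfold barrier
  rw [hessAt_add (by fun_prop) (by fun_prop), hessAt_add (by fun_prop) (by fun_prop),
    hessAt_const_mul (by fun_prop), hessAt_const_mul (by fun_prop), hessAt_const_mul (by fun_prop),
    hessAt_mul (by fun_prop) (by fun_prop), hessAt_norm_sub_sq, hessAt_clm, hfderiv]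
  simp only [innerSL_apply_apply]
  ring

lemma fderiv_barrier (x : E) : fderiv ℝ (barrier e x₀ ρ N) x =
    (2 * ρ⁻¹) • innerSL ℝ (x - x₀) + (N * (1 - 2 * (inner ℝ e x / ρ))) • innerSL ℝ e := by
  have hsq : HasFDerivAt (fun y => ‖y - x₀‖ ^ 2) ((2 : ℝ) • innerSL ℝ (x - x₀)) x := by
    rw [← fderiv_norm_sub_sq]
    exact ((contDiff_norm_sub_sq x₀).differentiable two_ne_zero x).hasFDerivAt
  have hlin : HasFDerivAt (fun y => innerSL ℝ e y) (innerSL ℝ e) x := (innerSL ℝ e).hasFDerivAt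
  have hsum : fderiv ℝ (barrier e x₀ ρ N) x = _ :=
    (((hsq.const_mul ρ⁻¹).add (hlin.const_mul N)).add
      ((hlin.mul hlin).const_mul (-(N / ρ)))).fderiv
  rw [hsum]
  ext z
  simp
  ring

lemma pucciMinusGe_neg_barrier {η : ℝ} (hlam : 0 < lam) (he : ‖e‖ = 1) (hρ : 0 < ρ) (hη : 0 ≤ η)
    (x : E) :
    PucciMinusGe lam Lam (fun y => -η * barrier e x₀ ρ (dim E * Lam / lam) y) x 0 := by
  intro ξ a ha
  have hterm : ∀ k, a k * hessAt (barrier e x₀ ρ (dim E * Lam / lam)) x (ξ k) ≤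
      2 * ρ⁻¹ * Lam - 2 * ρ⁻¹ * (dim E * Lam) * (inner ℝ e (ξ k)) ^ 2 := by
    intro k
    have hLam : 0 ≤ Lam := hlam.le.trans ((ha k).1.trans (ha k).2)
    have hratio : 1 ≤ a k / lam := (one_le_div hlam).2 (ha k).1
    have hconcave := le_mul_of_one_le_left
      (by positivity : 0 ≤ 2 * ρ⁻¹ * (dim E * Lam) * (inner ℝ e (ξ k)) ^ 2) hratio
    have hconvex : 2 * ρ⁻¹ * a k ≤ 2 * ρ⁻¹ * Lam := by gcongr; exact (ha k).2
    rw [hessAt_barrier, ξ.orthonormal.1 k]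
    calc _ = 2 * ρ⁻¹ * a k -
          a k / lam * (2 * ρ⁻¹ * (dim E * Lam) * (inner ℝ e (ξ k)) ^ 2) := by ring
      _ ≤ _ := by linarith
  have hsum : ∑ k, a k * hessAt (barrier e x₀ ρ (dim E * Lam / lam)) x (ξ k) ≤ 0 := by
    refine (Finset.sum_le_sum fun k _ => hterm k).trans ?_
    simp only [Finset.sum_sub_distrib, ← Finset.mul_sum, sum_sq_inner_orthonormalBasis, he]
    simp
  simp only [hessAt_const_mul contDiff_barrier.contDiffAt, mul_left_comm _ (-η), ← Finset.mul_sum]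
  exact mul_nonneg_of_nonpos_of_nonpos (neg_nonpos.2 hη) hsum

lemma inner_le_of_mem_closedBall (he : ‖e‖ = 1) (hx₀ : inner ℝ e x₀ = 0)
    (hx : x ∈ closedBall x₀ ρ) : inner ℝ e x ≤ ρ := by
  have hinner : inner ℝ e x = inner ℝ e (x - x₀) := by rw [inner_sub_right, hx₀, sub_zero]
  rw [hinner]
  refine (real_inner_le_norm _ _).trans ?_
  rwa [he, one_mul, ← mem_closedBall_iff_norm]

lemma barrier_le_of_mem_half (hρ : 0 < ρ) (hN : 0 ≤ N) (hx : x ∈ closedBall x₀ (ρ / 2)) :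
    barrier e x₀ ρ N x ≤ ρ / 4 + N * inner ℝ e x := by
  have hsq : ρ⁻¹ * ‖x - x₀‖ ^ 2 ≤ ρ / 4 :=
    calc ρ⁻¹ * ‖x - x₀‖ ^ 2 ≤ ρ⁻¹ * (ρ / 2) ^ 2 := by
          gcongr
          exact mem_closedBall_iff_norm.1 hx
      _ = ρ / 4 := by field_simp; norm_num
  have hconcave : 0 ≤ N / ρ * (inner ℝ e x * inner ℝ e x) :=
    mul_nonneg (by positivity) (mul_self_nonneg _)
  simp only [barrier, innerSL_apply_apply]
  linarith

variable (hx : x ∈ halfClosedBall e x₀ ρ)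

include hx

lemma norm_fderiv_barrier_le (he : ‖e‖ = 1) (hx₀ : inner ℝ e x₀ = 0) (hρ : 0 < ρ) (hN : 0 ≤ N) :
    ‖fderiv ℝ (barrier e x₀ ρ N) x‖ ≤ 2 + N := by
  have hheight : inner ℝ e x / ρ ≤ 1 :=
    (div_le_one hρ).2 (inner_le_of_mem_closedBall he hx₀ hx.1)
  have hheight₀ : 0 ≤ inner ℝ e x / ρ := div_nonneg hx.2 hρ.le
  rw [fderiv_barrier]
  refine (norm_add_le _ _).trans (add_le_add ?_ ?_)
  · rw [norm_smul, innerSL_apply_norm, Real.norm_of_nonneg (by positivity), mul_assoc]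
    refine mul_le_of_le_one_right zero_le_two ((inv_mul_le_one₀ hρ).2 ?_)
    exact mem_closedBall_iff_norm.1 hx.1
  · rw [norm_smul, innerSL_apply_norm, he, mul_one, norm_mul, Real.norm_of_nonneg hN]
    refine mul_le_of_le_one_right hN (abs_le.2 ?_)
    constructor <;> linarith

lemma le_barrier (he : ‖e‖ = 1) (hx₀ : inner ℝ e x₀ = 0) (hρ : 0 < ρ) (hN : 0 ≤ N) :
    ρ⁻¹ * ‖x - x₀‖ ^ 2 ≤ barrier e x₀ ρ N x := by
  have hconcave : 0 ≤ N / ρ * (inner ℝ e x * (ρ - inner ℝ e x)) :=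
    mul_nonneg (by positivity)
      (mul_nonneg hx.2 (sub_nonneg.2 (inner_le_of_mem_closedBall he hx₀ hx.1)))
  have hexpand : N / ρ * (inner ℝ e x * (ρ - inner ℝ e x)) =
      N * inner ℝ e x - N / ρ * (inner ℝ e x * inner ℝ e x) := by field_simp
  simp only [barrier, innerSL_apply_apply]
  linarith

omit hx in
lemma IsSubsolutionAt.sub_barrier {b g : E → ℝ} {A η : ℝ}
    (hw : IsSubsolutionAt lam Lam b g w x) (hlam : 0 < lam) (hLam : 0 ≤ Lam) (he : ‖e‖ = 1)
    (hx₀ : inner ℝ e x₀ = 0) (hρ : 0 < ρ) (hA : 0 ≤ A) (hη : 0 ≤ η) (hb : 0 ≤ b x)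
    (hx : x ∈ halfClosedBall e x₀ ρ) :
    IsSubsolutionAt lam Lam b (fun y => g y + (A + (2 + dim E * Lam / lam) * η) * b y)
      (fun y => w y + -A * innerSL ℝ e y + -η * barrier e x₀ ρ (dim E * Lam / lam) y) x := by
  have hlin : HasFDerivAt (fun y => -A * innerSL ℝ e y) (-A • innerSL ℝ e) x :=
    (innerSL ℝ e).hasFDerivAt.const_mul (-A)
  refine (hw.add (g' := fun y => g y + A * b y) (D := A) (m := 0) (by fun_prop) hb ?_ ?_
    (by simp)).add (D := (2 + dim E * Lam / lam) * η) ?_ hb ?_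
    (pucciMinusGe_neg_barrier hlam he hρ hη x) (by linarith)
  · rw [hlin.fderiv, norm_smul, innerSL_apply_norm, he, norm_neg, Real.norm_of_nonneg hA, mul_one]
  · intro ξ a _
    simp only [hessAt_const_mul (innerSL ℝ e).contDiff.contDiffAt, hessAt_clm]
    simp
  · exact contDiffAt_const.mul contDiff_barrier.contDiffAt
  · rw [fderiv_const_mul (contDiff_barrier.differentiable two_ne_zero x), norm_smul, norm_neg,
      Real.norm_of_nonneg hη, mul_comm]
    gcongr
    exact norm_fderiv_barrier_le hx he hx₀ hρ (by positivity)

end Barrier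

section BoundaryLipschitz

variable {b g : E → ℝ} {e x₀ : E} {ρ r : ℝ}

/-- `w` is a subsolution in a half ball centred on the hyperplane `⟪e, ·⟫ = 0`, continuous up to the
boundary and nonpositive on the flat part of it. -/
structure IsHalfBallSubsolution [MeasurableSpace E] (lam Lam : ℝ) (e x₀ : E) (r : ℝ)
    (b g w : E → ℝ) : Prop where
  norm_eq_one : ‖e‖ = 1
  inner_center : inner ℝ e x₀ = 0
  continuousOn : ContinuousOn w (halfClosedBall e x₀ r)
  nonpos_of_inner_eq_zero : ∀ x ∈ closedBall x₀ r, inner ℝ e x = 0 → w x ≤ 0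
  measurable_drift : Measurable b
  measurable_source : Measurable g
  drift_nonneg : ∀ x, 0 ≤ b x
  isSubsolutionAt : ∀ x ∈ halfOpenBall e x₀ r, IsSubsolutionAt lam Lam b g w x

lemma IsHalfBallSubsolution.mono [MeasurableSpace E]
    (hw : IsHalfBallSubsolution lam Lam e x₀ r b g w) (hρr : ρ ≤ r) :
    IsHalfBallSubsolution lam Lam e x₀ ρ b g w where
  __ := hw
  continuousOn :=
    hw.continuousOn.mono (inter_subset_inter_left _ (closedBall_subset_closedBall hρr))
  nonpos_of_inner_eq_zero x hx := hw.nonpos_of_inner_eq_zero x (closedBall_subset_closedBall hρr hx)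
  isSubsolutionAt x hx := hw.isSubsolutionAt x ⟨ball_subset_ball hρr hx.1, hx.2⟩

lemma halfOpenBall_subset_halfClosedBall : halfOpenBall e x₀ ρ ⊆ halfClosedBall e x₀ ρ :=
  inter_subset_inter ball_subset_closedBall fun _ => le_of_lt (α := ℝ)

lemma isOpen_halfOpenBall : IsOpen (halfOpenBall e x₀ ρ) :=
  isOpen_ball.inter (isOpen_lt continuous_const (by fun_prop))

lemma isCompact_halfClosedBall [ProperSpace E] : IsCompact (halfClosedBall e x₀ ρ) :=
  (isCompact_closedBall x₀ ρ).inter_right (isClosed_le continuous_const (by fun_prop))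

lemma mem_sphere_or_inner_eq_zero (hx : x ∈ halfClosedBall e x₀ ρ \ halfOpenBall e x₀ ρ) :
    x ∈ sphere x₀ ρ ∨ inner ℝ e x = 0 := by
  obtain ⟨⟨hball, hinner⟩, hx⟩ := hx
  rcases (mem_closedBall.1 hball).eq_or_lt with h | h
  · exact Or.inl h
  · exact Or.inr (le_antisymm (not_lt.1 fun hpos => hx ⟨h, hpos⟩) hinner)

lemma IsHalfBallSubsolution.sub_barrier_nonpos [MeasurableSpace E] {A η N : ℝ}
    (hw : IsHalfBallSubsolution lam Lam e x₀ ρ b g w) (hρ : 0 < ρ) (hη : 0 ≤ η) (hN : 0 ≤ N)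
    (hle : ∀ x ∈ halfClosedBall e x₀ ρ, w x ≤ A * inner ℝ e x + η * ρ)
    (hx : x ∈ halfClosedBall e x₀ ρ \ halfOpenBall e x₀ ρ) :
    w x + -A * innerSL ℝ e x + -η * barrier e x₀ ρ N x ≤ 0 := by
  have hbarrier :=
    mul_le_mul_of_nonneg_left (le_barrier hx.1 hw.norm_eq_one hw.inner_center hρ hN) hη
  rw [innerSL_apply_apply]
  rcases mem_sphere_or_inner_eq_zero hx with hsphere | hflat
  · have hcancel : ρ⁻¹ * ρ ^ 2 = ρ := by field_simp
    rw [mem_sphere_iff_norm.1 hsphere, hcancel] at hbarrier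
    linarith [hle x hx.1]
  · have hnonneg : 0 ≤ η * (ρ⁻¹ * ‖x - x₀‖ ^ 2) := by positivity
    rw [hflat]
    linarith [hw.nonpos_of_inner_eq_zero x hx.1.1 hflat]

lemma exists_flatness_improvement_constants (E : Type*) [NormedAddCommGroup E]
    [InnerProductSpace ℝ E] [FiniteDimensional ℝ E] [MeasurableSpace E] [BorelSpace E]
    [Nontrivial E] (hlam : 0 < lam) (hLam : 0 ≤ Lam) :
    ∃ κ > 0, ∃ C > 0, ∀ {e x₀ : E} {b g w : E → ℝ} {ρ A η B G : ℝ},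
      IsHalfBallSubsolution lam Lam e x₀ ρ b g w → 0 < ρ → 0 ≤ A → 0 ≤ η → 0 ≤ B → 0 ≤ G →
      (∀ x ∈ halfClosedBall e x₀ ρ, w x ≤ A * inner ℝ e x + η * ρ) →
      dimNorm b (ball x₀ ρ) ≤ ENNReal.ofReal B → B ≤ κ → dimNorm g (ball x₀ ρ) ≤ ENNReal.ofReal G →
      ∀ x ∈ halfClosedBall e x₀ (ρ / 2), w x ≤ (A + dim E * Lam / lam * η) * inner ℝ e x +
        (η / 2 + C * (G + B * (A + (2 + dim E * Lam / lam) * η))) * (ρ / 2) := by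
  obtain ⟨κ, hκ, C, hC, habp⟩ := exists_abp_constants E hlam Lam
  refine ⟨κ, hκ, 4 * C, by positivity, ?_⟩
  intro e x₀ b g w ρ A η B G hw hρ hA hη hB hG hle hbB hBκ hgG x hx
  set N := dim E * Lam / lam
  have hN : 0 ≤ N := by positivity
  have hsub : halfOpenBall e x₀ ρ ⊆ ball x₀ ρ := inter_subset_left
  have hxρ : x ∈ halfClosedBall e x₀ ρ := ⟨closedBall_subset_closedBall (by linarith) hx.1, hx.2⟩
  have hbarrier : Continuous (barrier e x₀ ρ N) := contDiff_barrier.continuous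
  have hW := habp (W := fun y => w y + -A * innerSL ℝ e y + -η * barrier e x₀ ρ N y)
    (d := 2 * ρ) (T := G + (A + (2 + N) * η) * B) isCompact_halfClosedBall
    isOpen_halfOpenBall halfOpenBall_subset_halfClosedBall (by positivity)
    (fun y hy z hz => (dist_triangle_right y z x₀).trans
      (by linarith [mem_closedBall.1 hy.1, mem_closedBall.1 hz.1]))
    ((hw.continuousOn.add (by fun_prop)).add (by fun_prop))
    (fun y hy => hw.sub_barrier_nonpos hρ hη hN hle hy)
    (fun y hy _ => (hw.isSubsolutionAt y hy).sub_barrier hlam hLam hw.norm_eq_one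
      hw.inner_center hρ hA hη (hw.drift_nonneg y) (halfOpenBall_subset_halfClosedBall hy))
    hw.measurable_drift (hw.measurable_source.add (hw.measurable_drift.const_mul _))
    ((dimNorm_mono_set hsub).trans (hbB.trans (ENNReal.ofReal_le_ofReal hBκ))) (by positivity)
    ((dimNorm_mono_set (inter_subset_left.trans hsub)).trans (dimNorm_add_const_mul_le
      hw.measurable_drift hw.measurable_source (by positivity) hB hG hgG hbB)) x hxρ
  have hupper := mul_le_mul_of_nonneg_left (barrier_le_of_mem_half (e := e) hρ hN hx.1) hη
  rw [innerSL_apply_apply] at hW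
  linarith

lemma flatness_step_arith {C N Q L S σ τ β B G : ℝ} (hC : 0 ≤ C) (hN : 0 ≤ N) (hQ : 0 ≤ Q)
    (hL : 8 * C ≤ L) (hS : 0 ≤ S) (hσ : 3 / 4 ≤ σ) (hτ : 0 ≤ τ) (hτ₁ : τ ≤ 1)
    (hβ : C * β * (Q + (2 + N) * L) ≤ L / 8) (hB : B ≤ τ * β) (hG : G ≤ τ * S) :
    L * S * τ / 2 + C * (G + B * (Q * S * (1 - τ) + (2 + N) * (L * S * τ))) ≤
      L * S * (τ * σ) := by
  have hL₀ : 0 ≤ L := by linarith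
  have hslope₀ : 0 ≤ Q * S * (1 - τ) + (2 + N) * (L * S * τ) :=
    add_nonneg (mul_nonneg (by positivity) (sub_nonneg.2 hτ₁)) (by positivity)
  have hslope : Q * S * (1 - τ) + (2 + N) * (L * S * τ) ≤ (Q + (2 + N) * L) * S := by
    have hQS : 0 ≤ Q * S * τ := by positivity
    have hLS : (2 + N) * L * S * τ ≤ (2 + N) * L * S := mul_le_of_le_one_right (by positivity) hτ₁
    linarith
  have hsource : C * G ≤ τ * S * (L / 8) := by
    calc C * G ≤ C * (τ * S) := by gcongr
      _ ≤ L / 8 * (τ * S) := by gcongr; linarith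
      _ = τ * S * (L / 8) := mul_comm _ _
  have hdrift : C * (B * (Q * S * (1 - τ) + (2 + N) * (L * S * τ))) ≤ τ * S * (L / 8) := by
    rcases le_or_gt B 0 with hB₀ | hB₀
    · exact (mul_nonpos_of_nonneg_of_nonpos hC (mul_nonpos_of_nonpos_of_nonneg hB₀ hslope₀)).trans
        (by positivity)
    have hβ₀ : 0 ≤ τ * β := hB₀.le.trans hB
    calc _ ≤ C * (τ * β * ((Q + (2 + N) * L) * S)) := by gcongr
      _ = τ * S * (C * β * (Q + (2 + N) * L)) := by ring
      _ ≤ _ := by gcongr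
  have hσL : τ * S * L * (3 / 4) ≤ τ * S * L * σ := by gcongr
  linarith

lemma le_of_flatness_improvement {C N Q L S σ β η : ℝ} {B G : ℕ → ℝ} (hC : 0 ≤ C) (hN : 0 ≤ N)
    (hQ : 0 ≤ Q) (hL : 8 * C ≤ L) (hL₁ : 1 ≤ L) (hS : 0 ≤ S) (hσ : 3 / 4 ≤ σ) (hσ₁ : σ ≤ 1)
    (hQσ : Q * (1 - σ) = N * L) (hβ : C * β * (Q + (2 + N) * L) ≤ L / 8)
    (hB : ∀ k, B k ≤ σ ^ k * β) (hG : ∀ k, G k ≤ σ ^ k * S) (hηS : η ≤ S) (hr : 0 ≤ r)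
    (hinit : ∀ x ∈ halfClosedBall e x₀ r, w x ≤ η * r)
    (hstep : ∀ k A η, 0 ≤ A → 0 ≤ η →
      (∀ x ∈ halfClosedBall e x₀ (r / 2 ^ k), w x ≤ A * inner ℝ e x + η * (r / 2 ^ k)) →
      ∀ x ∈ halfClosedBall e x₀ (r / 2 ^ k / 2), w x ≤ (A + N * η) * inner ℝ e x +
        (η / 2 + C * (G k + B k * (A + (2 + N) * η))) * (r / 2 ^ k / 2)) (k : ℕ) :
    ∀ x ∈ halfClosedBall e x₀ (r / 2 ^ k),
      w x ≤ Q * S * (1 - σ ^ k) * inner ℝ e x + L * S * σ ^ k * (r / 2 ^ k) := by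
  induction k with
  | zero =>
    intro x hx
    rw [pow_zero, div_one] at hx
    calc w x ≤ η * r := hinit x hx
      _ ≤ L * S * r := by gcongr; exact hηS.trans (le_mul_of_one_le_left hS hL₁)
      _ = _ := by simp
  | succ k ih =>
    intro x hx
    rw [pow_succ, ← div_div] at hx
    have hσk : 0 ≤ σ ^ k := by positivity
    have hσk₁ : σ ^ k ≤ 1 := pow_le_one₀ (by positivity) hσ₁
    refine (hstep k (Q * S * (1 - σ ^ k)) (L * S * σ ^ k)
      (mul_nonneg (by positivity) (sub_nonneg.2 hσk₁)) (by positivity) ih x hx).trans ?_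
    rw [pow_succ, pow_succ, ← div_div]
    gcongr ?_ * _ + ?_ * _
    · exact hx.2
    · linear_combination (-S * σ ^ k) * hQσ
    · exact flatness_step_arith hC hN hQ hL hS hσ hσk hσk₁ hβ (hB k) (hG k)

lemma apply_add_smul_le_of_flatness {Q L S σ s : ℝ} (he : ‖e‖ = 1) (hx₀ : inner ℝ e x₀ = 0)
    (hQ : 0 ≤ Q) (hL : 0 ≤ L) (hS : 0 ≤ S) (hσ : 0 ≤ σ) (hσ₁ : σ ≤ 1) (hs : 0 < s) (hsr : s ≤ r)
    (hw : ∀ k : ℕ, ∀ x ∈ halfClosedBall e x₀ (r / 2 ^ k),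
      w x ≤ Q * S * (1 - σ ^ k) * inner ℝ e x + L * S * σ ^ k * (r / 2 ^ k)) :
    w (x₀ + s • e) ≤ (Q + 2 * L) * S * s := by
  have hr : 0 < r := hs.trans_le hsr
  obtain ⟨k, hsk, hks⟩ := exists_nat_pow_near_of_lt_one (div_pos hs hr) ((div_le_one hr).2 hsr)
    one_half_pos one_half_lt_one
  rw [one_div, inv_pow, lt_div_iff₀ hr, inv_mul_eq_div] at hsk
  rw [one_div, inv_pow, div_le_iff₀ hr, inv_mul_eq_div] at hks
  have hheight : inner ℝ e (x₀ + s • e) = s := by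
    rw [inner_add_right, inner_smul_right, hx₀, real_inner_self_eq_norm_sq, he]
    simp
  have hmem : x₀ + s • e ∈ halfClosedBall e x₀ (r / 2 ^ k) := by
    refine ⟨mem_closedBall_iff_norm.2 ?_, ?_⟩
    · rwa [add_sub_cancel_left, norm_smul, he, mul_one, Real.norm_of_nonneg hs.le]
    · rw [mem_ofPred_eq, hheight]
      exact hs.le
  have hσk₁ : σ ^ k ≤ 1 := pow_le_one₀ hσ hσ₁
  have hscale : r / 2 ^ k ≤ 2 * s := by
    rw [pow_succ, ← div_div] at hsk
    linarith
  have hslope : Q * S * (1 - σ ^ k) * s ≤ Q * S * s :=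
    mul_le_mul_of_nonneg_right (mul_le_of_le_one_right (mul_nonneg hQ hS)
      (sub_le_self _ (pow_nonneg hσ k))) hs.le
  have hremainder : L * S * σ ^ k * (r / 2 ^ k) ≤ L * S * (2 * s) :=
    mul_le_mul (mul_le_of_le_one_right (mul_nonneg hL hS) hσk₁) hscale (by positivity)
      (by positivity)
  have hwk := hw k _ hmem
  rw [hheight] at hwk
  linarith

variable [FiniteDimensional ℝ E] [MeasurableSpace E] [BorelSpace E]

/-- Morrey-type bound for the drift and source terms: the `Lⁿ` norm on the balls of centre `x` and
radius `ρ ≤ r` is at most `B * ρ ^ α`. -/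
def HasMorreyBound (α B r : ℝ) (g : E → ℝ) (x : E) : Prop :=
  ∀ ρ, 0 < ρ → ρ ≤ r → dimNorm g (ball x ρ) ≤ ENNReal.ofReal (ρ ^ α * B)

lemma div_two_pow_rpow_le {α σ : ℝ} (hr : 0 ≤ r) (hσ : (1 / 2 : ℝ) ^ α ≤ σ) (k : ℕ) :
    (r / 2 ^ k) ^ α ≤ σ ^ k * r ^ α := by
  have hhalf : ((1 / 2 : ℝ) ^ k) ^ α = ((1 / 2 : ℝ) ^ α) ^ k := by
    rw [← Real.rpow_natCast, ← Real.rpow_mul (by norm_num), mul_comm, Real.rpow_mul (by norm_num),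
      Real.rpow_natCast]
  rw [div_eq_mul_one_div, ← one_div_pow, Real.mul_rpow hr (by positivity), hhalf, mul_comm]
  gcongr

lemma exists_boundary_lipschitz_constants (E : Type*) [NormedAddCommGroup E]
    [InnerProductSpace ℝ E] [FiniteDimensional ℝ E] [MeasurableSpace E] [BorelSpace E]
    [Nontrivial E] {α : ℝ} (hlam : 0 < lam) (hLam : 0 ≤ Lam) (hα : 0 < α) :
    ∃ κ > 0, ∃ C > 0, ∀ {e x₀ : E} {b g w : E → ℝ} {r η B G : ℝ},
      IsHalfBallSubsolution lam Lam e x₀ r b g w → 0 ≤ η → 0 ≤ B → 0 ≤ G →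
      (∀ x ∈ halfClosedBall e x₀ r, w x ≤ η * r) →
      HasMorreyBound α B r b x₀ → r ^ α * B ≤ κ → HasMorreyBound α G r g x₀ →
      ∀ s, 0 < s → s ≤ r → w (x₀ + s • e) ≤ C * (η + r ^ α * G) * s := by
  obtain ⟨κ, hκ, C, hC, himprove⟩ := exists_flatness_improvement_constants E hlam hLam
  set N := dim E * Lam / lam
  have hN : 0 ≤ N := by positivity
  set σ : ℝ := max (3 / 4) ((1 / 2) ^ α)
  have hσ : 3 / 4 ≤ σ := le_max_left _ _
  have hσ₁ : σ < 1 :=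
    max_lt (by norm_num) (Real.rpow_lt_one (by norm_num) (by norm_num) hα)
  have h1σ : 0 < 1 - σ := sub_pos.2 hσ₁
  set L := 8 * C + 1
  have hL₀ : 0 < L := by positivity
  set Q := N * L / (1 - σ)
  have hQ : 0 ≤ Q := by positivity
  have hden : 0 < C * (Q + (2 + N) * L) := by positivity
  refine ⟨min κ (L / 8 / (C * (Q + (2 + N) * L))), by positivity, Q + 2 * L, by positivity, ?_⟩
  intro e x₀ b g w r η B G hw hη hB hG hle hbB hBκ hgG s hs hsr
  have hr : 0 < r := hs.trans_le hsr
  have hGS : r ^ α * G ≤ η + r ^ α * G := le_add_of_nonneg_left hη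
  have hS : 0 ≤ η + r ^ α * G := by positivity
  have hBκ' : C * (r ^ α * B) * (Q + (2 + N) * L) ≤ L / 8 := by
    rw [mul_right_comm, mul_comm, ← le_div_iff₀ hden]
    exact hBκ.trans (min_le_right _ _)
  have hk (k : ℕ) : r / 2 ^ k ≤ r := div_le_self hr.le (one_le_pow₀ one_le_two)
  have hpow (k : ℕ) : (r / 2 ^ k) ^ α ≤ σ ^ k * r ^ α :=
    div_two_pow_rpow_le hr.le (le_max_right _ _) k
  refine apply_add_smul_le_of_flatness hw.norm_eq_one hw.inner_center hQ hL₀.le hS (by positivity)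
    hσ₁.le hs hsr (le_of_flatness_improvement hC.le hN hQ (by linarith) (by linarith) hS hσ
      hσ₁.le (div_mul_cancel₀ _ h1σ.ne') hBκ' (B := fun k => (r / 2 ^ k) ^ α * B)
      (G := fun k => (r / 2 ^ k) ^ α * G) ?_ ?_ (le_add_of_nonneg_right (by positivity)) hr.le
      hle fun k A η' hA hη' hle' => ?_)
  · exact fun k => (mul_le_mul_of_nonneg_right (hpow k) hB).trans_eq (mul_assoc _ _ _)
  · exact fun k => (mul_le_mul_of_nonneg_right (hpow k) hG).trans <| by
      rw [mul_assoc]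
      gcongr
  · exact himprove (hw.mono (hk k)) (by positivity) hA hη' (by positivity) (by positivity) hle'
      (hbB _ (by positivity) (hk k))
      (((by gcongr; exact hk k : _ ≤ r ^ α * B).trans hBκ).trans (min_le_left _ _))
      (hgG _ (by positivity) (hk k))

end BoundaryLipschitz

/-! ### Growth of nonnegative supersolutions -/

section Gaussian

variable {z : E} {γ R : ℝ}

/-- The Gaussian barrier in `closedBall z R`: it vanishes on the sphere, and the larger `γ`, the
closer to `z` the region outside of which it is a subsolution. -/
noncomputable def gaussianBarrier (γ : ℝ) (z : E) (R : ℝ) (y : E) : ℝ :=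
  Real.exp (-(γ / R ^ 2) * ‖y - z‖ ^ 2) - Real.exp (-γ)

lemma contDiff_gaussianBarrier : ContDiff ℝ 2 (gaussianBarrier γ z R) := by
  have hsq := contDiff_norm_sub_sq z
  unfold gaussianBarrier
  fun_prop

lemma deriv_exp_mul_sub_const (a c s : ℝ) :
    deriv (fun s => Real.exp (a * s) - c) s = a * Real.exp (a * s) := by
  simpa [mul_comm] using (((hasDerivAt_id s).const_mul a).exp.sub_const c).deriv

lemma fderiv_gaussianBarrier (x : E) : fderiv ℝ (gaussianBarrier γ z R) x =
    (-(2 * (γ / R ^ 2)) * Real.exp (-(γ / R ^ 2) * ‖x - z‖ ^ 2)) • innerSL ℝ (x - z) := by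
  have hsq := (contDiff_norm_sub_sq z).differentiable two_ne_zero x
  have hcomp := fderiv_real_comp (w := fun y => ‖y - z‖ ^ 2) (x := x)
    (F := fun s => Real.exp (-(γ / R ^ 2) * s) - Real.exp (-γ)) (by fun_prop) hsq
  rw [deriv_exp_mul_sub_const, fderiv_norm_sub_sq, smul_smul] at hcomp
  refine hcomp.trans ?_
  congr 1
  ring

lemma hessAt_gaussianBarrier (x y : E) : hessAt (gaussianBarrier γ z R) x y =
    Real.exp (-(γ / R ^ 2) * ‖x - z‖ ^ 2) *
      (4 * (γ / R ^ 2) ^ 2 * (inner ℝ (x - z) y) ^ 2 - 2 * (γ / R ^ 2) * ‖y‖ ^ 2) := by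
  have hcomp := hessAt_real_comp (w := fun y => ‖y - z‖ ^ 2) (x := x)
    (F := fun s => Real.exp (-(γ / R ^ 2) * s) - Real.exp (-γ)) (by fun_prop)
    (contDiff_norm_sub_sq z).contDiffAt y
  have hderiv : deriv (fun s => Real.exp (-(γ / R ^ 2) * s) - Real.exp (-γ)) =
      fun s => -(γ / R ^ 2) * Real.exp (-(γ / R ^ 2) * s) :=
    funext fun s => deriv_exp_mul_sub_const _ _ s
  have hderiv₂ (s : ℝ) : deriv (fun s => -(γ / R ^ 2) * Real.exp (-(γ / R ^ 2) * s)) s =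
      (γ / R ^ 2) ^ 2 * Real.exp (-(γ / R ^ 2) * s) := by
    have hexp := deriv_exp_mul_sub_const (-(γ / R ^ 2)) 0 s
    simp only [sub_zero] at hexp
    rw [deriv_const_mul _ (by fun_prop), hexp]
    ring
  rw [hderiv, hderiv₂, fderiv_norm_sub_sq, hessAt_norm_sub_sq] at hcomp
  refine hcomp.trans ?_
  simp only [smul_apply, innerSL_apply_apply, smul_eq_mul]
  ring

omit [InnerProductSpace ℝ E] in
lemma gaussianBarrier_eq_zero (hR : R ≠ 0) (hx : ‖x - z‖ = R) : gaussianBarrier γ z R x = 0 := by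
  rw [gaussianBarrier, hx, neg_mul, div_mul_cancel₀ _ (pow_ne_zero 2 hR), sub_self]

omit [InnerProductSpace ℝ E] in
lemma exp_neg_mul_norm_sub_sq_le_one (hγ : 0 ≤ γ) (R : ℝ) (x z : E) :
    Real.exp (-(γ / R ^ 2) * ‖x - z‖ ^ 2) ≤ 1 :=
  Real.exp_le_one_iff.2 (by rw [neg_mul]; exact neg_nonpos.2 (by positivity))

omit [InnerProductSpace ℝ E] in
lemma gaussianBarrier_le_one (hγ : 0 ≤ γ) : gaussianBarrier γ z R x ≤ 1 :=
  (sub_le_self _ (Real.exp_pos _).le).trans (exp_neg_mul_norm_sub_sq_le_one hγ R x z)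

omit [InnerProductSpace ℝ E] in
lemma exp_neg_sub_exp_neg_le_gaussianBarrier {s : ℝ} (hγ : 0 ≤ γ) (hR : 0 < R)
    (hx : ‖x - z‖ ≤ s * R) :
    Real.exp (-(γ * s ^ 2)) - Real.exp (-γ) ≤ gaussianBarrier γ z R x := by
  unfold gaussianBarrier
  gcongr ?_ - _
  rw [Real.exp_le_exp, neg_mul, neg_le_neg_iff]
  calc γ / R ^ 2 * ‖x - z‖ ^ 2 ≤ γ / R ^ 2 * (s * R) ^ 2 := by gcongr
    _ = γ * s ^ 2 := by field_simp

lemma norm_fderiv_const_mul_gaussianBarrier_le {T : ℝ} (hT : 0 ≤ T) (hγ : 0 ≤ γ) (hR : 0 < R)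
    (hx : ‖x - z‖ ≤ R) :
    ‖fderiv ℝ (fun y => T * gaussianBarrier γ z R y) x‖ ≤ T * (2 * γ / R) := by
  rw [fderiv_const_mul (contDiff_gaussianBarrier.differentiable two_ne_zero x),
    fderiv_gaussianBarrier, norm_smul, norm_smul, innerSL_apply_norm, Real.norm_of_nonneg hT,
    norm_mul, norm_neg, Real.norm_of_nonneg (Real.exp_pos _).le,
    Real.norm_of_nonneg (by positivity : 0 ≤ 2 * (γ / R ^ 2))]
  gcongr
  calc 2 * (γ / R ^ 2) * Real.exp (-(γ / R ^ 2) * ‖x - z‖ ^ 2) * ‖x - z‖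
      ≤ 2 * (γ / R ^ 2) * 1 * R := by gcongr; exact exp_neg_mul_norm_sub_sq_le_one hγ R x z
    _ = 2 * γ / R := by field_simp

lemma pucciMinusGe_const_mul_gaussianBarrier {T : ℝ} (hT : 0 ≤ T) (hγ : 0 ≤ γ) (x : E) :
    PucciMinusGe lam Lam (fun y => T * gaussianBarrier γ z R y) x
      (T * (Real.exp (-(γ / R ^ 2) * ‖x - z‖ ^ 2) *
        (4 * (γ / R ^ 2) ^ 2 * lam * ‖x - z‖ ^ 2 - 2 * (γ / R ^ 2) * (dim E * Lam)))) := by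
  intro ξ a ha
  set G := Real.exp (-(γ / R ^ 2) * ‖x - z‖ ^ 2)
  have hterm (k) : T * (G * (4 * (γ / R ^ 2) ^ 2 * lam * (inner ℝ (x - z) (ξ k)) ^ 2 -
      2 * (γ / R ^ 2) * Lam)) ≤ a k * hessAt (fun y => T * gaussianBarrier γ z R y) x (ξ k) := by
    rw [hessAt_const_mul contDiff_gaussianBarrier.contDiffAt, hessAt_gaussianBarrier,
      ξ.orthonormal.1 k]
    calc _ ≤ T * (G * (4 * (γ / R ^ 2) ^ 2 * a k * (inner ℝ (x - z) (ξ k)) ^ 2 -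
          2 * (γ / R ^ 2) * a k)) := by
          gcongr
          exacts [(ha k).1, (ha k).2]
      _ = _ := by ring
  refine le_trans (le_of_eq ?_) (Finset.sum_le_sum fun k _ => hterm k)
  rw [← Finset.mul_sum, ← Finset.mul_sum, Finset.sum_sub_distrib, ← Finset.mul_sum,
    sum_sq_inner_orthonormalBasis]
  simp only [Finset.sum_const, Finset.card_univ, Fintype.card_fin, nsmul_eq_mul]
  ring

lemma pucciMinusGe_gaussianBarrier_of_le {T ρ : ℝ} (hT : 0 ≤ T) (hγ : 0 ≤ γ) (hlam : 0 ≤ lam)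
    (hρ : 0 ≤ ρ) (hR : 0 < R) (hργ : dim E * Lam * R ^ 2 ≤ 2 * γ * lam * ρ ^ 2)
    (hx : ρ ≤ ‖x - z‖) :
    PucciMinusGe lam Lam (fun y => T * gaussianBarrier γ z R y) x 0 := by
  refine (pucciMinusGe_const_mul_gaussianBarrier hT hγ x).mono ?_
  have hbracket : 2 * (γ / R ^ 2) * (dim E * Lam) ≤ 4 * (γ / R ^ 2) ^ 2 * lam * ‖x - z‖ ^ 2 :=
    calc _ = 2 * γ / R ^ 4 * (dim E * Lam * R ^ 2) := by field_simp
      _ ≤ 2 * γ / R ^ 4 * (2 * γ * lam * ‖x - z‖ ^ 2) := by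
        refine mul_le_mul_of_nonneg_left (hργ.trans ?_) (by positivity)
        gcongr
      _ = _ := by field_simp; ring
  have := sub_nonneg.2 hbracket
  positivity

lemma pucciMinusGe_gaussianBarrier {T : ℝ} (hT : 0 ≤ T) (hγ : 0 ≤ γ) (hlam : 0 ≤ lam)
    (hLam : 0 ≤ Lam) (x : E) :
    PucciMinusGe lam Lam (fun y => T * gaussianBarrier γ z R y) x
      (-(T * (2 * (γ / R ^ 2) * (dim E * Lam)))) := by
  refine (pucciMinusGe_const_mul_gaussianBarrier hT hγ x).mono ?_
  rw [← mul_neg]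
  gcongr
  set G := Real.exp (-(γ / R ^ 2) * ‖x - z‖ ^ 2)
  have hG₁ : G ≤ 1 := exp_neg_mul_norm_sub_sq_le_one hγ R x z
  have hgood : 0 ≤ G * (4 * (γ / R ^ 2) ^ 2 * lam * ‖x - z‖ ^ 2) :=
    mul_nonneg (Real.exp_pos _).le (by positivity)
  have hbad : G * (2 * (γ / R ^ 2) * (dim E * Lam)) ≤ 2 * (γ / R ^ 2) * (dim E * Lam) :=
    mul_le_of_le_one_left (by positivity) hG₁
  linarith

end Gaussian

section Growth

variable {z : E} {γ R : ℝ}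

/-- `u` is a continuous nonnegative function in `closedBall z r` with
`𝓜⁻(D²u) - b |Du| ≤ f` in the interior. -/
structure IsBallSupersolution [MeasurableSpace E] (lam Lam : ℝ) (z : E) (r : ℝ)
    (b f u : E → ℝ) : Prop where
  continuousOn : ContinuousOn u (closedBall z r)
  nonneg : ∀ x ∈ closedBall z r, 0 ≤ u x
  measurable_drift : Measurable b
  measurable_source : Measurable f
  drift_nonneg : ∀ x, 0 ≤ b x
  isSubsolutionAt : ∀ x ∈ ball z r, IsSubsolutionAt lam Lam b f (fun y => -u y) x

lemma IsBallSupersolution.isSubsolutionAt_gaussianBarrier_sub [MeasurableSpace E] {b f u : E → ℝ}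
    {T ρ : ℝ} (hu : IsBallSupersolution lam Lam z R b f u) (hT : 0 ≤ T) (hγ : 0 ≤ γ)
    (hlam : 0 ≤ lam) (hLam : 0 ≤ Lam) (hρ : 0 ≤ ρ) (hR : 0 < R)
    (hργ : dim E * Lam * R ^ 2 ≤ 2 * γ * lam * ρ ^ 2) (hx : x ∈ ball z R) :
    IsSubsolutionAt lam Lam b (fun y => (f y + T * (2 * γ / R) * b y) +
      (ball z ρ).indicator (fun _ => T * (2 * (γ / R ^ 2) * (dim E * Lam))) y)
      (fun y => -u y + T * gaussianBarrier γ z R y) x := by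
  have hfderiv := norm_fderiv_const_mul_gaussianBarrier_le hT hγ hR (mem_ball_iff_norm.1 hx).le
  have hcontDiff : ContDiffAt ℝ 2 (fun y => T * gaussianBarrier γ z R y) x :=
    (contDiff_const.mul contDiff_gaussianBarrier).contDiffAt
  by_cases hxρ : x ∈ ball z ρ
  · refine (hu.isSubsolutionAt x hx).add hcontDiff (hu.drift_nonneg x) hfderiv
      (pucciMinusGe_gaussianBarrier hT hγ hlam hLam x) ?_
    rw [indicator_of_mem hxρ, sub_neg_eq_add]
  · refine (hu.isSubsolutionAt x hx).add hcontDiff (hu.drift_nonneg x) hfderiv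
      (pucciMinusGe_gaussianBarrier_of_le hT hγ hlam hρ hR hργ
        (not_lt.1 (mem_ball_iff_norm.not.1 hxρ))) ?_
    rw [indicator_of_notMem hxρ, sub_zero, add_zero]

variable [FiniteDimensional ℝ E] [MeasurableSpace E] [BorelSpace E] [Nontrivial E]

lemma dimNorm_indicator_const_le {S A : Set E} {c m : ℝ} (hA : MeasurableSet A) (hc : 0 ≤ c)
    (hm : volume (A ∩ S) ≤ ENNReal.ofReal m ^ dim E) :
    dimNorm (A.indicator fun _ => c) S ≤ ENNReal.ofReal (c * m) := by
  have hdim : dim E ≠ 0 := finrank_pos.ne'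
  rw [← ENNReal.pow_le_pow_left_iff hdim, ← lintegral_enorm_pow_dim]
  have hint : ∀ x, ‖A.indicator (fun _ => c) x‖ₑ ^ dim E =
      A.indicator (fun _ => ENNReal.ofReal c ^ dim E) x := by
    intro x
    by_cases hx : x ∈ A <;> simp [hx, hdim, Real.enorm_of_nonneg hc]
  simp only [hint]
  rw [lintegral_indicator hA, Measure.restrict_restrict hA, lintegral_const,
    Measure.restrict_apply_univ, ENNReal.ofReal_mul hc, mul_pow]
  gcongr

lemma ofReal_div_ballRoot_pow_mul_volume_ball (z : E) {ε r : ℝ} (hε : 0 ≤ ε) (hr : 0 ≤ r) :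
    ENNReal.ofReal ((ε / ballRoot E) ^ dim E) * volume (ball z r) =
      ENNReal.ofReal (ε * r) ^ dim E := by
  have hroot := ballRoot_pos (E := E)
  rw [volume_ball_eq_ofReal_pow z hr, ← ENNReal.ofReal_pow (by positivity),
    ← ENNReal.ofReal_pow (by positivity), ← ENNReal.ofReal_mul (by positivity), ← mul_pow]
  field_simp

lemma exists_gaussian_comparison_constants (E : Type*) [NormedAddCommGroup E]
    [InnerProductSpace ℝ E] [FiniteDimensional ℝ E] [MeasurableSpace E] [BorelSpace E]
    [Nontrivial E] (hlam : 0 < lam) (hLam : 0 ≤ Lam) :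
    ∃ κ > 0, ∃ C > 0, ∀ {z : E} {b f u : E → ℝ} {γ R ρ T β F m : ℝ},
      IsBallSupersolution lam Lam z R b f u → 0 < R → 0 ≤ γ → 0 ≤ ρ → 0 ≤ T →
      dim E * Lam * R ^ 2 ≤ 2 * γ * lam * ρ ^ 2 → 0 ≤ β → β ≤ κ →
      dimNorm b (ball z R) ≤ ENNReal.ofReal β → 0 ≤ F → dimNorm f (ball z R) ≤ ENNReal.ofReal F →
      0 ≤ m → volume (ball z ρ ∩ {y | u y < T * gaussianBarrier γ z R y}) ≤
        ENNReal.ofReal m ^ dim E →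
      ∀ x ∈ closedBall z R, T * gaussianBarrier γ z R x - C * R *
        (F + T * (2 * γ / R) * β + T * (2 * (γ / R ^ 2) * (dim E * Lam)) * m) ≤ u x := by
  obtain ⟨κ, hκ, C, hC, habp⟩ := exists_abp_constants E hlam Lam
  refine ⟨κ, hκ, C * 2, by positivity, ?_⟩
  intro z b f u γ R ρ T β F m hu hR hγ hρ hT hργ hβ hβκ hbβ hF hfF hm hvol x hx
  set c := T * (2 * (γ / R ^ 2) * (dim E * Lam))
  have hf_meas := hu.measurable_source
  have hb_meas := hu.measurable_drift
  have hind_meas : Measurable ((ball z ρ).indicator fun _ => c) :=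
    measurable_const.indicator measurableSet_ball
  set S := {y ∈ ball z R | 0 < -u y + T * gaussianBarrier γ z R y}
  have hsource : dimNorm (fun y => f y + T * (2 * γ / R) * b y) S ≤
      ENNReal.ofReal (F + T * (2 * γ / R) * β) :=
    (dimNorm_mono_set fun y hy => hy.1).trans
      (dimNorm_add_const_mul_le hb_meas hf_meas (by positivity) hβ hF hfF hbβ)
  have hindicator : dimNorm ((ball z ρ).indicator fun _ => c) S ≤ ENNReal.ofReal (c * m) := by
    refine dimNorm_indicator_const_le measurableSet_ball (by positivity) ((measure_mono ?_).trans
      hvol)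
    exact fun y hy => ⟨hy.1, lt_neg_add_iff_lt.1 hy.2.2⟩
  have hW : ContinuousOn (fun y => -u y + T * gaussianBarrier γ z R y) (closedBall z R) :=
    hu.continuousOn.neg.add (contDiff_const.mul contDiff_gaussianBarrier).continuous.continuousOn
  have hsphere : ∀ y ∈ closedBall z R \ ball z R, -u y + T * gaussianBarrier γ z R y ≤ 0 := by
    intro y hy
    rw [closedBall_sdiff_ball, mem_sphere_iff_norm] at hy
    rw [gaussianBarrier_eq_zero hR.ne' hy, mul_zero, add_zero, neg_nonpos]
    exact hu.nonneg y (mem_closedBall_iff_norm.2 hy.le)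
  have key := habp (W := fun y => -u y + T * gaussianBarrier γ z R y) (d := 2 * R)
    (T := F + T * (2 * γ / R) * β + c * m) (isCompact_closedBall z R) isOpen_ball
    ball_subset_closedBall (by positivity)
    (fun y hy y' hy' => (dist_triangle_right y y' z).trans
      (by linarith [mem_closedBall.1 hy, mem_closedBall.1 hy'])) hW hsphere
    (fun y hy _ => hu.isSubsolutionAt_gaussianBarrier_sub hT hγ hlam.le hLam hρ hR hργ hy)
    hb_meas ((by fun_prop : Measurable _).add hind_meas)
    (hbβ.trans (ENNReal.ofReal_le_ofReal hβκ)) (by positivity)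
    ((dimNorm_add_le (by fun_prop) hind_meas).trans
      ((add_le_add hsource hindicator).trans_eq (ENNReal.ofReal_add (by positivity)
        (by positivity)).symm)) x hx
  linarith

lemma volume_inter_lt_gaussianBarrier_le {z : E} {u : E → ℝ} {γ δ ε M r R : ℝ}
    (hγ : 0 ≤ γ) (hε : 0 ≤ ε) (hM : 0 ≤ M) (hr : 0 ≤ r) (hδ : δ ≤ (ε / ballRoot E) ^ dim E)
    (hvol : volume (ball z r ∩ {y | u y ≤ M}) ≤ ENNReal.ofReal δ * volume (ball z r)) :
    volume (ball z r ∩ {y | u y < M * gaussianBarrier γ z R y}) ≤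
      ENNReal.ofReal (ε * r) ^ dim E := by
  have hsub : {y | u y < M * gaussianBarrier γ z R y} ⊆ {y | u y ≤ M} := fun y hy =>
    hy.le.trans (mul_le_of_le_one_right hM (gaussianBarrier_le_one hγ))
  refine (measure_mono (inter_subset_inter_right _ hsub)).trans (hvol.trans ?_)
  exact (mul_le_mul_left (ENNReal.ofReal_le_ofReal hδ) _).trans_eq
    (ofReal_div_ballRoot_pow_mul_volume_ball z hε hr)

lemma exists_growth_constants (E : Type*) [NormedAddCommGroup E]
    [InnerProductSpace ℝ E] [FiniteDimensional ℝ E] [MeasurableSpace E] [BorelSpace E]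
    [Nontrivial E] (hlam : 0 < lam) (hLam : 0 < Lam) :
    ∃ M > 1, ∃ δ ∈ Ioo (0 : ℝ) 1, ∃ κ > 0, ∃ ε > 0, ∀ {z : E} {b f u : E → ℝ} {r t : ℝ},
      IsBallSupersolution lam Lam z (5 * r) b f u → 0 < r → 0 < t →
      dimNorm b (ball z (5 * r)) ≤ ENNReal.ofReal κ →
      dimNorm f (ball z (5 * r)) ≤ ENNReal.ofReal (ε * t / r) →
      volume (ball z r ∩ {y | u y ≤ M * t}) ≤ ENNReal.ofReal δ * volume (ball z r) →
      ∀ x ∈ closedBall z (4 * r), t < u x := by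
  obtain ⟨κ, hκ, C, hC, hcomp⟩ := exists_gaussian_comparison_constants E hlam hLam.le
  have hdim : (0 : ℝ) < dim E := by exact_mod_cast finrank_pos
  have hroot := ballRoot_pos (E := E)
  set γ : ℝ := 25 * (dim E * Lam) / (2 * lam) with hγ
  have hγ₀ : 0 < γ := by positivity
  set D : ℝ := Real.exp (-(γ * (4 / 5) ^ 2)) - Real.exp (-γ)
  have hD₀ : 0 < D := sub_pos.2 (Real.exp_lt_exp.2 (by linarith))
  have hD₁ : D ≤ 1 := (sub_le_self _ (Real.exp_pos _).le).trans
    (Real.exp_le_one_iff.2 (neg_nonpos.2 (by positivity)))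
  have hD₂ : 1 < 2 / D := (one_lt_div hD₀).2 (by linarith)
  set A : ℝ := 2 / D * (2 * (γ / 25) * (dim E * Lam)) with hA
  have hA₀ : 0 < A := by positivity
  set ε : ℝ := 1 / (20 * C * A)
  set κ' : ℝ := min κ (1 / (20 * C * (2 / D * (2 * (γ / 5)))))
  refine ⟨2 / D, hD₂, min (1 / 2) ((ε / ballRoot E) ^ dim E),
    ⟨by positivity, (min_le_left _ _).trans_lt (by norm_num)⟩, κ', by positivity,
    1 / (20 * C), by positivity, ?_⟩
  intro z b f u r t hu hr ht hb hf hvol x hx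
  have hr₅ : 0 < 5 * r := by positivity
  have hlow : 2 * t ≤ 2 / D * t * gaussianBarrier γ z (5 * r) x := by
    have hD_le : D ≤ gaussianBarrier γ z (5 * r) x :=
      exp_neg_sub_exp_neg_le_gaussianBarrier hγ₀.le hr₅
        ((mem_closedBall_iff_norm.1 hx).trans_eq (by ring))
    calc 2 * t = 2 / D * t * D := by field_simp
      _ ≤ _ := by gcongr
  have key := hcomp (ρ := r) hu hr₅ hγ₀.le hr.le (by positivity : 0 ≤ 2 / D * t)
    (by rw [hγ]; field_simp; norm_num) (by positivity) (min_le_left _ _) hb (by positivity) hf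
    (by positivity) (volume_inter_lt_gaussianBarrier_le hγ₀.le (by positivity) (by positivity)
      hr.le (min_le_right _ _) hvol) x (closedBall_subset_closedBall (by linarith) hx)
  have herror : C * (5 * r) * (1 / (20 * C) * t / r + 2 / D * t * (2 * γ / (5 * r)) * κ' +
      2 / D * t * (2 * (γ / (5 * r) ^ 2) * (dim E * Lam)) * (ε * r)) ≤ 3 / 4 * t :=
    calc _ = t / 4 + 5 * C * (2 / D * (2 * (γ / 5))) * κ' * t + 5 * C * A * ε * t := by
          rw [hA]; field_simp; ring
      _ ≤ t / 4 + 5 * C * (2 / D * (2 * (γ / 5))) *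
            (1 / (20 * C * (2 / D * (2 * (γ / 5))))) * t + 5 * C * A * ε * t := by
          gcongr; exact min_le_right _ _
      _ = 3 / 4 * t := by simp only [ε]; field_simp; norm_num
  linarith

end Growth

/-! ### The Hopf lemma -/

section Hopf

variable {e x₀ : E} {b f u : E → ℝ} {h r : ℝ}

omit [InnerProductSpace ℝ E] in
lemma mul_exp_neg_mul_le_gaussianBarrier (γ R : ℝ) (x z : E) :
    Real.exp (-γ) * (γ * (1 - ‖x - z‖ ^ 2 / R ^ 2)) ≤ gaussianBarrier γ z R x := by
  have hexp : Real.exp (-(γ / R ^ 2) * ‖x - z‖ ^ 2) =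
      Real.exp (-γ) * Real.exp (γ * (1 - ‖x - z‖ ^ 2 / R ^ 2)) := by
    rw [← Real.exp_add]; ring_nf
  have hlin := mul_le_mul_of_nonneg_left
    (Real.add_one_le_exp (γ * (1 - ‖x - z‖ ^ 2 / R ^ 2))) (Real.exp_pos (-γ)).le
  rw [gaussianBarrier, hexp]
  linarith

lemma norm_sub_add_smul_sq (he : ‖e‖ = 1) (hx₀ : inner ℝ e x₀ = 0) (h : ℝ) (y : E) :
    ‖y - (x₀ + h • e)‖ ^ 2 = ‖y - x₀‖ ^ 2 - 2 * h * inner ℝ e y + h ^ 2 := by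
  rw [← sub_sub, norm_sub_sq_real, norm_smul, he, inner_smul_right, inner_sub_left,
    real_inner_comm e y, real_inner_comm e x₀, hx₀, mul_one, Real.norm_eq_abs, sq_abs]
  ring

lemma norm_sub_le_norm_sub_add_smul_add (he : ‖e‖ = 1) (hh : 0 ≤ h) (x₀ y : E) :
    ‖y - x₀‖ ≤ ‖y - (x₀ + h • e)‖ + h := by
  calc ‖y - x₀‖ = ‖y - (x₀ + h • e) + h • e‖ := by congr 1; abel
    _ ≤ _ := (norm_add_le _ _).trans_eq (by rw [norm_smul, he, Real.norm_of_nonneg hh, mul_one])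

lemma closedBall_add_smul_subset_halfClosedBall (he : ‖e‖ = 1) (hx₀ : inner ℝ e x₀ = 0)
    (hh : 0 < h) : closedBall (x₀ + h • e) h ⊆ halfClosedBall e x₀ (2 * h) := by
  intro y hy
  rw [mem_closedBall_iff_norm] at hy
  refine ⟨mem_closedBall_iff_norm.2
    ((norm_sub_le_norm_sub_add_smul_add he hh.le x₀ y).trans (by linarith)), ?_⟩
  have hsq := norm_sub_add_smul_sq he hx₀ h y
  have hle := pow_le_pow_left₀ (norm_nonneg _) hy 2
  exact le_of_mul_le_mul_left (by linarith [sq_nonneg ‖y - x₀‖]) (by positivity : 0 < 2 * h)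

lemma ball_add_smul_subset_halfOpenBall (he : ‖e‖ = 1) (hx₀ : inner ℝ e x₀ = 0)
    (hh : 0 < h) : ball (x₀ + h • e) h ⊆ halfOpenBall e x₀ (2 * h) := by
  intro y hy
  rw [mem_ball_iff_norm] at hy
  refine ⟨mem_ball_iff_norm.2
    ((norm_sub_le_norm_sub_add_smul_add he hh.le x₀ y).trans_lt (by linarith)), ?_⟩
  have hsq := norm_sub_add_smul_sq he hx₀ h y
  have hlt := pow_lt_pow_left₀ hy (norm_nonneg _) two_ne_zero
  exact lt_of_mul_lt_mul_left (by linarith [sq_nonneg ‖y - x₀‖]) (by positivity : 0 ≤ 2 * h)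

/-- `u` is nonnegative with `𝓜⁻(D²u) - b |Du| ≤ f` in a half ball centred on the hyperplane
`⟪e, ·⟫ = 0`, continuous up to the boundary. -/
structure IsHalfBallSupersolution [MeasurableSpace E] (lam Lam : ℝ) (e x₀ : E) (r : ℝ)
    (b f u : E → ℝ) : Prop where
  norm_eq_one : ‖e‖ = 1
  inner_center : inner ℝ e x₀ = 0
  continuousOn : ContinuousOn u (halfClosedBall e x₀ r)
  nonneg : ∀ x ∈ halfClosedBall e x₀ r, 0 ≤ u x
  measurable_drift : Measurable b
  measurable_source : Measurable f
  drift_nonneg : ∀ x, 0 ≤ b x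
  isSubsolutionAt : ∀ x ∈ halfOpenBall e x₀ r, IsSubsolutionAt lam Lam b f (fun y => -u y) x

lemma IsHalfBallSupersolution.isBallSupersolution [MeasurableSpace E]
    (hu : IsHalfBallSupersolution lam Lam e x₀ (2 * h) b f u) (hh : 0 < h) :
    IsBallSupersolution lam Lam (x₀ + h • e) h b f u where
  continuousOn := hu.continuousOn.mono
    (closedBall_add_smul_subset_halfClosedBall hu.norm_eq_one hu.inner_center hh)
  nonneg x hx := hu.nonneg x
    (closedBall_add_smul_subset_halfClosedBall hu.norm_eq_one hu.inner_center hh hx)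
  measurable_drift := hu.measurable_drift
  measurable_source := hu.measurable_source
  drift_nonneg := hu.drift_nonneg
  isSubsolutionAt x hx := hu.isSubsolutionAt x
    (ball_add_smul_subset_halfOpenBall hu.norm_eq_one hu.inner_center hh hx)

lemma pucciMinusGe_clm (l : E →L[ℝ] ℝ) (x : E) : PucciMinusGe lam Lam (fun y => l y) x 0 :=
  fun ξ a _ => by simp only [hessAt_clm, mul_zero, Finset.sum_const_zero, le_refl]

lemma IsHalfBallSupersolution.linear_sub [MeasurableSpace E] {a : ℝ}
    (hu : IsHalfBallSupersolution lam Lam e x₀ r b f u) (ha : 0 ≤ a) :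
    IsHalfBallSubsolution lam Lam e x₀ r b (fun y => f y + a * b y)
      (fun y => -u y + a * inner ℝ e y) where
  norm_eq_one := hu.norm_eq_one
  inner_center := hu.inner_center
  continuousOn := hu.continuousOn.neg.add (by fun_prop)
  nonpos_of_inner_eq_zero x hx hx₀ := by
    rw [hx₀, mul_zero, add_zero, neg_nonpos]
    exact hu.nonneg x ⟨hx, hx₀.ge⟩
  measurable_drift := hu.measurable_drift
  measurable_source := hu.measurable_source.add (hu.measurable_drift.const_mul a)
  drift_nonneg := hu.drift_nonneg
  isSubsolutionAt x hx := by
    refine (hu.isSubsolutionAt x hx).add (D := a) (m := 0) (φ := fun y => (a • innerSL ℝ e) y)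
      (by fun_prop) (hu.drift_nonneg x) ?_ (pucciMinusGe_clm _ x) (by rw [sub_zero])
    rw [ContinuousLinearMap.fderiv, norm_smul, innerSL_apply_norm, hu.norm_eq_one, mul_one,
      Real.norm_of_nonneg ha]

lemma IsHalfBallSupersolution.le_of_le_in_tangent_ball [MeasurableSpace E] {γ t T : ℝ}
    (hu : IsHalfBallSupersolution lam Lam e x₀ (2 * h) b f u) (hh : 0 < h) (hγ : 0 ≤ γ)
    (ht : 0 ≤ t) (hT : 0 ≤ T)
    (hle : ∀ y ∈ closedBall (x₀ + h • e) h, t * gaussianBarrier γ (x₀ + h • e) h y - T ≤ u y)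
    {y : E} (hy : y ∈ halfClosedBall e x₀ h) :
    t * (Real.exp (-γ) * (γ * ((2 * h * inner ℝ e y - ‖y - x₀‖ ^ 2) / h ^ 2))) - T ≤ u y := by
  have hsq := norm_sub_add_smul_sq hu.norm_eq_one hu.inner_center h y
  by_cases hyh : y ∈ closedBall (x₀ + h • e) h
  · have hquot : (2 * h * inner ℝ e y - ‖y - x₀‖ ^ 2) / h ^ 2 =
        1 - ‖y - (x₀ + h • e)‖ ^ 2 / h ^ 2 := by
      rw [hsq]
      field_simp
      ring
    refine le_trans ?_ (hle y hyh)
    rw [hquot]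
    gcongr
    exact mul_exp_neg_mul_le_gaussianBarrier γ h y _
  · have hfar : h ^ 2 ≤ ‖y - (x₀ + h • e)‖ ^ 2 := by
      rw [mem_closedBall_iff_norm, not_le] at hyh
      gcongr
    have hquot : (2 * h * inner ℝ e y - ‖y - x₀‖ ^ 2) / h ^ 2 ≤ 0 :=
      div_nonpos_of_nonpos_of_nonneg (by linarith) (sq_nonneg h)
    have hneg : t * (Real.exp (-γ) * (γ * ((2 * h * inner ℝ e y - ‖y - x₀‖ ^ 2) / h ^ 2))) ≤ 0 :=
      mul_nonpos_of_nonneg_of_nonpos ht (mul_nonpos_of_nonneg_of_nonpos (Real.exp_pos _).le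
        (mul_nonpos_of_nonneg_of_nonpos hγ hquot))
    have hnonneg := hu.nonneg y ⟨closedBall_subset_closedBall (by linarith) hy.1, hy.2⟩
    linarith

lemma exists_tangent_ball_constants (E : Type*) [NormedAddCommGroup E]
    [InnerProductSpace ℝ E] [FiniteDimensional ℝ E] [MeasurableSpace E] [BorelSpace E]
    [Nontrivial E] (hlam : 0 < lam) (hLam : 0 < Lam) :
    ∃ κ > 0, ∃ C > 0, ∃ γ > 0, ∀ {e x₀ : E} {b f u : E → ℝ} {h t β F : ℝ},
      IsHalfBallSupersolution lam Lam e x₀ (2 * h) b f u → 0 < h → 0 ≤ t → 0 ≤ β → β ≤ κ →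
      dimNorm b (ball x₀ (2 * h)) ≤ ENNReal.ofReal β →
      0 ≤ F → dimNorm f (ball x₀ (2 * h)) ≤ ENNReal.ofReal F →
      (∀ y ∈ closedBall (x₀ + h • e) (h / 2), t ≤ u y) → ∀ y ∈ halfClosedBall e x₀ h,
      t * (Real.exp (-γ) * (γ * ((2 * h * inner ℝ e y - ‖y - x₀‖ ^ 2) / h ^ 2))) -
        C * h * (F + t * (2 * γ / h) * β) ≤ u y := by
  have hdim : (0 : ℝ) < dim E := Nat.cast_pos.2 finrank_pos
  obtain ⟨κ, hκ, C, hC, hcomparison⟩ := exists_gaussian_comparison_constants E hlam hLam.le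
  set γ := 2 * (dim E * Lam) / lam with hγ
  have hγ₀ : 0 < γ := by positivity
  refine ⟨κ, hκ, C, hC, γ, hγ₀, ?_⟩
  intro e x₀ b f u h t β F hu hh ht hβ hβκ hbβ hF hfF hlow y hy
  have hball : ball (x₀ + h • e) h ⊆ ball x₀ (2 * h) :=
    (ball_add_smul_subset_halfOpenBall hu.norm_eq_one hu.inner_center hh).trans inter_subset_left
  have hempty : ball (x₀ + h • e) (h / 2) ∩
      {y | u y < t * gaussianBarrier γ (x₀ + h • e) h y} = ∅ := by
    refine eq_empty_of_forall_notMem fun y hy => not_le_of_gt (mem_ofPred_eq ▸ hy.2) ?_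
    exact (mul_le_of_le_one_right ht (gaussianBarrier_le_one hγ₀.le)).trans
      (hlow y (ball_subset_closedBall hy.1))
  refine hu.le_of_le_in_tangent_ball hh hγ₀.le ht (by positivity) (fun y hy => ?_) hy
  have hu_ge := hcomparison (hu.isBallSupersolution hh) (ρ := h / 2) (T := t) hh hγ₀.le
    (by positivity) ht (by rw [hγ]; field_simp; norm_num) hβ hβκ
    ((dimNorm_mono_set hball).trans hbβ) hF ((dimNorm_mono_set hball).trans hfF) le_rfl
    (by rw [hempty, measure_empty]; exact bot_le) y hy
  linarith

lemma IsHalfBallSupersolution.mono [MeasurableSpace E] {ρ : ℝ}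
    (hu : IsHalfBallSupersolution lam Lam e x₀ r b f u) (hρr : ρ ≤ r) :
    IsHalfBallSupersolution lam Lam e x₀ ρ b f u where
  __ := hu
  continuousOn :=
    hu.continuousOn.mono (inter_subset_inter_left _ (closedBall_subset_closedBall hρr))
  nonneg x hx := hu.nonneg x ⟨closedBall_subset_closedBall hρr hx.1, hx.2⟩
  isSubsolutionAt x hx := hu.isSubsolutionAt x ⟨ball_subset_ball hρr hx.1, hx.2⟩

lemma hopf_slope_arith {C₁ C₂ γ θ a β Φ : ℝ} (hC₂ : 0 < C₂) (hθ : 0 < θ)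
    (ha : 0 ≤ a) (hC₂θ : C₂ * θ ≤ 1 / 4) (hβ : C₂ * β ≤ 1 / 8)
    (hβ' : C₂ * C₁ * Real.exp γ * β ≤ θ / 8) :
    C₂ * (a * θ / 2 + C₁ * (Φ + a * Real.exp γ * β) / θ + (Φ + a * β)) ≤
      a / 2 + C₂ * (C₁ / θ + 1) * Φ := by
  have htilt : a * (C₂ * θ) ≤ a * (1 / 4) := by gcongr
  have hdrift : a * (C₂ * β) ≤ a * (1 / 8) := by gcongr
  have hcorr : a * (C₂ * C₁ * Real.exp γ * β) / θ ≤ a * (θ / 8) / θ := by gcongr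
  have hcancel : a * (θ / 8) / θ = a / 8 := by field_simp
  have hexpand : C₂ * (a * θ / 2 + C₁ * (Φ + a * Real.exp γ * β) / θ + (Φ + a * β)) =
      a * (C₂ * θ) / 2 + a * (C₂ * C₁ * Real.exp γ * β) / θ + a * (C₂ * β) +
        C₂ * (C₁ / θ + 1) * Φ := by field_simp; ring
  linarith

lemma linear_sub_le_of_tangent_bound {C γ t θ β Φ y N U : ℝ} (hh : 0 < h) (hγ : 0 ≤ γ)
    (ht : 0 ≤ t) (hθ : 0 < θ) (hN : 0 ≤ N) (hNθ : N ≤ θ * h)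
    (hU : t * (Real.exp (-γ) * (γ * ((2 * h * y - N ^ 2) / h ^ 2))) -
      C * h * (Φ + t * (2 * γ / h) * β) ≤ U) :
    -U + 2 * (Real.exp (-γ) * γ * t / h) * y ≤
      (2 * (Real.exp (-γ) * γ * t / h) * θ / 2 +
        C * (Φ + 2 * (Real.exp (-γ) * γ * t / h) * Real.exp γ * β) / θ) * (θ * h) := by
  have hdecay : Real.exp (-γ) * γ * t / h ^ 2 * N ^ 2 ≤
      Real.exp (-γ) * γ * t / h ^ 2 * (θ * h) ^ 2 := by gcongr
  have hmain : t * (Real.exp (-γ) * (γ * ((2 * h * y - N ^ 2) / h ^ 2))) =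
      2 * (Real.exp (-γ) * γ * t / h) * y - Real.exp (-γ) * γ * t / h ^ 2 * N ^ 2 := by field_simp
  have htilt : 2 * (Real.exp (-γ) * γ * t / h) * Real.exp γ = t * (2 * γ / h) := by
    rw [Real.exp_neg]
    field_simp
  have hright : (2 * (Real.exp (-γ) * γ * t / h) * θ / 2 +
      C * (Φ + t * (2 * γ / h) * β) / θ) * (θ * h) =
        Real.exp (-γ) * γ * t / h ^ 2 * (θ * h) ^ 2 + C * h * (Φ + t * (2 * γ / h) * β) := by
    field_simp
  rw [htilt, hright]
  linarith

lemma HasMorreyBound.add_const_mul [FiniteDimensional ℝ E] [MeasurableSpace E] [BorelSpace E]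
    [Nontrivial E] {α B F a : ℝ} (hb : Measurable b) (hf : Measurable f) (ha : 0 ≤ a) (hB : 0 ≤ B)
    (hF : 0 ≤ F) (hfF : HasMorreyBound α F r f x) (hbB : HasMorreyBound α B r b x) :
    HasMorreyBound α (F + a * B) r (fun y => f y + a * b y) x := fun ρ hρ hρr => by
  rw [mul_add, mul_left_comm]
  exact dimNorm_add_const_mul_le hb hf ha (by positivity) (by positivity) (hfF ρ hρ hρr)
    (hbB ρ hρ hρr)

lemma exists_hopf_constants (E : Type*) [NormedAddCommGroup E]
    [InnerProductSpace ℝ E] [FiniteDimensional ℝ E] [MeasurableSpace E] [BorelSpace E]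
    [Nontrivial E] {α : ℝ} (hlam : 0 < lam) (hLam : 0 < Lam) (hα : 0 < α) :
    ∃ θ ∈ Ioc (0 : ℝ) 1, ∃ ε > 0, ∃ c > 0, ∃ C > 0,
      ∀ {e x₀ : E} {b f u : E → ℝ} {h t B F : ℝ},
      IsHalfBallSupersolution lam Lam e x₀ (2 * h) b f u → 0 < h → 0 ≤ t → 0 ≤ B → 0 ≤ F →
      HasMorreyBound α B (2 * h) b x₀ → (2 * h) ^ α * B ≤ ε → HasMorreyBound α F (2 * h) f x₀ →
      (∀ y ∈ closedBall (x₀ + h • e) (h / 2), t ≤ u y) → ∀ s, 0 < s → s ≤ θ * h →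
      (c * t / h - C * ((2 * h) ^ α * F)) * s ≤ u (x₀ + s • e) := by
  obtain ⟨κ₁, hκ₁, C₁, hC₁, γ, hγ, htangent⟩ := exists_tangent_ball_constants E hlam hLam
  obtain ⟨κ₂, hκ₂, C₂, hC₂, hlipschitz⟩ := exists_boundary_lipschitz_constants E hlam hLam.le hα
  set θ : ℝ := min 1 (1 / 4 / C₂)
  have hθ : 0 < θ := by positivity
  have hθ₁ : θ ≤ 1 := min_le_left _ _
  refine ⟨θ, ⟨hθ, hθ₁⟩, min (min κ₁ κ₂) (min (1 / 8 / C₂) (θ / 8 / (C₂ * C₁ * Real.exp γ))),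
    by positivity, Real.exp (-γ) * γ, by positivity, C₂ * (C₁ / θ + 1), by positivity, ?_⟩
  intro e x₀ b f u h t B F hu hh ht hB hF hbB hε hfF hlow s hs hsθ
  obtain ⟨⟨hε₁, hε₂⟩, hε₃, hε₄⟩ := (le_min_iff.1 hε).imp le_min_iff.1 le_min_iff.1
  set a := 2 * (Real.exp (-γ) * γ * t / h) with ha
  have ha₀ : 0 ≤ a := by positivity
  have hrh : θ * h ≤ h := mul_le_of_le_one_left hh.le hθ₁
  have hpow : (θ * h) ^ α ≤ (2 * h) ^ α := by gcongr; linarith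
  set η := a * θ / 2 + C₁ * ((2 * h) ^ α * F + a * Real.exp γ * ((2 * h) ^ α * B)) / θ
  have hheight : inner ℝ e (x₀ + s • e) = s := by
    rw [inner_add_right, inner_smul_right, hu.inner_center, real_inner_self_eq_norm_sq,
      hu.norm_eq_one]
    simp
  have hslope := hlipschitz ((hu.mono (by linarith)).linear_sub ha₀) (r := θ * h) (η := η)
    (by positivity) hB (by positivity : 0 ≤ F + a * B) (fun y hy => ?_)
    (fun ρ hρ hρr => hbB ρ hρ (by linarith)) (hε₂.trans' (by gcongr))
    (HasMorreyBound.add_const_mul hu.measurable_drift hu.measurable_source ha₀ hB hF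
      (fun ρ hρ hρr => hfF ρ hρ (by linarith)) (fun ρ hρ hρr => hbB ρ hρ (by linarith))) s hs hsθ
  · have hF' : (θ * h) ^ α * (F + a * B) ≤ (2 * h) ^ α * F + a * ((2 * h) ^ α * B) := by
      refine (mul_le_mul_of_nonneg_right hpow (by positivity)).trans_eq ?_
      ring
    have harith := hopf_slope_arith (C₁ := C₁) (γ := γ) (β := (2 * h) ^ α * B)
      (Φ := (2 * h) ^ α * F) hC₂ hθ ha₀
      (by rw [mul_comm, ← le_div_iff₀ hC₂]; exact min_le_right _ _)
      (by rwa [mul_comm, ← le_div_iff₀ hC₂])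
      (by rwa [mul_comm, ← le_div_iff₀ (by positivity)])
    have hfinal : C₂ * (η + (θ * h) ^ α * (F + a * B)) * s ≤
        (a / 2 + C₂ * (C₁ / θ + 1) * ((2 * h) ^ α * F)) * s :=
      mul_le_mul_of_nonneg_right (harith.trans' (by gcongr)) hs.le
    rw [hheight] at hslope
    rw [ha] at hfinal hslope
    linarith
  · exact linear_sub_le_of_tangent_bound hh hγ.le ht hθ (norm_nonneg _)
      (mem_closedBall_iff_norm.1 hy.1) (htangent hu hh ht (by positivity) hε₁
        (hbB _ (by positivity) le_rfl) (by positivity) (hfF _ (by positivity) le_rfl) hlow y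
        ⟨closedBall_subset_closedBall hrh hy.1, hy.2⟩)

end Hopf

/-! ### The weak Harnack inequality -/

section LayerCake

variable {α : Type*} {M c ε : ℝ}

lemma rpow_le_tsum_indicator_superlevel {v : α → ℝ} (hM : 1 < M) (hc : 0 < c) (hε : 0 ≤ ε) (a : α) :
    ENNReal.ofReal (v a) ^ ε ≤ ENNReal.ofReal ((c * M) ^ ε) + ∑' k : ℕ,
      {a | c * M ^ k < v a}.indicator
        (fun _ => ENNReal.ofReal ((c * M ^ 2) ^ ε * (M ^ ε) ^ k)) a := by
  have hM₀ : 0 < M := one_pos.trans hM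
  rcases le_or_gt (v a) (c * M) with hle | hgt
  · refine le_add_right ?_
    rw [← ENNReal.ofReal_rpow_of_nonneg (by positivity) hε]
    gcongr
  · obtain ⟨j, hj, hj'⟩ := exists_nat_pow_near ((one_le_div (by positivity)).2 hgt.le) hM
    rw [le_div_iff₀ (by positivity)] at hj
    rw [div_lt_iff₀ (by positivity)] at hj'
    have hmem : c * M ^ j < v a := by
      refine lt_of_lt_of_le ?_ hj
      rw [mul_comm, mul_lt_mul_iff_right₀ (by positivity)]
      exact lt_mul_of_one_lt_right hc hM
    refine le_add_left (le_trans ?_ (ENNReal.le_tsum j))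
    rw [indicator_of_mem (s := {a | c * M ^ j < v a}) hmem]
    calc ENNReal.ofReal (v a) ^ ε ≤ ENNReal.ofReal (c * M ^ 2 * M ^ j) ^ ε := by
          gcongr
          exact hj'.le.trans_eq (by ring)
      _ = _ := by
          rw [ENNReal.ofReal_rpow_of_nonneg (by positivity) hε,
            Real.mul_rpow (by positivity) (by positivity), ← Real.rpow_natCast_mul hM₀.le,
            mul_comm (j : ℝ), Real.rpow_mul_natCast hM₀.le]

lemma tsum_ofReal_mul_pow {s : ℝ} (hc : 0 ≤ c) (hs : 0 ≤ s) (hs₁ : s < 1) :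
    ∑' k : ℕ, ENNReal.ofReal (c * s ^ k) = ENNReal.ofReal (c * (1 - s)⁻¹) := by
  rw [← ENNReal.ofReal_tsum_of_nonneg (fun k => by positivity)
    ((summable_geometric_of_lt_one hs hs₁).mul_left _), tsum_mul_left,
    tsum_geometric_of_lt_one hs hs₁]

lemma exists_rpow_mul_lt_one {σ : ℝ} (hM : 0 < M) (hσ : σ < 1) : ∃ ε > (0 : ℝ), M ^ ε * σ < 1 := by
  have hlim : Tendsto (fun ε : ℝ => M ^ ε * σ) (𝓝[>] 0) (𝓝 σ) := by
    have hcont : Continuous fun ε : ℝ => M ^ ε * σ :=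
      (Real.continuous_const_rpow hM.ne').mul continuous_const
    simpa using (hcont.tendsto 0).mono_left nhdsWithin_le_nhds
  obtain ⟨ε, hε, hε'⟩ := ((hlim.eventually_lt_const hσ).and self_mem_nhdsWithin).exists
  exact ⟨ε, hε', hε⟩

lemma exists_lintegral_rpow_le_of_superlevel_decay (α : Type*) [MeasurableSpace α] {σ A V : ℝ}
    (hM : 1 < M) (hc : 0 < c) (hσ : 0 ≤ σ) (hσ₁ : σ < 1) (hA : 0 ≤ A) (hV : 0 ≤ V) :
    ∃ ε > (0 : ℝ), ∃ C > 0, ∀ {μ : Measure α} {v : α → ℝ},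
      AEMeasurable v μ → μ univ ≤ ENNReal.ofReal V →
      (∀ k : ℕ, μ {a | c * M ^ k < v a} ≤ ENNReal.ofReal (A * σ ^ k)) →
      ∫⁻ a, ENNReal.ofReal (v a) ^ ε ∂μ ≤ ENNReal.ofReal C := by
  have hM₀ : 0 < M := one_pos.trans hM
  obtain ⟨ε, hε, hs⟩ := exists_rpow_mul_lt_one hM₀ hσ₁
  have : 0 < 1 - M ^ ε * σ := sub_pos.2 hs
  set a₀ := (c * M) ^ ε
  set a₁ := (c * M ^ 2) ^ ε
  refine ⟨ε, hε, a₀ * V + a₁ * A * (1 - M ^ ε * σ)⁻¹ + 1, by positivity, fun {μ v} hv hμ hdec => ?_⟩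
  have hmeas (k : ℕ) : NullMeasurableSet {a | c * M ^ k < v a} μ :=
    nullMeasurableSet_lt aemeasurable_const hv
  calc ∫⁻ a, ENNReal.ofReal (v a) ^ ε ∂μ
      ≤ ∫⁻ a, (ENNReal.ofReal a₀ + ∑' k : ℕ, {a | c * M ^ k < v a}.indicator
          (fun _ => ENNReal.ofReal (a₁ * (M ^ ε) ^ k)) a) ∂μ :=
        lintegral_mono fun a => rpow_le_tsum_indicator_superlevel hM hc hε.le a
    _ = ENNReal.ofReal a₀ * μ univ + ∑' k : ℕ,
          ENNReal.ofReal (a₁ * (M ^ ε) ^ k) * μ {a | c * M ^ k < v a} := by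
        rw [lintegral_add_left measurable_const, lintegral_const,
          lintegral_tsum fun k => aemeasurable_const.indicator₀ (hmeas k)]
        simp only [lintegral_indicator_const₀ (hmeas _)]
    _ ≤ ENNReal.ofReal a₀ * ENNReal.ofReal V + ∑' k : ℕ,
          ENNReal.ofReal (a₁ * A * (M ^ ε * σ) ^ k) := by
        gcongr with k
        refine (mul_le_mul_right (hdec k) _).trans_eq ?_
        rw [← ENNReal.ofReal_mul (by positivity), mul_pow]
        ring_nf
    _ ≤ _ := by
        rw [tsum_ofReal_mul_pow (by positivity) (by positivity) hs,
          ← ENNReal.ofReal_mul (by positivity),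
          ← ENNReal.ofReal_add (by positivity) (by positivity)]
        exact ENNReal.ofReal_le_ofReal (le_add_of_nonneg_right zero_le_one)

end LayerCake

lemma exists_geometric_decay {θ β N V : ℝ} (hθ₀ : 0 ≤ θ) (hθ : θ < 1) (hβ₀ : 0 < β) (hβ : β < 1)
    (hN : 0 ≤ N) (hV : 0 ≤ V) : ∃ A ≥ 0, ∃ σ ∈ Ioo (0 : ℝ) 1, ∀ v : ℕ → ℝ, v 0 ≤ V →
      (∀ k, v (k + 1) ≤ θ * v k + N * β ^ k) → ∀ k, v k ≤ A * σ ^ k := by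
  set σ := max β ((1 + θ) / 2)
  have hβσ : β ≤ σ := le_max_left _ _
  have hσ₀ : 0 < σ := hβ₀.trans_le hβσ
  have hθσ : 0 < σ - θ := by linarith [le_max_right β ((1 + θ) / 2)]
  refine ⟨V + N / (σ - θ), by positivity, σ, ⟨hσ₀, max_lt hβ (by linarith)⟩, fun v hv₀ hv k => ?_⟩
  induction k with
  | zero => simpa using hv₀.trans (le_add_of_nonneg_right (by positivity))
  | succ k ih =>
    have hN' : N ≤ (V + N / (σ - θ)) * (σ - θ) := by
      rw [add_mul, div_mul_cancel₀ _ hθσ.ne']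
      exact le_add_of_nonneg_left (by positivity)
    calc v (k + 1) ≤ θ * v k + N * β ^ k := hv k
      _ ≤ θ * ((V + N / (σ - θ)) * σ ^ k) + (V + N / (σ - θ)) * (σ - θ) * σ ^ k := by gcongr
      _ = (V + N / (σ - θ)) * σ ^ (k + 1) := by ring

lemma exists_pos_and_not_two_mul {P : ℝ → Prop} {R : ℝ} (hR : 0 < R) (hP : ∀ᶠ r in 𝓝[>] 0, P r)
    (hPR : ¬ P R) : ∃ r, 0 < r ∧ 2 * r ≤ R ∧ P r ∧ ¬ P (2 * r) := by
  have hlim : Tendsto (fun j : ℕ => R / 2 ^ j) atTop (𝓝[>] 0) := by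
    refine tendsto_nhdsWithin_iff.2 ⟨?_, .of_forall fun j => by simp only [mem_Ioi]; positivity⟩
    exact tendsto_const_nhds.div_atTop (tendsto_pow_atTop_atTop_of_one_lt one_lt_two)
  have hex : ∃ j : ℕ, P (R / 2 ^ j) := (hlim.eventually hP).exists
  classical
  obtain ⟨i, hi⟩ : ∃ i, Nat.find hex = i + 1 := Nat.exists_eq_succ_of_ne_zero fun h =>
    hPR (by simpa [h] using Nat.find_spec hex)
  have hdouble : 2 * (R / 2 ^ (i + 1)) = R / 2 ^ i := by
    rw [pow_succ]
    field_simp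
  refine ⟨R / 2 ^ (i + 1), by positivity, ?_, hi ▸ Nat.find_spec hex, ?_⟩ <;> rw [hdouble]
  · exact div_le_self hR.le (one_le_pow₀ one_le_two)
  · exact Nat.find_min hex (by lia)

section Volume

variable [FiniteDimensional ℝ E] [MeasurableSpace E] [BorelSpace E]

lemma mul_volume_le_of_density [Nontrivial E] {A G : Set E} {δ : ℝ≥0∞} {R : ℝ}
    (hG : MeasurableSet G) (h : ∀ x ∈ A, ∃ r, 0 < r ∧ r ≤ R ∧
      δ * volume (ball x r) ≤ volume (ball x r ∩ G)) :
    δ * volume A ≤ 5 ^ dim E * volume G := by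
  choose! r hr₀ hrR hr using h
  obtain ⟨s, hsA, hdisj, hcov⟩ := Vitali.exists_disjoint_subfamily_covering_enlargement_closedBall A
    id r R hrR 5 (by norm_num)
  have : Countable s := (hdisj.countable_of_nonempty_interior fun a ha =>
    ⟨a, ball_subset_interior_closedBall (mem_ball_self (hr₀ a (hsA ha)))⟩).to_subtype
  have hsub : A ⊆ ⋃ a : s, closedBall (a : E) (5 * r a) := fun x hx =>
    let ⟨b, hb, hb'⟩ := hcov x hx
    mem_iUnion.2 ⟨⟨b, hb⟩, hb' (mem_closedBall_self (hr₀ x hx).le)⟩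
  have hdisj' : Pairwise (Function.onFun Disjoint fun a : s => ball (a : E) (r a) ∩ G) :=
    fun a b hab => (hdisj a.2 b.2 (Subtype.coe_ne_coe.2 hab)).mono
      (inter_subset_left.trans ball_subset_closedBall)
      (inter_subset_left.trans ball_subset_closedBall)
  have hvol (a : s) :
      volume (closedBall (a : E) (5 * r a)) = 5 ^ dim E * volume (ball (a : E) (r a)) := by
    rw [Measure.addHaar_closedBall_mul volume _ (by norm_num) (hr₀ a (hsA a.2)).le,
      Measure.addHaar_closedBall_eq_addHaar_ball, Measure.addHaar_ball_center volume (a : E),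
      ENNReal.ofReal_pow (by norm_num)]
    norm_num
  calc δ * volume A ≤ δ * ∑' a : s, volume (closedBall (a : E) (5 * r a)) := by
        gcongr
        exact (measure_mono hsub).trans (measure_iUnion_le _)
    _ = 5 ^ dim E * ∑' a : s, δ * volume (ball (a : E) (r a)) := by
        simp only [hvol, ENNReal.tsum_mul_left, mul_left_comm]
    _ ≤ 5 ^ dim E * ∑' a : s, volume (ball (a : E) (r a) ∩ G) := by
        gcongr with a
        exact hr a (hsA a.2)
    _ = 5 ^ dim E * volume (⋃ a : s, ball (a : E) (r a) ∩ G) := by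
        rw [measure_iUnion hdisj' fun a => measurableSet_ball.inter hG]
    _ ≤ 5 ^ dim E * volume G := by
        gcongr
        exact iUnion_subset fun a => inter_subset_right

/- The homothety of ratio `1 - t` centred at `z` maps the set `0 < d` into the complement of the
collar, and its image has volume at least `1 - dim E * t` times that of the set. -/
lemma volume_collar_le {d : E → ℝ} {z : E} {t : ℝ} (hd : ConcaveOn ℝ univ d) (hdc : Continuous d)
    (hfin : volume {x | 0 < d x} ≠ ⊤) (hz : 0 < d z) (ht : t ∈ Icc (0 : ℝ) 1) :
    volume.real {x | 0 < d x ∧ d x < t * d z} ≤ dim E * t * volume.real {x | 0 < d x} := by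
  set Ω := {x | 0 < d x}
  set S := {x | 0 < d x ∧ d x < t * d z}
  set T := AffineMap.homothety z (1 - t) '' Ω with hT
  have ht₁ : 0 ≤ 1 - t := sub_nonneg.2 ht.2
  have hSΩ : S ⊆ Ω := fun x hx => hx.1
  have hTΩ : T ⊆ Ω \ S := by
    rintro _ ⟨y, hy : 0 < d y, rfl⟩
    have hconc := hd.2 (mem_univ y) (mem_univ z) ht₁ ht.1 (by ring)
    have heq : AffineMap.homothety z (1 - t) y = (1 - t) • y + t • z := by
      rw [AffineMap.homothety_apply, vsub_eq_sub, vadd_eq_add]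
      module
    rw [← heq, smul_eq_mul, smul_eq_mul] at hconc
    have hpos : 0 < (1 - t) * d y + t * d z := by
      rcases ht.1.eq_or_lt with rfl | ht₀
      · simpa using hy
      · positivity
    exact ⟨hpos.trans_le hconc, fun h => h.2.not_ge (by nlinarith)⟩
  have hvT : volume.real T = (1 - t) ^ dim E * volume.real Ω := by
    rw [measureReal_def, hT, Measure.addHaar_image_homothety, ENNReal.toReal_mul,
      ENNReal.toReal_ofReal (abs_nonneg _), abs_of_nonneg (by positivity), measureReal_def]
  have hSm : MeasurableSet S :=
    ((isOpen_lt continuous_const hdc).inter (isOpen_lt hdc continuous_const)).measurableSet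
  have hadd := measureReal_sdiff_add_inter (μ := volume) (s := Ω) hSm hfin
  rw [inter_eq_self_of_subset_right hSΩ] at hadd
  have hle : volume.real T ≤ volume.real (Ω \ S) :=
    measureReal_mono hTΩ (measure_ne_top_of_subset sdiff_subset hfin)
  have hbern := one_add_mul_sub_le_pow (a := 1 - t) (by linarith) (dim E)
  nlinarith [measureReal_nonneg (μ := volume) (s := Ω)]

lemma measureReal_le_of_mul_sdiff_le {S S' T : Set E} {δ N : ℝ} (hδ : 0 < δ) (hN : 0 ≤ N)
    (hSS' : S' ⊆ S) (hS' : MeasurableSet S') (hS : volume S ≠ ⊤) (hT : volume T ≠ ⊤)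
    (h : ENNReal.ofReal δ * volume (S' \ T) ≤ ENNReal.ofReal N * volume (S \ S')) :
    volume.real S' ≤ N / δ / (1 + N / δ) * volume.real S + volume.real T := by
  have hdiff : volume (S \ S') ≠ ⊤ := measure_ne_top_of_subset sdiff_subset hS
  have hstep := ENNReal.toReal_mono (ENNReal.mul_ne_top ENNReal.ofReal_ne_top hdiff) h
  rw [ENNReal.toReal_mul, ENNReal.toReal_mul, ENNReal.toReal_ofReal hδ.le,
    ENNReal.toReal_ofReal hN, ← measureReal_def, ← measureReal_def, mul_comm,
    ← le_div_iff₀ hδ, mul_div_right_comm, measureReal_sdiff hSS' hS' hS] at hstep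
  have hS'T : volume.real S' ≤ volume.real (S' \ T) + volume.real T := by
    have hfin : volume (S' \ T ∪ T) ≠ ⊤ := measure_union_ne_top
      (measure_ne_top_of_subset (sdiff_subset.trans hSS') hS) hT
    exact (measureReal_mono (by simp) hfin).trans (measureReal_union_le _ _)
  have hL : 0 ≤ N / δ := by positivity
  set L := N / δ
  rw [div_mul_eq_mul_div, ← sub_le_iff_le_add, le_div_iff₀ (by positivity)]
  nlinarith [measureReal_nonneg (μ := volume) (s := T)]

end Volume

section Growth

variable [FiniteDimensional ℝ E] [MeasurableSpace E] [BorelSpace E]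
  {d u : E → ℝ} {z y : E} {M δ r₀ r s t τ c D : ℝ} {k : ℕ}

/-- The growth lemma for the function `u` on the set `0 < d`, at scales up to `r₀`:
wherever `M * t < u` on a proportion at least `1 - δ` of a ball well inside the set, `t < u` holds
on the ball of four times the radius. The concave function `d` measures the depth inside the set;
for a half ball it is the distance to the boundary. -/
structure HasGrowth (M δ r₀ : ℝ) (d u : E → ℝ) : Prop where
  lipschitz : LipschitzWith 1 d
  concave : ConcaveOn ℝ univ d
  growth : ∀ {x r t}, 0 < r → r ≤ r₀ → 5 * r < d x → 1 ≤ t →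
    volume (ball x r ∩ {y | u y ≤ M * t}) ≤ ENNReal.ofReal δ * volume (ball x r) →
    ∀ y ∈ closedBall x (4 * r), t < u y

namespace HasGrowth

lemma le_add_dist (h : HasGrowth M δ r₀ d u) (x y : E) : d x ≤ d y + dist x y := by
  simpa using h.lipschitz.le_add_mul x y

lemma le_depth_add_smul (h : HasGrowth M δ r₀ d u) (x z : E) (hs : s ∈ Icc (0 : ℝ) 1) :
    (1 - s) * d x + s * d z ≤ d (x + s • (z - x)) := by
  have hconc := h.concave.2 (mem_univ x) (mem_univ z) (sub_nonneg.2 hs.2) hs.1 (by ring)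
  rwa [smul_eq_mul, smul_eq_mul, show (1 - s) • x + s • z = x + s • (z - x) by module] at hconc

lemma exists_mem_ball_le (h : HasGrowth M δ r₀ d u) (hr : 0 < r) (hr₀ : r ≤ r₀) (hx : 5 * r < d x)
    (ht : 1 ≤ t) (hy : y ∈ closedBall x (4 * r)) (hu : u y ≤ t) :
    ∃ y' ∈ ball x r, u y' ≤ M * t := by
  by_contra! hcon
  refine (h.growth hr hr₀ hx ht ?_ y hy).not_ge hu
  rw [show ball x r ∩ {y | u y ≤ M * t} = ∅ from
    eq_empty_of_forall_notMem fun y' hy' => (hcon y' hy'.1).not_ge hy'.2, measure_empty]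
  exact zero_le

lemma exists_mem_ball_le_pow (h : HasGrowth M δ r₀ d u) (hM : 1 ≤ M) (hr : 0 < r) (hr₀ : r ≤ r₀)
    (hrτ : 5 * r < τ) (hz : τ ≤ d z) (hu : u z ≤ 1) (j : ℕ) (hx : τ ≤ d x)
    (hxz : ‖z - x‖ ≤ j * r) : ∃ y ∈ ball x r, u y ≤ M ^ j := by
  induction j generalizing x with
  | zero =>
    obtain rfl : z = x := by simpa [sub_eq_zero] using hxz
    exact ⟨z, mem_ball_self hr, by simpa using hu⟩
  | succ j ih =>
    have hM' : 1 ≤ M ^ j := one_le_pow₀ hM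
    rw [pow_succ']
    rcases le_or_gt ‖z - x‖ r with hzr | hzr
    · exact h.exists_mem_ball_le hr hr₀ (hrτ.trans_le hx) hM'
        (mem_closedBall_iff_norm.2 (by linarith)) (hu.trans hM')
    set s := r / ‖z - x‖
    have hs : s ∈ Icc (0 : ℝ) 1 := ⟨by positivity, div_le_one_of_le₀ hzr.le (norm_nonneg _)⟩
    have hsr : s * ‖z - x‖ = r := div_mul_cancel₀ _ (hr.trans hzr).ne'
    obtain ⟨y, hy, huy⟩ := ih (x := x + s • (z - x))
      ((by nlinarith [hs.1, hs.2] : τ ≤ (1 - s) * d x + s * d z).trans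
        (h.le_depth_add_smul x z hs)) (by
        rw [show z - (x + s • (z - x)) = (1 - s) • (z - x) by module, norm_smul,
          Real.norm_of_nonneg (sub_nonneg.2 hs.2)]
        push_cast at hxz
        linarith)
    refine h.exists_mem_ball_le hr hr₀ (hrτ.trans_le hx) hM' (ball_subset_closedBall
      (ball_subset_ball' ?_ hy)) huy
    rw [dist_self_add_left, norm_smul, Real.norm_of_nonneg hs.1]
    linarith

lemma exists_deeper (h : HasGrowth M δ r₀ d u) (hc : 0 ≤ c) (hcD : c * d x ≤ D) (hx : 0 ≤ d x)
    (hD : 0 < D) (hxz : ‖z - x‖ ≤ D) (hz : d x + τ ≤ d z) :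
    ∃ x', dist x' x ≤ c * d x ∧ (1 + c * τ / D) * d x ≤ d x' := by
  have hs : c * d x / D ∈ Icc (0 : ℝ) 1 := ⟨by positivity, div_le_one_of_le₀ hcD hD.le⟩
  refine ⟨x + (c * d x / D) • (z - x), ?_, le_trans ?_ (h.le_depth_add_smul x z hs)⟩
  · rw [dist_self_add_left, norm_smul, Real.norm_of_nonneg hs.1, div_mul_eq_mul_div,
      div_le_iff₀ hD]
    gcongr
  · calc (1 + c * τ / D) * d x = (1 - c * d x / D) * d x + c * d x / D * (d x + τ) := by ring
      _ ≤ _ := by gcongr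

lemma exists_mem_ball_le_pow_of_depth (h : HasGrowth M δ r₀ d u) (hM : 1 ≤ M) (hc : 0 < c)
    (hc₁ : c ≤ 1 / 10) (hτ : 0 < τ) (hcτ : c * τ ≤ r₀) (hD : ∀ x, 0 < d x → ‖z - x‖ ≤ D)
    (hz : 2 * τ ≤ d z) (hu : u z ≤ 1) {k₀ : ℕ} (hk₀ : D ≤ k₀ * (c * τ)) (k : ℕ)
    (hx : τ * (1 + c * τ / D)⁻¹ ^ k ≤ d x) (hx₀ : 0 < d x) :
    ∃ y ∈ ball x (c * min (d x) τ), u y ≤ M ^ (k₀ + k) := by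
  have hfar {x : E} (hx : τ ≤ d x) : ∃ y ∈ ball x (c * min (d x) τ), u y ≤ M ^ k₀ := by
    rw [min_eq_right hx]
    exact h.exists_mem_ball_le_pow hM (by positivity) hcτ (by nlinarith) (by linarith) hu k₀ hx
      ((hD x (hτ.trans_le hx)).trans hk₀)
  induction k generalizing x with
  | zero => exact hfar (by simpa using hx)
  | succ k ih =>
    rcases le_or_gt τ (d x) with hτx | hxτ
    · obtain ⟨y, hy, huy⟩ := hfar hτx
      exact ⟨y, hy, huy.trans (pow_le_pow_right₀ hM (by lia))⟩
    rw [min_eq_left hxτ.le]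
    have hDx : d x < D := by
      have := h.le_add_dist z x
      rw [dist_eq_norm] at this
      linarith [hD x hx₀]
    have : 0 < D := hx₀.trans hDx
    obtain ⟨x', hdist, hdeep⟩ := h.exists_deeper hc.le (by nlinarith) hx₀.le this (hD x hx₀)
      (by linarith : d x + τ ≤ d z)
    obtain ⟨y, hy, huy⟩ := ih (x := x') (by
      refine le_trans ?_ hdeep
      rw [pow_succ', mul_left_comm, inv_mul_le_iff₀ (by positivity)] at hx
      exact hx) (lt_of_lt_of_le (by positivity) hdeep)
    have hmin : c * min (d x') τ ≤ c * (2 * d x) := by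
      gcongr
      refine (min_le_left _ _).trans ((h.le_add_dist x' x).trans ?_)
      nlinarith
    rw [← add_assoc, pow_succ']
    have : 0 < c * d x := by positivity
    exact h.exists_mem_ball_le this ((by gcongr : c * d x ≤ c * τ).trans hcτ)
      (by nlinarith) (one_le_pow₀ hM) (ball_subset_closedBall (ball_subset_ball' (by linarith) hy))
      huy

/- A point of the higher superlevel set has full density in it at small scales, but not at scale
`R`; the growth lemma applies at the first good dyadic scale. -/
lemma exists_ball_density (h : HasGrowth M δ r₀ d u) {R : ℝ} (hR : 0 < R) (hRr₀ : R ≤ r₀)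
    (hRx : 5 * R < d x) (ht : 1 ≤ t) (hux : ContinuousAt u x) (hx : M * t < u x)
    (hy : ∃ y ∈ ball x R, u y ≤ t) : ∃ r, 0 < r ∧ r ≤ R ∧
      ENNReal.ofReal δ * volume (ball x r) ≤ volume (ball x r ∩
        ({y | 0 < d y ∧ t < u y} \ {y | 0 < d y ∧ M * t < u y})) := by
  obtain ⟨r, hr, hrR, hgood, hbad⟩ := exists_pos_and_not_two_mul
    (P := fun r => volume (ball x r ∩ {y | u y ≤ M * t}) ≤ ENNReal.ofReal δ * volume (ball x r))
    hR (by
      obtain ⟨η, hη, hball⟩ := Metric.eventually_nhds_iff_ball.1 (hux.eventually_const_lt hx)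
      filter_upwards [Ioo_mem_nhdsGT hη] with r hr
      rw [show ball x r ∩ {y | u y ≤ M * t} = ∅ from eq_empty_of_forall_notMem fun y hy =>
        (hball y (ball_subset_ball hr.2.le hy.1)).not_ge hy.2, measure_empty]
      exact zero_le) (fun hle => by
      obtain ⟨y, hy, hyt⟩ := hy
      exact (h.growth hR hRr₀ hRx ht hle y
        (ball_subset_closedBall (ball_subset_ball (by linarith) hy))).not_ge hyt)
  refine ⟨2 * r, by positivity, hrR, (not_le.1 hbad).le.trans (measure_mono ?_)⟩
  rintro y ⟨hy, hyM : u y ≤ M * t⟩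
  have hdy : 0 < d y := by
    have := h.le_add_dist x y
    rw [mem_ball'] at hy
    linarith
  exact ⟨hy, ⟨hdy, h.growth hr (by linarith) (by linarith) ht hgood y
    (ball_subset_closedBall (ball_subset_ball (by linarith) hy))⟩, fun h' => h'.2.not_ge hyM⟩

lemma mul_volume_superlevel_sdiff_collar_le [Nontrivial E] (h : HasGrowth M δ r₀ d u) (hM : 1 ≤ M)
    (hu : ContinuousOn u {x | 0 < d x}) (hc : 0 < c) (hc₁ : c ≤ 1 / 10) (hτ : 0 < τ)
    (hcτ : c * τ ≤ r₀) (hD₀ : 0 ≤ D) (hD : ∀ x, 0 < d x → ‖z - x‖ ≤ D) (hz : 2 * τ ≤ d z)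
    (huz : u z ≤ 1) {k₀ : ℕ} (hk₀ : D ≤ k₀ * (c * τ)) (k : ℕ) :
    ENNReal.ofReal δ * volume ({x | 0 < d x ∧ M ^ (k₀ + (k + 1)) < u x} \
      {x | 0 < d x ∧ d x < (1 + c * τ / D)⁻¹ ^ k * d z}) ≤
    5 ^ dim E * volume ({x | 0 < d x ∧ M ^ (k₀ + k) < u x} \
      {x | 0 < d x ∧ M ^ (k₀ + (k + 1)) < u x}) := by
  have hΩ : IsOpen {x | 0 < d x} := isOpen_lt continuous_const h.lipschitz.continuous
  have hS (T : ℝ) : IsOpen {x | 0 < d x ∧ T < u x} := hu.isOpen_inter_preimage hΩ isOpen_Ioi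
  refine mul_volume_le_of_density (R := c * τ) ((hS _).measurableSet.diff (hS _).measurableSet) ?_
  rintro x ⟨⟨hx, hux⟩, hcollar⟩
  have hdepth : τ * (1 + c * τ / D)⁻¹ ^ k ≤ d x := by
    refine le_trans ?_ (not_lt.1 fun hlt => hcollar ⟨hx, hlt⟩)
    rw [mul_comm]
    gcongr
    linarith
  have hmin : 0 < min (d x) τ := lt_min hx hτ
  have hR : c * min (d x) τ ≤ c * τ := by gcongr; exact min_le_right _ _
  rw [← add_assoc, pow_succ'] at hux
  obtain ⟨r, hr, hrR, hvol⟩ := h.exists_ball_density (by positivity) (hR.trans hcτ)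
    (by nlinarith [min_le_left (d x) τ]) (one_le_pow₀ hM) (hu.continuousAt (hΩ.mem_nhds hx)) hux
    (h.exists_mem_ball_le_pow_of_depth hM hc hc₁ hτ hcτ hD hz huz hk₀ k hdepth hx)
  exact ⟨r, hr, hrR.trans hR, by rwa [← add_assoc, pow_succ']⟩

lemma volume_superlevel_succ_le [Nontrivial E] (h : HasGrowth M δ r₀ d u) (hM : 1 ≤ M)
    (hδ : 0 < δ) (hu : ContinuousOn u {x | 0 < d x}) (hc : 0 < c) (hc₁ : c ≤ 1 / 10) (hτ : 0 < τ)
    (hcτ : c * τ ≤ r₀) (hD₀ : 0 ≤ D) (hD : ∀ x, 0 < d x → ‖z - x‖ ≤ D) (hz : 2 * τ ≤ d z)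
    (huz : u z ≤ 1) {k₀ : ℕ} (hk₀ : D ≤ k₀ * (c * τ)) (k : ℕ) :
    volume.real {x | 0 < d x ∧ M ^ (k₀ + (k + 1)) < u x} ≤
      5 ^ dim E / δ / (1 + 5 ^ dim E / δ) * volume.real {x | 0 < d x ∧ M ^ (k₀ + k) < u x} +
        dim E * (1 + c * τ / D)⁻¹ ^ k * volume.real {x | 0 < d x} := by
  have hdc := h.lipschitz.continuous
  have hfin : volume {x | 0 < d x} ≠ ⊤ := measure_ne_top_of_subset
    (fun x hx => mem_closedBall'.2 ((dist_eq_norm z x).trans_le (hD x hx)))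
    (measure_closedBall_lt_top (x := z) (r := D)).ne
  have hsub (T : ℝ) : {x | 0 < d x ∧ T < u x} ⊆ {x | 0 < d x} := fun x hx => hx.1
  have hS : MeasurableSet {x | 0 < d x ∧ M ^ (k₀ + (k + 1)) < u x} :=
    (hu.isOpen_inter_preimage (isOpen_lt continuous_const hdc) isOpen_Ioi).measurableSet
  have hβ : (1 + c * τ / D)⁻¹ ^ k ∈ Icc (0 : ℝ) 1 :=
    ⟨by positivity, pow_le_one₀ (by positivity)
      (inv_le_one_of_one_le₀ (le_add_of_nonneg_right (by positivity)))⟩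
  have hstep := h.mul_volume_superlevel_sdiff_collar_le hM hu hc hc₁ hτ hcτ hD₀ hD hz huz hk₀ k
  rw [← ENNReal.ofReal_ofNat 5, ← ENNReal.ofReal_pow (by norm_num)] at hstep
  refine (measureReal_le_of_mul_sdiff_le hδ (by positivity) ?_ hS
    (measure_ne_top_of_subset (hsub _) hfin)
    (measure_ne_top_of_subset (fun x hx => hx.1) hfin) hstep).trans ?_
  · exact fun x hx => ⟨hx.1, (pow_le_pow_right₀ hM (by lia)).trans_lt hx.2⟩
  · gcongr
    exact volume_collar_le h.concave hdc hfin (by linarith) hβ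

end HasGrowth

lemma exists_lintegral_rpow_constants (E : Type*) [NormedAddCommGroup E] [InnerProductSpace ℝ E]
    [FiniteDimensional ℝ E] [MeasurableSpace E] [BorelSpace E] [Nontrivial E]
    (hM : 1 < M) (hδ : 0 < δ) (hr₀ : 0 < r₀) (hτ : 0 < τ) (hD : 0 < D) :
    ∃ ε > (0 : ℝ), ∃ C > 0, ∀ {d u : E → ℝ} {z : E}, HasGrowth M δ r₀ d u →
      ContinuousOn u {x | 0 < d x} → (∀ x, 0 < d x → ‖z - x‖ ≤ D) → 2 * τ ≤ d z → u z ≤ 1 →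
      ∫⁻ x in {x | 0 < d x}, ENNReal.ofReal (u x) ^ ε ≤ ENNReal.ofReal C := by
  set c := min (1 / 10) (r₀ / τ)
  have hc : 0 < c := by positivity
  have hcτ : c * τ ≤ r₀ := (le_div_iff₀ hτ).1 (min_le_right _ _)
  obtain ⟨k₀, hk₀⟩ := exists_nat_ge (D / (c * τ))
  rw [div_le_iff₀ (by positivity)] at hk₀
  set V := volume.real (closedBall (0 : E) D)
  obtain ⟨A, hA, σ, hσ, hdecay⟩ := exists_geometric_decay (N := dim E * V) (V := V)
    (θ := 5 ^ dim E / δ / (1 + 5 ^ dim E / δ)) (β := (1 + c * τ / D)⁻¹)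
    (by positivity) ((div_lt_one (by positivity)).2 (lt_one_add _)) (by positivity)
    (inv_lt_one_of_one_lt₀ (lt_add_of_pos_right _ (by positivity))) (by positivity)
    measureReal_nonneg
  obtain ⟨ε, hε, C, hC, hint⟩ := exists_lintegral_rpow_le_of_superlevel_decay E (V := V) hM
    (pow_pos (one_pos.trans hM) k₀) hσ.1.le hσ.2 hA measureReal_nonneg
  refine ⟨ε, hε, C, hC, fun {d u z} h hu hdist hz huz => ?_⟩
  have hΩ : MeasurableSet {x | 0 < d x} :=
    (isOpen_lt continuous_const h.lipschitz.continuous).measurableSet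
  have hball : {x | 0 < d x} ⊆ closedBall z D := fun x hx =>
    mem_closedBall'.2 ((dist_eq_norm z x).trans_le (hdist x hx))
  have hvol : volume {x | 0 < d x} ≤ volume (closedBall (0 : E) D) :=
    (measure_mono hball).trans_eq (Measure.addHaar_closedBall_center _ _ _)
  have hfin : volume {x | 0 < d x} ≠ ⊤ := (hvol.trans_lt measure_closedBall_lt_top).ne
  have hV : volume.real {x | 0 < d x} ≤ V :=
    ENNReal.toReal_mono measure_closedBall_lt_top.ne hvol
  refine hint (hu.aemeasurable hΩ) ?_ fun k => ?_
  · rwa [Measure.restrict_apply_univ, ofReal_measureReal measure_closedBall_lt_top.ne]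
  have hsub (T : ℝ) : {x | 0 < d x ∧ T < u x} ⊆ {x | 0 < d x} := fun x hx => hx.1
  have hle := hdecay (fun k => volume.real {x | 0 < d x ∧ M ^ (k₀ + k) < u x})
    ((measureReal_mono (hsub _) hfin).trans hV) (fun k => by
      refine (h.volume_superlevel_succ_le hM.le hδ hu hc (min_le_left _ _) hτ hcτ hD.le hdist hz huz
        hk₀ k).trans (add_le_add le_rfl ?_)
      rw [mul_right_comm]
      gcongr) k
  rw [Measure.restrict_apply' hΩ, inter_comm, ← pow_add]
  exact (ENNReal.le_ofReal_iff_toReal_le (measure_ne_top_of_subset (hsub _) hfin)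
    (by have := hσ.1; positivity)).2 hle

end Growth

/-! ### The local maximum principle -/

section Cutoff

variable {x₀ : E} {R m : ℝ} {k : ℕ}

/-- A quadratic cutoff function, positive exactly on `ball x₀ R` when `0 ≤ R`. -/
noncomputable def cutoff (x₀ : E) (R : ℝ) (x : E) : ℝ := R ^ 2 - ‖x - x₀‖ ^ 2

section

omit [InnerProductSpace ℝ E]

lemma cutoff_eq_mul (x : E) : cutoff x₀ R x = (R - ‖x - x₀‖) * (R + ‖x - x₀‖) := by
  rw [cutoff]
  ring

lemma cutoff_pos (hx : x ∈ ball x₀ R) : 0 < cutoff x₀ R x := by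
  have hxR := mem_ball_iff_norm.1 hx
  have := norm_nonneg (x - x₀)
  rw [cutoff_eq_mul]
  exact mul_pos (by linarith) (by linarith)

lemma cutoff_nonneg (hx : x ∈ closedBall x₀ R) : 0 ≤ cutoff x₀ R x := by
  have hxR := mem_closedBall_iff_norm.1 hx
  have := norm_nonneg (x - x₀)
  rw [cutoff_eq_mul]
  exact mul_nonneg (by linarith) (by linarith)

lemma cutoff_le_sq (x : E) : cutoff x₀ R x ≤ R ^ 2 :=
  sub_le_self _ (sq_nonneg _)

end

lemma contDiff_cutoff : ContDiff ℝ 2 (cutoff x₀ R) :=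
  contDiff_const.sub (contDiff_norm_sub_sq x₀)

lemma contDiff_cutoff_pow (k : ℕ) : ContDiff ℝ 2 (fun y => cutoff x₀ R y ^ k) :=
  contDiff_cutoff.pow k

lemma fderiv_cutoff : fderiv ℝ (cutoff x₀ R) x = -((2 : ℝ) • innerSL ℝ (x - x₀)) := by
  rw [← fderiv_norm_sub_sq]
  exact fderiv_const_sub _

lemma hessAt_cutoff (z : E) : hessAt (cutoff x₀ R) x z = -(2 * ‖z‖ ^ 2) := by
  have hsq : ContDiffAt ℝ 2 (fun y => -‖y - x₀‖ ^ 2) x := (contDiff_norm_sub_sq x₀).neg.contDiffAt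
  have hadd := hessAt_add (contDiffAt_const (c := R ^ 2)) hsq z
  rw [hessAt_const, zero_add, hessAt_neg, hessAt_norm_sub_sq] at hadd
  convert hadd using 3
  exact sub_eq_add_neg _ _

lemma fderiv_cutoff_pow_succ (k : ℕ) : fderiv ℝ (fun y => cutoff x₀ R y ^ (k + 1)) x =
    ((k + 1) * cutoff x₀ R x ^ k) • fderiv ℝ (cutoff x₀ R) x := by
  rw [fderiv_fun_pow _ (contDiff_cutoff.differentiable two_ne_zero x)]
  simp

lemma norm_fderiv_cutoff_pow_succ_le (hx : x ∈ ball x₀ R) (k : ℕ) :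
    ‖fderiv ℝ (fun y => cutoff x₀ R y ^ (k + 1)) x‖ ≤ 2 * R * (k + 1) * cutoff x₀ R x ^ k := by
  have hζ := cutoff_pos hx
  rw [fderiv_cutoff_pow_succ, norm_smul, fderiv_cutoff, norm_neg, norm_smul, innerSL_apply_norm,
    Real.norm_of_nonneg (by positivity), Real.norm_of_nonneg zero_le_two]
  calc (k + 1) * cutoff x₀ R x ^ k * (2 * ‖x - x₀‖)
      ≤ (k + 1) * cutoff x₀ R x ^ k * (2 * R) := by
        gcongr
        exact (mem_ball_iff_norm.1 hx).le
    _ = 2 * R * (k + 1) * cutoff x₀ R x ^ k := by ring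

lemma le_hessAt_cutoff_pow (hx : x ∈ ball x₀ R) (k : ℕ) (z : E) :
    -(2 * (k + 2) * cutoff x₀ R x ^ (k + 1) * ‖z‖ ^ 2) ≤
      hessAt (fun y => cutoff x₀ R y ^ (k + 2)) x z := by
  have hζ := cutoff_pos hx
  have hpow : ContDiff ℝ 2 (fun r : ℝ => r ^ (k + 2)) := contDiff_id.pow _
  have hderiv : deriv (fun r : ℝ => r ^ (k + 2)) = fun r => ((k : ℝ) + 2) * r ^ (k + 1) := by
    ext r
    simp
  have hderiv₂ : deriv (fun r : ℝ => ((k : ℝ) + 2) * r ^ (k + 1)) =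
      fun r => ((k : ℝ) + 2) * ((k + 1) * r ^ k) := by
    ext r
    simp
  have hcomp := hessAt_real_comp hpow (contDiff_cutoff (x₀ := x₀) (R := R)).contDiffAt (x := x) z
  rw [hderiv, hderiv₂, hessAt_cutoff] at hcomp
  rw [hcomp]
  have : 0 ≤ (k + 2) * ((k + 1) * cutoff x₀ R x ^ k) * (fderiv ℝ (cutoff x₀ R) x z) ^ 2 := by
    positivity
  linarith

lemma norm_fderiv_mul_le_of_le_tangent (hx : x ∈ ball x₀ R)
    (hw : ∀ y ∈ closedBall x₀ R, 0 ≤ w y)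
    (hle : ∀ y ∈ closedBall x₀ R, w y ≤ w x + fderiv ℝ w x (y - x)) :
    ‖fderiv ℝ w x‖ * (R - ‖x - x₀‖) ≤ w x := by
  have hδ : 0 < R - ‖x - x₀‖ := sub_pos.2 (mem_ball_iff_norm.1 hx)
  have hbound : ∀ z : E, ‖z‖ = 1 → -fderiv ℝ w x z ≤ w x / (R - ‖x - x₀‖) := by
    intro z hz
    have hmem : x + (R - ‖x - x₀‖) • z ∈ closedBall x₀ R := by
      rw [mem_closedBall_iff_norm, add_sub_right_comm]
      refine (norm_add_le _ _).trans ?_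
      rw [norm_smul, hz, Real.norm_of_nonneg hδ.le]
      linarith
    have htangent := (hw _ hmem).trans (hle _ hmem)
    rw [add_sub_cancel_left, map_smul, smul_eq_mul] at htangent
    rw [le_div_iff₀ hδ]
    linarith
  rw [← le_div_iff₀ hδ]
  refine ContinuousLinearMap.opNorm_le_of_unit_norm
    (div_nonneg (hw x (ball_subset_closedBall hx)) hδ.le) fun z hz => abs_le.2 ⟨?_, ?_⟩
  · linarith [hbound z hz]
  · simpa using hbound (-z) (by rwa [norm_neg])

lemma PucciPlusGe.mul_of_le {A : ℝ} (hw : PucciPlusGe lam Lam w x m) (hlam : 0 ≤ lam)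
    (hφ₂ : ContDiffAt ℝ 2 φ x) (hw₂ : ContDiffAt ℝ 2 w x) (hφ : 0 ≤ φ x) (hA : 0 ≤ A)
    (hcross : ∀ z, ‖z‖ = 1 →
      -A ≤ 2 * (fderiv ℝ φ x z * fderiv ℝ w x z) + w x * hessAt φ x z) :
    PucciPlusGe lam Lam (fun y => φ y * w y) x (φ x * m - dim E * (Lam * A)) := by
  obtain ⟨ξ, a, ha, hsum⟩ := hw
  refine ⟨ξ, a, ha, ?_⟩
  have hterm : ∀ k, φ x * (a k * hessAt w x (ξ k)) - Lam * A ≤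
      a k * hessAt (fun y => φ y * w y) x (ξ k) := by
    intro k
    rw [hessAt_mul hφ₂ hw₂]
    have hlower := mul_le_mul_of_nonneg_left (hcross (ξ k) (ξ.orthonormal.1 k))
      (hlam.trans (ha k).1)
    have hupper := mul_le_mul_of_nonneg_right (ha k).2 hA
    linarith
  calc φ x * m - dim E * (Lam * A)
      ≤ φ x * ∑ k, a k * hessAt w x (ξ k) - dim E * (Lam * A) := by gcongr
    _ = ∑ k, (φ x * (a k * hessAt w x (ξ k)) - Lam * A) := by
        simp [Finset.mul_sum, Finset.sum_sub_distrib]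
    _ ≤ _ := Finset.sum_le_sum fun k _ => hterm k

lemma norm_fderiv_cutoff_pow_mul_le {W : E → ℝ} (hx : x ∈ ball x₀ R)
    (hW : W x = cutoff x₀ R x ^ (k + 2) * w x) (hw : 0 ≤ w x)
    (hslope : ‖fderiv ℝ W x‖ * (R - ‖x - x₀‖) ≤ W x) :
    ‖fderiv ℝ W x‖ ≤ 2 * R * (cutoff x₀ R x ^ (k + 1) * w x) := by
  have hζ := cutoff_pos hx
  have hxR := (mem_ball_iff_norm.1 hx).le
  have hnorm := norm_nonneg (x - x₀)
  refine le_of_mul_le_mul_right ?_ hζ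
  calc ‖fderiv ℝ W x‖ * cutoff x₀ R x
      = ‖fderiv ℝ W x‖ * (R - ‖x - x₀‖) * (R + ‖x - x₀‖) := by rw [cutoff_eq_mul]; ring
    _ ≤ cutoff x₀ R x ^ (k + 2) * w x * (R + R) := by
        rw [← hW]
        exact mul_le_mul hslope (by linarith) (by linarith) (hW ▸ by positivity)
    _ = 2 * R * (cutoff x₀ R x ^ (k + 1) * w x) * cutoff x₀ R x := by ring

lemma cutoff_mul_norm_fderiv_le (hx : x ∈ ball x₀ R) (hw : 0 ≤ w x)
    (hw₁ : DifferentiableAt ℝ w x)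
    (hslope : ‖fderiv ℝ (fun y => cutoff x₀ R y ^ (k + 2) * w y) x‖ ≤
      2 * R * (cutoff x₀ R x ^ (k + 1) * w x)) :
    cutoff x₀ R x * ‖fderiv ℝ w x‖ ≤ 4 * R * (k + 2) * w x := by
  have hζ := cutoff_pos hx
  have hR : 0 ≤ R := (norm_nonneg _).trans (mem_ball_iff_norm.1 hx).le
  have hcutoff := norm_fderiv_cutoff_pow_succ_le hx (k + 1)
  set ζ := cutoff x₀ R x
  set Dφ := fderiv ℝ (fun y => cutoff x₀ R y ^ (k + 2)) x
  have hprod : fderiv ℝ (fun y => cutoff x₀ R y ^ (k + 2) * w y) x =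
      ζ ^ (k + 2) • fderiv ℝ w x + w x • Dφ :=
    fderiv_fun_mul ((contDiff_cutoff_pow _).differentiable two_ne_zero x) hw₁
  have hsub := norm_sub_le (fderiv ℝ (fun y => cutoff x₀ R y ^ (k + 2) * w y) x) (w x • Dφ)
  rw [hprod, add_sub_cancel_right, norm_smul, norm_smul, Real.norm_of_nonneg (by positivity),
    Real.norm_of_nonneg hw, ← hprod] at hsub
  refine le_of_mul_le_mul_left ?_ (pow_pos hζ (k + 1))
  have hwφ := mul_le_mul_of_nonneg_left hcutoff hw
  have : 0 ≤ R * (k + 1) * (ζ ^ (k + 1) * w x) := by positivity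
  push_cast at hwφ
  calc ζ ^ (k + 1) * (ζ * ‖fderiv ℝ w x‖) = ζ ^ (k + 2) * ‖fderiv ℝ w x‖ := by ring
    _ ≤ _ := by linarith

lemma le_cross_terms_cutoff_pow (hx : x ∈ ball x₀ R) (hw : 0 ≤ w x)
    (hslope : cutoff x₀ R x * ‖fderiv ℝ w x‖ ≤ 4 * R * (k + 2) * w x) {z : E} (hz : ‖z‖ = 1) :
    -(18 * R ^ 2 * (k + 2) ^ 2 * (w x * cutoff x₀ R x ^ k)) ≤
      2 * (fderiv ℝ (fun y => cutoff x₀ R y ^ (k + 2)) x z * fderiv ℝ w x z) +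
        w x * hessAt (fun y => cutoff x₀ R y ^ (k + 2)) x z := by
  have hζ := cutoff_pos hx
  have hR : 0 ≤ R := (norm_nonneg _).trans (mem_ball_iff_norm.1 hx).le
  have hcutoff := norm_fderiv_cutoff_pow_succ_le hx (k + 1)
  have hhess := mul_le_mul_of_nonneg_left (le_hessAt_cutoff_pow hx k z) hw
  have hζR := cutoff_le_sq (x₀ := x₀) (R := R) x
  push_cast at hcutoff
  rw [hz] at hhess
  set ζ := cutoff x₀ R x
  set Dφ := fderiv ℝ (fun y => cutoff x₀ R y ^ (k + 2)) x
  have hprod : |Dφ z * fderiv ℝ w x z| ≤ 8 * R ^ 2 * (k + 2) ^ 2 * (w x * ζ ^ k) := by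
    calc |Dφ z * fderiv ℝ w x z| ≤ ‖Dφ‖ * ‖fderiv ℝ w x‖ := by
          rw [abs_mul]
          gcongr
          · exact (Dφ.le_opNorm z).trans_eq (by rw [hz, mul_one])
          · exact ((fderiv ℝ w x).le_opNorm z).trans_eq (by rw [hz, mul_one])
      _ ≤ 2 * R * (k + 1 + 1) * ζ ^ (k + 1) * ‖fderiv ℝ w x‖ := by gcongr
      _ = 2 * R * (k + 2) * ζ ^ k * (ζ * ‖fderiv ℝ w x‖) := by ring
      _ ≤ 2 * R * (k + 2) * ζ ^ k * (4 * R * (k + 2) * w x) := by gcongr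
      _ = 8 * R ^ 2 * (k + 2) ^ 2 * (w x * ζ ^ k) := by ring
  have hcurv : w x * (2 * (k + 2) * ζ ^ (k + 1)) ≤ 2 * R ^ 2 * (k + 2) ^ 2 * (w x * ζ ^ k) := by
    calc w x * (2 * (k + 2) * ζ ^ (k + 1)) = 2 * (k + 2) * (w x * ζ ^ k) * ζ := by ring
      _ ≤ 2 * (k + 2) ^ 2 * (w x * ζ ^ k) * R ^ 2 := by
          gcongr
          exact le_self_pow₀ (by linarith) two_ne_zero
      _ = 2 * R ^ 2 * (k + 2) ^ 2 * (w x * ζ ^ k) := by ring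
  linarith [neg_le_of_abs_le hprod]

lemma IsSubsolutionAt.pucciPlusGe_cutoff_pow_mul {b g : E → ℝ}
    (hw : IsSubsolutionAt lam Lam b g w x) (hlam : 0 ≤ lam) (hx : x ∈ ball x₀ R) (hb : 0 ≤ b x)
    (hw₀ : 0 ≤ w x)
    (hslope : ‖fderiv ℝ (fun y => cutoff x₀ R y ^ (k + 2) * w y) x‖ * (R - ‖x - x₀‖) ≤
      cutoff x₀ R x ^ (k + 2) * w x) :
    PucciPlusGe lam Lam (fun y => cutoff x₀ R y ^ (k + 2) * w y) x
      (-(cutoff x₀ R x ^ (k + 2) * g x + 4 * R * (k + 2) * (b x * (w x * cutoff x₀ R x ^ (k + 1))) +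
        dim E * Lam * (18 * R ^ 2 * (k + 2) ^ 2) * (w x * cutoff x₀ R x ^ k))) := by
  have hζ := cutoff_pos hx
  have hgrad := cutoff_mul_norm_fderiv_le hx hw₀ (hw.contDiffAt.differentiableAt two_ne_zero)
    (norm_fderiv_cutoff_pow_mul_le hx rfl hw₀ hslope)
  refine (hw.pucciPlusGe.mul_of_le (φ := fun y => cutoff x₀ R y ^ (k + 2)) hlam
    (contDiff_cutoff_pow _).contDiffAt hw.contDiffAt (by positivity) (by positivity)
    fun z hz => le_cross_terms_cutoff_pow hx hw₀ hgrad hz).mono ?_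
  have hdrift : cutoff x₀ R x ^ (k + 1) * b x * (cutoff x₀ R x * ‖fderiv ℝ w x‖) ≤
      cutoff x₀ R x ^ (k + 1) * b x * (4 * R * (k + 2) * w x) := by gcongr
  rw [pow_succ _ (k + 1)]
  linarith

end Cutoff

section Moment

lemma rpow_le_one_add_rpow {v s ε : ℝ} (hv : 0 ≤ v) (hs : 0 ≤ s) (hsε : s ≤ ε) :
    v ^ s ≤ 1 + v ^ ε := by
  rcases le_total v 1 with hv₁ | hv₁
  · linarith [Real.rpow_le_one hv hv₁ hs, Real.rpow_nonneg hv ε]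
  · linarith [Real.rpow_le_rpow_of_exponent_le hv₁ hsε]

lemma mul_pow_le_rpow_add {n : ℕ} {q s b v : ℝ} (hn : 0 < n) (hq : n < q) (hb : 0 ≤ b)
    (hv : 0 ≤ v) (hs : n * q / (q - n) ≤ s) : (b * v) ^ n ≤ b ^ q + (1 + v ^ s) := by
  have hn₀ : (0 : ℝ) < n := by exact_mod_cast hn
  have hq₀ : 0 < q := hn₀.trans hq
  have : 0 < q - n := sub_pos.2 hq
  have hconj : (q / n).HolderConjugate (q / (q - n)) := by
    rw [Real.holderConjugate_iff]
    refine ⟨(one_lt_div₀ hn₀).2 hq, ?_⟩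
    field_simp
    ring
  have hyoung := Real.young_inequality_of_nonneg (pow_nonneg hb n) (pow_nonneg hv n) hconj
  rw [← mul_pow, ← Real.rpow_natCast b, ← Real.rpow_natCast v, ← Real.rpow_mul hb,
    ← Real.rpow_mul hv, mul_div_cancel₀ q hn₀.ne', ← mul_div_assoc] at hyoung
  have hb_le : b ^ q / (q / n) ≤ b ^ q := div_le_self (by positivity) hconj.lt.le
  have hv_le : v ^ (n * q / (q - n)) / (q / (q - n)) ≤ v ^ (n * q / (q - n)) :=
    div_le_self (by positivity) hconj.symm.lt.le
  linarith [rpow_le_one_add_rpow hv (by positivity) hs]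

lemma add_add_pow_le {a b c : ℝ} (ha : 0 ≤ a) (hb : 0 ≤ b) (hc : 0 ≤ c) (n : ℕ) :
    (a + b + c) ^ n ≤ 4 ^ n * (a ^ n + b ^ n + c ^ n) := by
  have hpow : (2 : ℝ) ^ (n - 1) ≤ 2 ^ n := pow_le_pow_right₀ one_le_two (n.sub_le 1)
  have hpow_one : (1 : ℝ) ≤ 2 ^ n := one_le_pow₀ one_le_two
  calc (a + b + c) ^ n ≤ 2 ^ (n - 1) * ((a + b) ^ n + c ^ n) := add_pow_le (by positivity) hc n
    _ ≤ 2 ^ n * (2 ^ n * (a ^ n + b ^ n) + 2 ^ n * c ^ n) := by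
        gcongr
        · exact (add_pow_le ha hb n).trans (by gcongr)
        · exact le_mul_of_one_le_left (by positivity) hpow_one
    _ = 4 ^ n * (a ^ n + b ^ n + c ^ n) := by
        rw [show (4 : ℝ) = 2 * 2 by norm_num, mul_pow]
        ring

-- A large power of the cutoff makes the drift and zeroth-order terms of `cutoff ^ (k + 2) * u`
-- integrable against an arbitrarily small power of `u = v ^ (k + 2)`.
lemma exists_add_mul_add_sq_pow_le {n : ℕ} {q ε : ℝ} (hn : 0 < n) (hq : n < q) (hε : 0 < ε) :
    ∃ k : ℕ, ∀ {f b v : ℝ}, 0 ≤ f → 0 ≤ b → 0 ≤ v →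
      (f + b * v + v ^ 2) ^ n ≤ 2 * 4 ^ n * (1 + f ^ n + b ^ q + (v ^ (k + 2)) ^ ε) := by
  obtain ⟨k, hk⟩ := exists_nat_ge (max (2 * n / ε) (n * q / (q - n) / ε))
  refine ⟨k, fun {f b v} hf hb hv => ?_⟩
  have hmono : k * ε ≤ (k + 2 : ℕ) * ε := by
    push_cast
    nlinarith
  have hk₁ : 2 * n ≤ (k + 2 : ℕ) * ε :=
    ((div_le_iff₀ hε).1 ((le_max_left _ _).trans hk)).trans hmono
  have hk₂ : n * q / (q - n) ≤ (k + 2 : ℕ) * ε :=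
    ((div_le_iff₀ hε).1 ((le_max_right _ _).trans hk)).trans hmono
  have hpow : (v ^ (k + 2)) ^ ε = v ^ ((k + 2 : ℕ) * ε) := by
    rw [← Real.rpow_natCast, ← Real.rpow_mul hv]
  have hsq : (v ^ 2) ^ n ≤ 1 + (v ^ (k + 2)) ^ ε := by
    rw [hpow, ← pow_mul, ← Real.rpow_natCast]
    exact rpow_le_one_add_rpow hv (by positivity) (by push_cast at hk₁ ⊢; exact hk₁)
  have hmul : (b * v) ^ n ≤ b ^ q + (1 + (v ^ (k + 2)) ^ ε) := by
    rw [hpow]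
    exact mul_pow_le_rpow_add hn hq hb hv hk₂
  have : 0 ≤ f ^ n + b ^ q := by positivity
  calc (f + b * v + v ^ 2) ^ n ≤ 4 ^ n * (f ^ n + (b * v) ^ n + (v ^ 2) ^ n) :=
        add_add_pow_le hf (by positivity) (by positivity) n
    _ ≤ 4 ^ n * (2 * (1 + f ^ n + b ^ q + (v ^ (k + 2)) ^ ε)) := by
        gcongr
        linarith
    _ = 2 * 4 ^ n * (1 + f ^ n + b ^ q + (v ^ (k + 2)) ^ ε) := by ring

lemma source_le_mul_pow {k : ℕ} {f b v ζ t M c₁ c₂ : ℝ} (hb : 0 ≤ b) (hv : 0 ≤ v)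
    (hζ : 0 ≤ ζ) (hζM : ζ ≤ M) (ht : 1 ≤ t) (hvζ : v * ζ ≤ t) (hc₁ : 0 ≤ c₁) (hc₂ : 0 ≤ c₂) :
    ζ ^ (k + 2) * f + c₁ * (b * (v ^ (k + 2) * ζ ^ (k + 1))) + c₂ * (v ^ (k + 2) * ζ ^ k) ≤
      (M ^ (k + 2) + c₁ + c₂) * (t ^ (k + 1) * (|f| + b * v + v ^ 2)) := by
  have ht₁ : 1 ≤ t ^ (k + 1) := one_le_pow₀ ht
  have hM : 0 ≤ M := hζ.trans hζM
  have hsource : ζ ^ (k + 2) * f ≤ M ^ (k + 2) * (t ^ (k + 1) * |f|) := by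
    refine (mul_le_mul_of_nonneg_left (le_abs_self f) (by positivity)).trans ?_
    refine mul_le_mul (pow_le_pow_left₀ hζ hζM _) ?_ (abs_nonneg f) (by positivity)
    exact le_mul_of_one_le_left (abs_nonneg f) ht₁
  have hdrift : v ^ (k + 2) * ζ ^ (k + 1) ≤ t ^ (k + 1) * v := by
    calc v ^ (k + 2) * ζ ^ (k + 1) = (v * ζ) ^ (k + 1) * v := by ring
      _ ≤ t ^ (k + 1) * v := by gcongr
  have hzeroth : v ^ (k + 2) * ζ ^ k ≤ t ^ (k + 1) * v ^ 2 := by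
    calc v ^ (k + 2) * ζ ^ k = (v * ζ) ^ k * v ^ 2 := by ring
      _ ≤ t ^ k * v ^ 2 := by gcongr
      _ ≤ t ^ (k + 1) * v ^ 2 := by
          gcongr
          exact k.le_succ
  have hsum : ∀ y ∈ ({|f|, b * v, v ^ 2} : Set ℝ), y ≤ |f| + b * v + v ^ 2 := by
    have := abs_nonneg f
    have : 0 ≤ b * v := by positivity
    have := sq_nonneg v
    rintro y (rfl | rfl | rfl) <;> linarith
  calc ζ ^ (k + 2) * f + c₁ * (b * (v ^ (k + 2) * ζ ^ (k + 1))) + c₂ * (v ^ (k + 2) * ζ ^ k)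
      ≤ M ^ (k + 2) * (t ^ (k + 1) * |f|) + c₁ * (b * (t ^ (k + 1) * v)) +
          c₂ * (t ^ (k + 1) * v ^ 2) := by gcongr
    _ = M ^ (k + 2) * (t ^ (k + 1) * |f|) + c₁ * (t ^ (k + 1) * (b * v)) +
          c₂ * (t ^ (k + 1) * v ^ 2) := by ring
    _ ≤ M ^ (k + 2) * (t ^ (k + 1) * (|f| + b * v + v ^ 2)) +
          c₁ * (t ^ (k + 1) * (|f| + b * v + v ^ 2)) +
          c₂ * (t ^ (k + 1) * (|f| + b * v + v ^ 2)) := by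
        gcongr <;> exact hsum _ (by simp)
    _ = (M ^ (k + 2) + c₁ + c₂) * (t ^ (k + 1) * (|f| + b * v + v ^ 2)) := by ring

end Moment

section LocalMax

variable {e x₀ : E} {R : ℝ} {k : ℕ} {u : E → ℝ}

/-- The product `cutoff ^ k * u` on the half-space `{y | 0 ≤ ⟪e, y⟫}`, extended by zero. -/
noncomputable def cutoffExtension (e x₀ : E) (R : ℝ) (k : ℕ) (u : E → ℝ) : E → ℝ :=
  indicator {y | 0 ≤ inner ℝ e y} fun y => cutoff x₀ R y ^ k * u y

lemma cutoffExtension_of_nonneg (hx : 0 ≤ inner ℝ e x) :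
    cutoffExtension e x₀ R k u x = cutoff x₀ R x ^ k * u x :=
  indicator_of_mem (s := {y | 0 ≤ inner ℝ e y}) hx _

lemma cutoffExtension_eventuallyEq (hx : 0 < inner ℝ e x) :
    cutoffExtension e x₀ R k u =ᶠ[𝓝 x] fun y => cutoff x₀ R y ^ k * u y := by
  have hopen : IsOpen {y : E | 0 < inner ℝ e y} := isOpen_lt continuous_const (by fun_prop)
  filter_upwards [hopen.mem_nhds hx] with y hy
  exact cutoffExtension_of_nonneg (le_of_lt hy)

lemma cutoffExtension_nonneg (hu : ∀ y ∈ halfClosedBall e x₀ R, 0 ≤ u y)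
    (hx : x ∈ closedBall x₀ R) : 0 ≤ cutoffExtension e x₀ R k u x :=
  indicator_apply_nonneg fun h => mul_nonneg (pow_nonneg (cutoff_nonneg hx) k) (hu x ⟨hx, h⟩)

lemma continuousOn_cutoffExtension (hu : ContinuousOn u (halfClosedBall e x₀ R))
    (hflat : ∀ x ∈ closedBall x₀ R, inner ℝ e x = 0 → u x = 0) :
    ContinuousOn (cutoffExtension e x₀ R k u) (closedBall x₀ R) := by
  have hinner : Continuous fun y => inner ℝ e y := by fun_prop
  have hclosed : IsClosed {y | 0 ≤ inner ℝ e y} := isClosed_le continuous_const hinner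
  rw [cutoffExtension, ← piecewise_eq_indicator]
  refine ContinuousOn.piecewise (fun y hy => ?_) ?_ continuousOn_const
  · rw [hflat y hy.1 (frontier_le_subset_eq continuous_const hinner hy.2).symm, mul_zero]
    rfl
  · rw [hclosed.closure_eq]
    exact (contDiff_cutoff_pow k).continuous.continuousOn.mul hu

lemma cutoffExtension_eq_zero (hflat : ∀ x ∈ closedBall x₀ R, inner ℝ e x = 0 → u x = 0)
    (hx : x ∈ closedBall x₀ R \ halfOpenBall e x₀ R) :
    cutoffExtension e x₀ R (k + 1) u x = 0 := by
  by_cases hin : 0 ≤ inner ℝ e x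
  · rw [cutoffExtension_of_nonneg hin]
    rcases mem_sphere_or_inner_eq_zero ⟨⟨hx.1, hin⟩, hx.2⟩ with hsphere | hzero
    · rw [cutoff, mem_sphere_iff_norm.1 hsphere, sub_self, zero_pow k.succ_ne_zero, zero_mul]
    · rw [hflat x hx.1 hzero, mul_zero]
  · exact indicator_of_notMem (s := {y | 0 ≤ inner ℝ e y}) hin _

/-- The integrand controlling a subsolution in the local maximum principle. -/
noncomputable def momentDensity (q ε : ℝ) (b f u : E → ℝ) (x : E) : ℝ≥0∞ :=
  1 + ‖f x‖ₑ ^ dim E + ENNReal.ofReal (b x) ^ q + ENNReal.ofReal (u x) ^ ε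

lemma exists_neg_laplacian_constant (E : Type*) [NormedAddCommGroup E] [InnerProductSpace ℝ E]
    [FiniteDimensional ℝ E] (hlam : 0 < lam) (hLam : 0 ≤ Lam) (hR : 0 < R) (k : ℕ) :
    ∃ A > 0, ∀ {x₀ x : E} {b f u W : E → ℝ} {t v : ℝ},
      IsSubsolutionAt lam Lam b f u x → x ∈ ball x₀ R → 0 ≤ b x →
      W =ᶠ[𝓝 x] (fun y => cutoff x₀ R y ^ (k + 2) * u y) → (∀ z, hessAt W x z ≤ 0) →
      ‖fderiv ℝ W x‖ * (R - ‖x - x₀‖) ≤ W x → 1 ≤ t → W x ≤ t ^ (k + 2) →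
      0 ≤ v → v ^ (k + 2) = u x →
      -Δ W x ≤ A * t ^ (k + 1) * (|f x| + b x * v + v ^ 2) := by
  set A := (R ^ 2) ^ (k + 2) + 4 * R * (k + 2) + dim E * Lam * (18 * R ^ 2 * (k + 2) ^ 2)
  refine ⟨lam⁻¹ * A, by positivity,
    fun {x₀ x b f u W t v} hu hx hb hW hneg hslope ht hWt hv huv => ?_⟩
  have hζ := (cutoff_pos hx).le
  have hvζ : v * cutoff x₀ R x ≤ t := by
    refine le_of_pow_le_pow_left₀ (n := k + 2) (by positivity) (by linarith) ?_
    rwa [mul_pow, huv, mul_comm, ← hW.eq_of_nhds]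
  rw [hW.fderiv_eq, hW.eq_of_nhds] at hslope
  have hpucci := (hu.pucciPlusGe_cutoff_pow_mul hlam.le hx hb (huv ▸ by positivity) hslope).congr hW
  have hlap := hpucci.mul_neg_laplacian_le hneg
  rw [← huv] at hlap
  rw [mul_assoc, mul_assoc, le_inv_mul_iff₀ hlam]
  exact hlap.trans (source_le_mul_pow hb hv hζ (cutoff_le_sq x) ht hvζ (by positivity)
    (by positivity))

lemma exists_neg_laplacian_pow_constants (E : Type*) [NormedAddCommGroup E]
    [InnerProductSpace ℝ E] [FiniteDimensional ℝ E] [Nontrivial E] (hlam : 0 < lam)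
    (hLam : 0 ≤ Lam) (hR : 0 < R) {q ε : ℝ} (hq : dim E < q) (hε : 0 < ε) :
    ∃ k : ℕ, ∃ A > 0, ∀ {x₀ x : E} {b f u W : E → ℝ} {t : ℝ},
      IsSubsolutionAt lam Lam b f u x → x ∈ ball x₀ R → 0 ≤ b x → 0 ≤ u x →
      W =ᶠ[𝓝 x] (fun y => cutoff x₀ R y ^ (k + 2) * u y) → (∀ z, hessAt W x z ≤ 0) →
      ‖fderiv ℝ W x‖ * (R - ‖x - x₀‖) ≤ W x → 1 ≤ t → W x ≤ t ^ (k + 2) →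
      ENNReal.ofReal ((-Δ W x) ^ dim E) ≤
        ENNReal.ofReal ((A * t ^ (k + 1)) ^ dim E) * momentDensity q ε b f u x := by
  have hn : 0 < dim E := finrank_pos
  have hq₀ : 0 ≤ q := (Nat.cast_nonneg _).trans hq.le
  obtain ⟨k, hyoung⟩ := exists_add_mul_add_sq_pow_le hn hq hε
  obtain ⟨A, hA, hlap⟩ := exists_neg_laplacian_constant E hlam hLam hR k
  refine ⟨k, 8 * A, by positivity,
    fun {x₀ x b f u W t} hu hx hb hu₀ hW hneg hslope ht hWt => ?_⟩
  set v := u x ^ ((k + 2 : ℕ) : ℝ)⁻¹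
  have hv : 0 ≤ v := Real.rpow_nonneg hu₀ _
  have huv : v ^ (k + 2) = u x := Real.rpow_inv_natCast_pow hu₀ (Nat.succ_ne_zero _)
  have hmoment : ENNReal.ofReal (1 + |f x| ^ dim E + b x ^ q + u x ^ ε) =
      momentDensity q ε b f u x := by
    rw [ENNReal.ofReal_add (by positivity) (by positivity),
      ENNReal.ofReal_add (by positivity) (by positivity),
      ENNReal.ofReal_add (by positivity) (by positivity), ENNReal.ofReal_one,
      ENNReal.ofReal_pow (abs_nonneg _), ← Real.enorm_eq_ofReal_abs,
      ← ENNReal.ofReal_rpow_of_nonneg hb hq₀, ← ENNReal.ofReal_rpow_of_nonneg hu₀ hε.le,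
      momentDensity]
  rw [← hmoment, ← ENNReal.ofReal_mul (by positivity)]
  refine ENNReal.ofReal_le_ofReal ?_
  have htwo : (2 : ℝ) ≤ 2 ^ dim E := le_self_pow₀ one_le_two hn.ne'
  calc (-Δ W x) ^ dim E ≤ (A * t ^ (k + 1) * (|f x| + b x * v + v ^ 2)) ^ dim E :=
        pow_le_pow_left₀ (neg_nonneg.2 (laplacian_nonpos hneg))
          (hlap hu hx hb hW hneg hslope ht hWt hv huv) _
    _ = (A * t ^ (k + 1)) ^ dim E * (|f x| + b x * v + v ^ 2) ^ dim E := mul_pow _ _ _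
    _ ≤ (A * t ^ (k + 1)) ^ dim E *
          (2 ^ dim E * 4 ^ dim E * (1 + |f x| ^ dim E + b x ^ q + u x ^ ε)) := by
        gcongr
        rw [← huv]
        exact (hyoung (abs_nonneg _) hb hv).trans (by gcongr)
    _ = (8 * A * t ^ (k + 1)) ^ dim E * (1 + |f x| ^ dim E + b x ^ q + u x ^ ε) := by
        rw [show (8 : ℝ) = 2 * 4 by norm_num]
        simp only [mul_pow]
        ring

lemma le_of_pow_succ_bound {n k : ℕ} {c t A I : ℝ} (hn : n ≠ 0) (hc : 0 < c) (ht : 1 ≤ t)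
    (h : (c * t ^ (k + 2)) ^ n ≤ (A * t ^ (k + 1)) ^ n * I) : t ≤ (A / c) ^ n * I := by
  have : 0 < t := by linarith
  have hmul : t ^ n * (c * t ^ (k + 1)) ^ n ≤ (A / c) ^ n * I * (c * t ^ (k + 1)) ^ n := by
    calc t ^ n * (c * t ^ (k + 1)) ^ n = (c * t ^ (k + 2)) ^ n := by
          rw [← mul_pow]
          ring
      _ ≤ (A * t ^ (k + 1)) ^ n * I := h
      _ = (A / c) ^ n * I * (c * t ^ (k + 1)) ^ n := by
          rw [mul_right_comm, ← mul_pow]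
          field_simp
  exact (le_self_pow₀ ht hn).trans (le_of_mul_le_mul_right hmul (by positivity))

variable [MeasurableSpace E]

lemma IsHalfBallSubsolution.continuousOn_cutoffExtension {b f : E → ℝ}
    (hu : IsHalfBallSubsolution lam Lam e x₀ R b f u)
    (hu₀ : ∀ x ∈ halfClosedBall e x₀ R, 0 ≤ u x) :
    ContinuousOn (cutoffExtension e x₀ R k u) (closedBall x₀ R) :=
  BoundaryHarnack.continuousOn_cutoffExtension hu.continuousOn fun x hx h =>
    (hu.nonpos_of_inner_eq_zero x hx h).antisymm (hu₀ x ⟨hx, h.ge⟩)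

lemma IsHalfBallSubsolution.contDiffAt_cutoffExtension {b f : E → ℝ}
    (hu : IsHalfBallSubsolution lam Lam e x₀ R b f u) (hx : x ∈ halfOpenBall e x₀ R) :
    ContDiffAt ℝ 2 (cutoffExtension e x₀ R k u) x :=
  ((contDiff_cutoff_pow _).contDiffAt.mul (hu.isSubsolutionAt x hx).contDiffAt)
    |>.congr_of_eventuallyEq (cutoffExtension_eventuallyEq hx.2)

variable [FiniteDimensional ℝ E] [BorelSpace E]

lemma IsHalfBallSubsolution.volume_ball_le_lintegral_cutoffExtension {b f : E → ℝ} {x₁ : E}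
    (hu : IsHalfBallSubsolution lam Lam e x₀ R b f u)
    (hu₀ : ∀ x ∈ halfClosedBall e x₀ R, 0 ≤ u x) (hR : 0 < R) (hx₁ : x₁ ∈ closedBall x₀ R)
    (hpos : 0 < cutoffExtension e x₀ R (k + 1) u x₁) :
    volume (ball (0 : E) (cutoffExtension e x₀ R (k + 1) u x₁ / (3 * R))) ≤
      ∫⁻ x in contactSet (closedBall x₀ R) (halfOpenBall e x₀ R)
          (cutoffExtension e x₀ R (k + 1) u x₁ / (3 * R)) (cutoffExtension e x₀ R (k + 1) u),
        ENNReal.ofReal ((-Δ (cutoffExtension e x₀ R (k + 1) u) x) ^ dim E) := by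
  have hflat : ∀ x ∈ closedBall x₀ R, inner ℝ e x = 0 → u x = 0 := fun x hx h =>
    (hu.nonpos_of_inner_eq_zero x hx h).antisymm (hu₀ x ⟨hx, h.ge⟩)
  refine volume_ball_le_lintegral_contactSet isOpen_halfOpenBall
    (fun x hx => ball_subset_closedBall hx.1) (hu.continuousOn_cutoffExtension hu₀)
    (fun x hx _ => hu.contDiffAt_cutoffExtension hx) (isCompact_closedBall x₀ R)
    (fun x hx => (cutoffExtension_eq_zero hflat hx).le) (d := 2 * R) (fun x hx y hy => ?_) hx₁ ?_
  · linarith [dist_triangle_right x y x₀, mem_closedBall.1 hx, mem_closedBall.1 hy]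
  · field_simp
    linarith

lemma lintegral_contactSet_le {K U : Set E} {h : ℝ} {G₁ G₂ : E → ℝ≥0∞} {c : ℝ≥0∞}
    (hmeas : MeasurableSet (contactSet K U h w)) (hc : c ≠ ∞)
    (hG : ∀ x ∈ contactSet K U h w, G₁ x ≤ c * G₂ x) :
    ∫⁻ x in contactSet K U h w, G₁ x ≤ c * ∫⁻ x in U, G₂ x := by
  refine (setLIntegral_mono' hmeas hG).trans ?_
  rw [lintegral_const_mul' _ _ hc]
  gcongr
  exact fun x hx => hx.1

lemma exists_cutoffExtension_le (E : Type*) [NormedAddCommGroup E] [InnerProductSpace ℝ E]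
    [FiniteDimensional ℝ E] [MeasurableSpace E] [BorelSpace E] [Nontrivial E] (hlam : 0 < lam)
    (hLam : 0 ≤ Lam) (hR : 0 < R) {q ε I : ℝ} (hq : dim E < q) (hε : 0 < ε) (hI : 0 ≤ I) :
    ∃ k : ℕ, ∃ C > 0, ∀ {e x₀ : E} {b f u : E → ℝ}, IsHalfBallSubsolution lam Lam e x₀ R b f u →
      (∀ x ∈ halfClosedBall e x₀ R, 0 ≤ u x) →
      ∫⁻ x in halfOpenBall e x₀ R, momentDensity q ε b f u x ≤ ENNReal.ofReal I →
      ∀ x ∈ closedBall x₀ R, cutoffExtension e x₀ R (k + 2) u x ≤ C := by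
  obtain ⟨k, A, hA, hlap⟩ := exists_neg_laplacian_pow_constants E hlam hLam hR hq hε
  set c := ballRoot E / (3 * R)
  have hc : 0 < c := div_pos ballRoot_pos (by positivity)
  refine ⟨k, (1 + (A / c) ^ dim E * I) ^ (k + 2), by positivity,
    fun {e x₀ b f u} hu hu₀ hmoment => ?_⟩
  set W := cutoffExtension e x₀ R (k + 2) u
  have hWcont : ContinuousOn W (closedBall x₀ R) := hu.continuousOn_cutoffExtension hu₀
  have hWdiff : ∀ x ∈ halfOpenBall e x₀ R, 0 < W x → ContDiffAt ℝ 2 W x :=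
    fun x hx _ => hu.contDiffAt_cutoffExtension hx
  have hU : halfOpenBall e x₀ R ⊆ closedBall x₀ R := fun x hx => ball_subset_closedBall hx.1
  obtain ⟨x₁, hx₁, hmax⟩ := (isCompact_closedBall x₀ R).exists_isMaxOn
    ⟨x₀, mem_closedBall_self hR.le⟩ hWcont
  suffices h : W x₁ ≤ (1 + (A / c) ^ dim E * I) ^ (k + 2) from fun x hx => (hmax hx).trans h
  rcases le_total (W x₁) 1 with hle | hle
  · exact hle.trans (one_le_pow₀ (le_add_of_nonneg_right (by positivity)))
  set t := W x₁ ^ ((k + 2 : ℕ) : ℝ)⁻¹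
  have ht : 1 ≤ t := Real.one_le_rpow hle (by positivity)
  have htW : t ^ (k + 2) = W x₁ := Real.rpow_inv_natCast_pow (by linarith) (Nat.succ_ne_zero _)
  have hvol : ENNReal.ofReal (c * t ^ (k + 2)) ^ dim E ≤
      ENNReal.ofReal ((A * t ^ (k + 1)) ^ dim E) * ENNReal.ofReal I := by
    calc ENNReal.ofReal (c * t ^ (k + 2)) ^ dim E
        = volume (ball (0 : E) (W x₁ / (3 * R))) := by
          rw [volume_ball_eq_ofReal_pow 0 (by positivity), htW, mul_comm_div]
      _ ≤ ∫⁻ x in contactSet (closedBall x₀ R) (halfOpenBall e x₀ R) (W x₁ / (3 * R)) W,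
            ENNReal.ofReal ((-Δ W x) ^ dim E) :=
          hu.volume_ball_le_lintegral_cutoffExtension hu₀ hR hx₁ (by linarith)
      _ ≤ ENNReal.ofReal ((A * t ^ (k + 1)) ^ dim E) *
            ∫⁻ x in halfOpenBall e x₀ R, momentDensity q ε b f u x :=
          lintegral_contactSet_le (measurableSet_contactSet isOpen_halfOpenBall hU hWcont hWdiff)
            ENNReal.ofReal_ne_top fun x hx => hlap (hu.isSubsolutionAt x hx.1) hx.1.1
              (hu.drift_nonneg x) (hu₀ x (halfOpenBall_subset_halfClosedBall hx.1))
              (cutoffExtension_eventuallyEq hx.1.2)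
              (hessAt_nonpos_of_mem_contactSet isOpen_halfOpenBall hU hWdiff hx)
              (norm_fderiv_mul_le_of_le_tangent hx.1.1 (fun y => cutoffExtension_nonneg hu₀)
                hx.2.2.1) ht (htW ▸ hmax (hU hx.1))
      _ ≤ ENNReal.ofReal ((A * t ^ (k + 1)) ^ dim E) * ENNReal.ofReal I := by gcongr
  rw [← ENNReal.ofReal_pow (by positivity), ← ENNReal.ofReal_mul (by positivity),
    ENNReal.ofReal_le_ofReal_iff (by positivity)] at hvol
  rw [← htW]
  gcongr
  linarith [le_of_pow_succ_bound finrank_pos.ne' hc ht hvol]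

theorem exists_local_max_constant (E : Type*) [NormedAddCommGroup E] [InnerProductSpace ℝ E]
    [FiniteDimensional ℝ E] [MeasurableSpace E] [BorelSpace E] [Nontrivial E] (hlam : 0 < lam)
    (hLam : 0 ≤ Lam) {ρ q ε I : ℝ} (hρ : 0 ≤ ρ) (hρR : ρ < R) (hq : dim E < q) (hε : 0 < ε)
    (hI : 0 ≤ I) :
    ∃ C > 0, ∀ {e x₀ : E} {b f u : E → ℝ}, IsHalfBallSubsolution lam Lam e x₀ R b f u →
      (∀ x ∈ halfClosedBall e x₀ R, 0 ≤ u x) →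
      ∫⁻ x in halfOpenBall e x₀ R, momentDensity q ε b f u x ≤ ENNReal.ofReal I →
      ∀ x ∈ halfClosedBall e x₀ ρ, u x ≤ C := by
  obtain ⟨k, C, hC, hbound⟩ := exists_cutoffExtension_le E hlam hLam (hρ.trans_lt hρR) hq hε hI
  have hζ : 0 < R ^ 2 - ρ ^ 2 := sub_pos.2 (pow_lt_pow_left₀ hρR hρ two_ne_zero)
  refine ⟨C / (R ^ 2 - ρ ^ 2) ^ (k + 2), by positivity, fun {e x₀ b f u} hu hu₀ hmoment x hx => ?_⟩
  have hxR : x ∈ closedBall x₀ R := closedBall_subset_closedBall hρR.le hx.1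
  have hle := hbound hu hu₀ hmoment x hxR
  rw [cutoffExtension_of_nonneg hx.2] at hle
  have hcutoff : R ^ 2 - ρ ^ 2 ≤ cutoff x₀ R x := by
    rw [cutoff]
    gcongr
    exact mem_closedBall_iff_norm.1 hx.1
  rw [le_div_iff₀ (by positivity), mul_comm]
  refine hle.trans' ?_
  gcongr
  exact hu₀ x ⟨hxR, hx.2⟩

end LocalMax

/-! ### The Harnack inequality for solutions -/

variable {e x₀ : E} {b f u : E → ℝ} {α B q K d₀ F : ℝ}

omit [InnerProductSpace ℝ E] in
lemma norm_lt_two_of_mem_closedBall {r : ℝ} (hr : ‖x₀‖ + r < 2) (hx : x ∈ closedBall x₀ r) :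
    ‖x‖ < 2 := by
  linarith [norm_le_norm_add_norm_sub' x x₀, mem_closedBall_iff_norm.1 hx]

lemma halfOpenBall_subset_halfOpenBall_two {r : ℝ} (hr : ‖x₀‖ + r < 2) :
    halfOpenBall e x₀ r ⊆ halfOpenBall e 0 2 := fun _ hx =>
  ⟨mem_ball_zero_iff.2 (norm_lt_two_of_mem_closedBall hr (ball_subset_closedBall hx.1)), hx.2⟩

section Solution

/-- The positive solutions considered here, in the half-ball of radius 2: both `u` and `-u` are
subsolutions with drift `b` and source `f`, and `u` vanishes on the flat part of the boundary. -/
structure IsPositiveSolution [MeasurableSpace E] (lam Lam : ℝ) (e : E) (b f u : E → ℝ) : Prop where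
  norm_eq_one : ‖e‖ = 1
  continuousOn : ContinuousOn u {x | ‖x‖ < 2 ∧ 0 ≤ inner ℝ e x}
  eq_zero : ∀ x, ‖x‖ < 2 → inner ℝ e x = 0 → u x = 0
  pos : ∀ x ∈ halfOpenBall e 0 2, 0 < u x
  measurable_drift : Measurable b
  measurable_source : Measurable f
  drift_nonneg : ∀ x, 0 ≤ b x
  isSubsolutionAt : ∀ x ∈ halfOpenBall e 0 2, IsSubsolutionAt lam Lam b f u x
  isSubsolutionAt_neg : ∀ x ∈ halfOpenBall e 0 2, IsSubsolutionAt lam Lam b f (fun y => -u y) x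

variable [MeasurableSpace E]

namespace IsPositiveSolution

lemma nonneg (hu : IsPositiveSolution lam Lam e b f u) (hx : ‖x‖ < 2) (hin : 0 ≤ inner ℝ e x) :
    0 ≤ u x := by
  rcases hin.eq_or_lt with h | h
  · exact (hu.eq_zero x hx h.symm).ge
  · exact (hu.pos x ⟨mem_ball_zero_iff.2 hx, h⟩).le

lemma const_mul {c : ℝ} (hu : IsPositiveSolution lam Lam e b f u) (hc : 0 < c) :
    IsPositiveSolution lam Lam e b (fun x => c * f x) (fun x => c * u x) where
  __ := hu
  continuousOn := continuousOn_const.mul hu.continuousOn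
  eq_zero x hx hin := by rw [hu.eq_zero x hx hin, mul_zero]
  pos x hx := mul_pos hc (hu.pos x hx)
  measurable_source := hu.measurable_source.const_mul c
  isSubsolutionAt x hx := (hu.isSubsolutionAt x hx).const_mul hc.le
  isSubsolutionAt_neg x hx := by
    simpa only [mul_neg] using (hu.isSubsolutionAt_neg x hx).const_mul hc.le

variable {r : ℝ}

lemma isHalfBallSubsolution (hu : IsPositiveSolution lam Lam e b f u) (hx₀ : inner ℝ e x₀ = 0)
    (hr : ‖x₀‖ + r < 2) : IsHalfBallSubsolution lam Lam e x₀ r b f u where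
  __ := hu
  inner_center := hx₀
  continuousOn := hu.continuousOn.mono fun _ hx => ⟨norm_lt_two_of_mem_closedBall hr hx.1, hx.2⟩
  nonpos_of_inner_eq_zero x hx hin := (hu.eq_zero x (norm_lt_two_of_mem_closedBall hr hx) hin).le
  isSubsolutionAt x hx := hu.isSubsolutionAt x (halfOpenBall_subset_halfOpenBall_two hr hx)

lemma isHalfBallSupersolution (hu : IsPositiveSolution lam Lam e b f u) (hx₀ : inner ℝ e x₀ = 0)
    (hr : ‖x₀‖ + r < 2) : IsHalfBallSupersolution lam Lam e x₀ r b f u where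
  __ := hu
  inner_center := hx₀
  continuousOn := (hu.isHalfBallSubsolution hx₀ hr).continuousOn
  nonneg _ hx := hu.nonneg (norm_lt_two_of_mem_closedBall hr hx.1) hx.2
  isSubsolutionAt x hx := hu.isSubsolutionAt_neg x (halfOpenBall_subset_halfOpenBall_two hr hx)

lemma isBallSupersolution (hu : IsPositiveSolution lam Lam e b f u)
    (h : closedBall x₀ r ⊆ halfOpenBall e 0 2) : IsBallSupersolution lam Lam x₀ r b f u where
  __ := hu
  continuousOn := hu.continuousOn.mono fun _ hx =>
    ⟨mem_ball_zero_iff.1 (h hx).1, le_of_lt (α := ℝ) (h hx).2⟩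
  nonneg x hx := (hu.pos x (h hx)).le
  isSubsolutionAt x hx := hu.isSubsolutionAt_neg x (h (ball_subset_closedBall hx))

end IsPositiveSolution

variable [FiniteDimensional ℝ E] [BorelSpace E]

/-- The bounds on the coefficients in terms of which the constant in the Harnack inequality is
controlled: `B` and `K` bound the drift, `F` the source, whose scale-invariant bound is only
available near the flat boundary. -/
structure HasCoeffBounds (α B q K d₀ : ℝ) (e : E) (b f : E → ℝ) (F : ℝ) : Prop where
  drift_const_nonneg : 0 ≤ B
  source_const_nonneg : 0 ≤ F
  hasMorreyBound_drift : ∀ x r, HasMorreyBound α B r b x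
  lintegral_drift_le : ∫⁻ x, ENNReal.ofReal (b x) ^ q ≤ ENNReal.ofReal K
  dimNorm_source_le : dimNorm f univ ≤ ENNReal.ofReal F
  hasMorreyBound_source : ∀ x, inner ℝ e x = 0 → HasMorreyBound α F d₀ f x

lemma HasCoeffBounds.const_mul {c : ℝ} (h : HasCoeffBounds α B q K d₀ e b f F) (hc : 0 ≤ c) :
    HasCoeffBounds α B q K d₀ e b (fun x => c * f x) (c * F) where
  __ := h
  source_const_nonneg := mul_nonneg hc h.source_const_nonneg
  dimNorm_source_le := by
    rw [dimNorm_const_mul, abs_of_nonneg hc, ENNReal.ofReal_mul hc]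
    gcongr
    exact h.dimNorm_source_le
  hasMorreyBound_source x hx ρ hρ hρd := by
    rw [dimNorm_const_mul, abs_of_nonneg hc, mul_left_comm, ENNReal.ofReal_mul hc]
    gcongr
    exact h.hasMorreyBound_source x hx ρ hρ hρd

end Solution

section Depth

/-- A concave function equal to the distance to the boundary on the half-ball of radius 2. -/
noncomputable def halfBallDepth (e x : E) : ℝ := min (2 - ‖x‖) (inner ℝ e x)

lemma halfBallDepth_pos_iff : 0 < halfBallDepth e x ↔ x ∈ halfOpenBall e 0 2 := by
  simp [halfBallDepth, halfOpenBall]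

lemma lipschitzWith_halfBallDepth (he : ‖e‖ = 1) : LipschitzWith 1 (halfBallDepth e) := by
  have hnorm : LipschitzWith 1 fun x : E => 2 - ‖x‖ := by
    simpa using (LipschitzWith.const (2 : ℝ)).sub lipschitzWith_one_norm
  have hinner : LipschitzWith 1 fun x : E => inner ℝ e x :=
    LipschitzWith.of_dist_le_mul fun x y => by
      rw [Real.dist_eq, ← inner_sub_right, dist_eq_norm, NNReal.coe_one, ← he]
      exact abs_real_inner_le_norm e (x - y)
  have hmin := hnorm.min hinner
  rwa [max_self] at hmin

lemma concaveOn_halfBallDepth : ConcaveOn ℝ univ (halfBallDepth e) :=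
  ((concaveOn_const 2 convex_univ).sub convexOn_univ_norm).inf
    ((innerSL ℝ e).toLinearMap.concaveOn convex_univ)

lemma halfBallDepth_sub_le (he : ‖e‖ = 1) {r : ℝ} (hx : x ∈ closedBall x₀ r) :
    halfBallDepth e x₀ - r ≤ halfBallDepth e x := by
  have := (lipschitzWith_halfBallDepth he).le_add_mul x₀ x
  rw [NNReal.coe_one, one_mul, dist_comm] at this
  linarith [mem_closedBall.1 hx]

lemma inner_sub_inner_smul (he : ‖e‖ = 1) (x : E) : inner ℝ e (x - inner ℝ e x • e) = 0 := by
  rw [inner_sub_right, inner_smul_right, real_inner_self_eq_norm_sq, he]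
  ring

lemma norm_sub_inner_smul_le (he : ‖e‖ = 1) (x : E) : ‖x - inner ℝ e x • e‖ ≤ ‖x‖ := by
  refine le_of_sq_le_sq ?_ (norm_nonneg x)
  rw [norm_sub_sq_real, inner_smul_right, norm_smul, he, real_inner_comm, mul_one,
    Real.norm_eq_abs, sq_abs]
  linarith [sq_nonneg (inner ℝ x e)]

end Depth

section Harnack

lemma exists_forall_rpow_mul_le {ε : ℝ} (hα : 0 < α) (B : ℝ) (hε : 0 < ε) :
    ∃ r₀ ∈ Ioc (0 : ℝ) 1, ∀ r ∈ Icc 0 r₀, r ^ α * B ≤ ε := by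
  have hcont : ContinuousAt (fun r : ℝ => r ^ α * B) 0 :=
    (Real.continuousAt_rpow_const 0 α (Or.inr hα.le)).mul continuousAt_const
  have hsmall : ∀ᶠ r in 𝓝 (0 : ℝ), r ^ α * B < ε := by
    refine hcont.eventually_lt_const ?_
    simpa [Real.zero_rpow hα.ne'] using hε
  obtain ⟨r₀, hr₀, hball⟩ := Metric.eventually_nhds_iff.1 hsmall
  refine ⟨min 1 (r₀ / 2), ⟨by positivity, min_le_left _ _⟩, fun r hr => (hball ?_).le⟩
  rw [Real.dist_0_eq_abs, abs_of_nonneg hr.1]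
  linarith [hr.2.trans (min_le_right _ _)]

lemma exists_hasGrowth_constants (E : Type*) [NormedAddCommGroup E] [InnerProductSpace ℝ E]
    [FiniteDimensional ℝ E] [MeasurableSpace E] [BorelSpace E] [Nontrivial E] (hlam : 0 < lam)
    (hLam : 0 < Lam) (hα : 0 < α) (B q K d₀ : ℝ) :
    ∃ M > 1, ∃ δ > 0, ∃ r₀ > 0, ∃ ε > 0, ∀ {e : E} {b f u : E → ℝ} {F : ℝ},
      IsPositiveSolution lam Lam e b f u → HasCoeffBounds α B q K d₀ e b f F → F ≤ ε →
      HasGrowth M δ r₀ (halfBallDepth e) u := by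
  obtain ⟨M, hM, δ, hδ, κ, hκ, ε, hε, hgrowth⟩ := exists_growth_constants E hlam hLam
  obtain ⟨r₀, hr₀, hsmall⟩ := exists_forall_rpow_mul_le hα B hκ
  refine ⟨M, hM, δ, hδ.1, r₀ / 5, by linarith [hr₀.1], ε, hε, fun {e b f u F} hu hbf hF =>
    ⟨lipschitzWith_halfBallDepth hu.norm_eq_one, concaveOn_halfBallDepth,
      fun {x r t} hr hrr₀ hx ht => ?_⟩⟩
  have hsub : closedBall x (5 * r) ⊆ halfOpenBall e 0 2 := fun y hy =>
    halfBallDepth_pos_iff.1 (by linarith [halfBallDepth_sub_le hu.norm_eq_one hy])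
  refine hgrowth (hu.isBallSupersolution hsub) hr (by linarith) ?_ ?_
  · refine (hbf.hasMorreyBound_drift x (5 * r) (5 * r) (by linarith) le_rfl).trans ?_
    exact ENNReal.ofReal_le_ofReal (hsmall _ ⟨by linarith, by linarith⟩)
  · refine (dimNorm_mono_set (subset_univ _)).trans (hbf.dimNorm_source_le.trans ?_)
    refine ENNReal.ofReal_le_ofReal (hF.trans ?_)
    rw [mul_div_assoc]
    refine le_mul_of_one_le_right hε.le ((one_le_div hr).2 ?_)
    linarith [hr₀.2]

variable [FiniteDimensional ℝ E] [MeasurableSpace E] [BorelSpace E] [Nontrivial E]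

lemma HasCoeffBounds.lintegral_momentDensity_le {ε I : ℝ} {S : Set E}
    (hbf : HasCoeffBounds α B q K d₀ e b f F) (hb : Measurable b) (hf : Measurable f)
    (hF : F ≤ 1) (hK : 0 ≤ K) (hI : 0 ≤ I) (hS : S ⊆ closedBall 0 2)
    (hu : ∫⁻ x in S, ENNReal.ofReal (u x) ^ ε ≤ ENNReal.ofReal I) :
    ∫⁻ x in S, momentDensity q ε b f u x ≤
      ENNReal.ofReal (volume.real (closedBall (0 : E) 2) + 1 + K + I) := by
  have hvol : volume S ≤ ENNReal.ofReal (volume.real (closedBall (0 : E) 2)) := by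
    rw [ofReal_measureReal (isCompact_closedBall _ _).measure_lt_top.ne]
    exact measure_mono hS
  have hsource : ∫⁻ x in S, ‖f x‖ₑ ^ dim E ≤ ENNReal.ofReal 1 := by
    rw [lintegral_enorm_pow_dim, ENNReal.ofReal_one]
    refine pow_le_one₀ zero_le ?_
    exact (dimNorm_mono_set (subset_univ S)).trans
      (hbf.dimNorm_source_le.trans (ENNReal.ofReal_le_one.2 hF))
  have hdrift : ∫⁻ x in S, ENNReal.ofReal (b x) ^ q ≤ ENNReal.ofReal K :=
    (setLIntegral_le_lintegral _ _).trans hbf.lintegral_drift_le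
  simp only [momentDensity]
  rw [lintegral_add_left (by fun_prop), lintegral_add_left (by fun_prop),
    lintegral_add_left (by fun_prop), setLIntegral_one, ENNReal.ofReal_add (by positivity) hI,
    ENNReal.ofReal_add (by positivity) hK, ENNReal.ofReal_add (by positivity) one_pos.le]
  gcongr

lemma exists_interior_harnack_constants (E : Type*) [NormedAddCommGroup E]
    [InnerProductSpace ℝ E] [FiniteDimensional ℝ E] [MeasurableSpace E] [BorelSpace E]
    [Nontrivial E] {δ : ℝ} (hlam : 0 < lam) (hLam : 0 < Lam) (hα : 0 < α) (hq : dim E < q)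
    (hK : 0 ≤ K) (hδ : 0 < δ) (B d₀ : ℝ) :
    ∃ ε > 0, ∃ C > 0, ∀ {e z : E} {b f u : E → ℝ} {F : ℝ},
      IsPositiveSolution lam Lam e b f u → HasCoeffBounds α B q K d₀ e b f F → F ≤ ε →
      δ ≤ halfBallDepth e z → u z ≤ 1 → ∀ x ∈ halfClosedBall e 0 (9 / 5), u x ≤ C := by
  obtain ⟨M, hM, η, hη, r₀, hr₀, κ, hκ, hgrowth⟩ :=
    exists_hasGrowth_constants E hlam hLam hα B q K d₀
  obtain ⟨ε, hε, I, hI, hmoment⟩ :=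
    exists_lintegral_rpow_constants E hM hη hr₀ (half_pos hδ) (four_pos (α := ℝ))
  obtain ⟨C, hC, hmax⟩ := exists_local_max_constant E hlam hLam.le (ρ := 9 / 5) (R := 19 / 10)
    (I := volume.real (closedBall (0 : E) 2) + 1 + K + I) (by norm_num) (by norm_num) hq hε
    (by positivity)
  refine ⟨min κ 1, by positivity, C, hC, fun {e z b f u F} hu hbf hF hz huz => ?_⟩
  have hsub : {x : E | 0 < halfBallDepth e x} = halfOpenBall e 0 2 := by
    ext x
    exact halfBallDepth_pos_iff
  have hnorm : ‖(0 : E)‖ + 19 / 10 < 2 := by norm_num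
  have hint := hmoment (hgrowth hu hbf (hF.trans (min_le_left _ _)))
    (hu.continuousOn.mono fun x hx => by
      rw [hsub] at hx
      exact ⟨mem_ball_zero_iff.1 hx.1, le_of_lt (α := ℝ) hx.2⟩)
    (fun x hx => ?_) (by linarith) huz
  · rw [hsub] at hint
    refine hmax (hu.isHalfBallSubsolution (inner_zero_right e) hnorm)
      (hu.isHalfBallSupersolution (inner_zero_right e) hnorm).nonneg ?_
    refine hbf.lintegral_momentDensity_le hu.measurable_drift hu.measurable_source
      (hF.trans (min_le_right _ _)) hK hI.le
      (fun x hx => closedBall_subset_closedBall (by norm_num) (ball_subset_closedBall hx.1)) ?_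
    exact (lintegral_mono_set (halfOpenBall_subset_halfOpenBall_two hnorm)).trans hint
  · have hz₂ := mem_ball_zero_iff.1 (halfBallDepth_pos_iff.1 (hδ.trans_le hz)).1
    have hx₂ := mem_ball_zero_iff.1 (halfBallDepth_pos_iff.1 hx).1
    linarith [norm_sub_le z x]

lemma exists_interior_harnack_constant (E : Type*) [NormedAddCommGroup E]
    [InnerProductSpace ℝ E] [FiniteDimensional ℝ E] [MeasurableSpace E] [BorelSpace E]
    [Nontrivial E] {δ : ℝ} (hlam : 0 < lam) (hLam : 0 < Lam) (hα : 0 < α) (hq : dim E < q)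
    (hK : 0 ≤ K) (hδ : 0 < δ) (B d₀ : ℝ) :
    ∃ C > 0, ∀ {e z : E} {b f u : E → ℝ} {F : ℝ},
      IsPositiveSolution lam Lam e b f u → HasCoeffBounds α B q K d₀ e b f F →
      δ ≤ halfBallDepth e z → ∀ x ∈ halfClosedBall e 0 (9 / 5), u x ≤ C * (u z + F) := by
  obtain ⟨ε, hε, C, hC, hbound⟩ :=
    exists_interior_harnack_constants E hlam hLam hα hq hK hδ B d₀
  refine ⟨C * (1 + ε⁻¹), by positivity, fun {e z b f u F} hu hbf hz x hx => ?_⟩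
  have huz : 0 < u z := hu.pos z (halfBallDepth_pos_iff.1 (hδ.trans_le hz))
  have hF := hbf.source_const_nonneg
  set m := u z + ε⁻¹ * F
  have hm : 0 < m := by positivity
  have hscaled : m⁻¹ * u x ≤ C := by
    refine hbound (hu.const_mul (inv_pos.2 hm)) (hbf.const_mul (inv_pos.2 hm).le) ?_ hz ?_ x hx
    · rw [inv_mul_le_iff₀ hm, add_mul, mul_right_comm, inv_mul_cancel₀ hε.ne', one_mul]
      exact le_add_of_nonneg_left (by positivity)
    · rw [inv_mul_le_iff₀ hm, mul_one]
      exact le_add_of_nonneg_right (by positivity)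
  rw [inv_mul_le_iff₀ hm, mul_comm] at hscaled
  refine hscaled.trans ?_
  rw [mul_assoc]
  gcongr
  have : 0 ≤ ε⁻¹ * u z := by positivity
  linarith

lemma exists_touching_near_foot_constants (E : Type*) [NormedAddCommGroup E]
    [InnerProductSpace ℝ E] [FiniteDimensional ℝ E] [MeasurableSpace E] [BorelSpace E]
    [Nontrivial E] (hlam : 0 < lam) (hLam : 0 < Lam) (hα : 0 < α) (hd₀ : 0 < d₀) (B q K : ℝ) :
    ∃ h ∈ Ioc (0 : ℝ) (1 / 8), ∃ θ ∈ Ioc (0 : ℝ) 1, ∃ C > 0, ∀ {e x₀ : E} {b f u : E → ℝ} {F : ℝ},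
      IsPositiveSolution lam Lam e b f u → HasCoeffBounds α B q K d₀ e b f F →
      inner ℝ e x₀ = 0 → ‖x₀‖ < 3 / 2 → ∀ s, 0 < s → s ≤ θ * h → 0 < u (x₀ + s • e) →
      ∃ z ∈ closedBall (x₀ + h • e) (h / 2), u z ≤ C * (u (x₀ + s • e) / s + F) := by
  obtain ⟨θ, hθ, ε, hε, c, hc, C, hC, hhopf⟩ := exists_hopf_constants E hlam hLam hα
  obtain ⟨r₀, ⟨hr₀, -⟩, hsmall⟩ := exists_forall_rpow_mul_le hα B hε
  obtain ⟨h, hh, hh₀⟩ : ∃ h : ℝ, 0 < h ∧ 2 * h ≤ min r₀ (min d₀ (1 / 4)) :=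
    ⟨min r₀ (min d₀ (1 / 4)) / 2, by positivity, by linarith⟩
  simp only [le_min_iff] at hh₀
  obtain ⟨hhr₀, hhd₀, hh₁⟩ := hh₀
  refine ⟨h, ⟨hh, by linarith⟩, θ, hθ, h * (2 + C) / c, by positivity,
    fun {e x₀ b f u F} hu hbf hx₀ hnorm s hs hsθ hpos => ?_⟩
  have hF := hbf.source_const_nonneg
  set Y := u (x₀ + s • e) / s
  have hY : 0 < Y := div_pos hpos hs
  have hYs : Y * s = u (x₀ + s • e) := div_mul_cancel₀ _ hs.ne'
  set t := h * (2 * Y + C * F) / c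
  suffices hz : ∃ z ∈ closedBall (x₀ + h • e) (h / 2), u z < t by
    obtain ⟨z, hz, huz⟩ := hz
    have hcoeff : 2 * Y + C * F ≤ (2 + C) * (Y + F) := by
      have : 0 ≤ C * Y := by positivity
      linarith
    refine ⟨z, hz, huz.le.trans ?_⟩
    calc h * (2 * Y + C * F) / c ≤ h * ((2 + C) * (Y + F)) / c := by gcongr
      _ = h * (2 + C) / c * (Y + F) := by ring
  by_contra! hlow
  have hle := hhopf (hu.isHalfBallSupersolution hx₀ (by linarith)) hh (by positivity)
    hbf.drift_const_nonneg hF (hbf.hasMorreyBound_drift x₀ _) (hsmall _ ⟨by linarith, hhr₀⟩)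
    (fun ρ hρ hρh => hbf.hasMorreyBound_source x₀ hx₀ ρ hρ (hρh.trans hhd₀)) hlow s hs hsθ
  have hpow : (2 * h) ^ α * F ≤ F :=
    mul_le_of_le_one_left hF (Real.rpow_le_one (by linarith) (by linarith) hα.le)
  have hslope : 2 * Y ≤ c * t / h - C * ((2 * h) ^ α * F) := by
    rw [show c * t / h = 2 * Y + C * F by simp only [t]; field_simp]
    linarith [mul_le_mul_of_nonneg_left hpow hC.le]
  linarith [mul_le_mul_of_nonneg_right hslope hs.le, mul_pos hY hs]

lemma exists_interior_touching_constants (E : Type*) [NormedAddCommGroup E]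
    [InnerProductSpace ℝ E] [FiniteDimensional ℝ E] [MeasurableSpace E] [BorelSpace E]
    [Nontrivial E] (hlam : 0 < lam) (hLam : 0 < Lam) (hα : 0 < α) (hd₀ : 0 < d₀) (B q K : ℝ) :
    ∃ δ > 0, ∃ C > 0, ∀ {e y : E} {b f u : E → ℝ} {F : ℝ},
      IsPositiveSolution lam Lam e b f u → HasCoeffBounds α B q K d₀ e b f F →
      y ∈ halfOpenBall e 0 (3 / 2) →
      ∃ z, δ ≤ halfBallDepth e z ∧ u z ≤ C * (u y / inner ℝ e y + F) := by
  obtain ⟨h, ⟨hh, hh₁⟩, θ, ⟨hθ, hθ₁⟩, C, hC, htouch⟩ :=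
    exists_touching_near_foot_constants E hlam hLam hα hd₀ B q K
  have hθh : θ * h ≤ h := mul_le_of_le_one_left hh.le hθ₁
  refine ⟨θ * h / 2, by positivity, C + 2, by positivity, fun {e y b f u F} hu hbf hy => ?_⟩
  have hynorm : ‖y‖ < 3 / 2 := mem_ball_zero_iff.1 hy.1
  have huy : 0 < u y := hu.pos y ⟨ball_subset_ball (by norm_num) hy.1, hy.2⟩
  have hF := hbf.source_const_nonneg
  set s := inner ℝ e y
  have hs : 0 < s := hy.2
  set x₀ := y - s • e
  have hx₀ : inner ℝ e x₀ = 0 := inner_sub_inner_smul hu.norm_eq_one y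
  have hx₀norm : ‖x₀‖ < 3 / 2 := (norm_sub_inner_smul_le hu.norm_eq_one y).trans_lt hynorm
  rcases le_or_gt s (θ * h) with hsθ | hsθ
  · obtain ⟨z, hz, huz⟩ := htouch hu hbf hx₀ hx₀norm s hs hsθ (by rwa [sub_add_cancel])
    rw [sub_add_cancel] at huz
    refine ⟨z, le_trans ?_ (halfBallDepth_sub_le hu.norm_eq_one hz), huz.trans ?_⟩
    · suffices h ≤ halfBallDepth e (x₀ + h • e) by linarith
      have hnorm := norm_add_le x₀ (h • e)
      rw [norm_smul, hu.norm_eq_one, mul_one, Real.norm_of_nonneg hh.le] at hnorm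
      refine le_min (by linarith) ?_
      rw [inner_add_right, hx₀, inner_smul_right, real_inner_self_eq_norm_sq, hu.norm_eq_one]
      linarith
    · gcongr
      linarith
  · refine ⟨y, le_min (by linarith) (show _ ≤ s by linarith), ?_⟩
    have hs₂ : s ≤ 2 := by
      have := real_inner_le_norm e y
      rw [hu.norm_eq_one, one_mul] at this
      linarith
    calc u y = s * (u y / s) := by field_simp
      _ ≤ (C + 2) * (u y / s + F) :=
          mul_le_mul (by linarith) (by linarith) (by positivity) (by positivity)

lemma exists_flat_slope_constant (E : Type*) [NormedAddCommGroup E]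
    [InnerProductSpace ℝ E] [FiniteDimensional ℝ E] [MeasurableSpace E] [BorelSpace E]
    [Nontrivial E] (hlam : 0 < lam) (hLam : 0 ≤ Lam) (hα : 0 < α) (hd₀ : 0 < d₀) (B q K : ℝ) :
    ∃ r > 0, ∃ C > 0, ∀ {e : E} {b f u : E → ℝ} {F A : ℝ},
      IsPositiveSolution lam Lam e b f u → HasCoeffBounds α B q K d₀ e b f F → 0 ≤ A →
      (∀ x ∈ halfClosedBall e 0 (9 / 5), u x ≤ A) →
      ∀ x ∈ halfOpenBall e 0 1, inner ℝ e x ≤ r → u x ≤ C * (A + F) * inner ℝ e x := by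
  obtain ⟨κ, hκ, C, hC, hlipschitz⟩ := exists_boundary_lipschitz_constants E hlam hLam hα
  obtain ⟨r₀, ⟨hr₀, -⟩, hsmall⟩ := exists_forall_rpow_mul_le hα B hκ
  obtain ⟨r, hr, hr_le⟩ : ∃ r : ℝ, 0 < r ∧ r ≤ min r₀ (min d₀ (1 / 4)) :=
    ⟨_, by positivity, le_rfl⟩
  simp only [le_min_iff] at hr_le
  obtain ⟨hrr₀, hrd₀, hr₄⟩ := hr_le
  refine ⟨r, hr, C * (1 / r + 1), by positivity, fun {e b f u F A} hu hbf hA hle x hx hxr => ?_⟩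
  have hF := hbf.source_const_nonneg
  set s := inner ℝ e x
  have hs : 0 < s := hx.2
  set x₀ := x - s • e with hx₀_def
  have hx₀ : inner ℝ e x₀ = 0 := inner_sub_inner_smul hu.norm_eq_one x
  have hx₀norm : ‖x₀‖ < 1 :=
    (norm_sub_inner_smul_le hu.norm_eq_one x).trans_lt (mem_ball_zero_iff.1 hx.1)
  have hsub : closedBall x₀ r ⊆ closedBall 0 (9 / 5) :=
    closedBall_subset_closedBall' (by linarith [dist_zero_right x₀])
  have hbound := hlipschitz (η := A / r) (hu.isHalfBallSubsolution hx₀ (by linarith))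
    (by positivity) hbf.drift_const_nonneg hF
    (fun y hy => by
      rw [div_mul_cancel₀ _ hr.ne']
      exact hle y ⟨hsub hy.1, hy.2⟩)
    (hbf.hasMorreyBound_drift x₀ r) (hsmall r ⟨hr.le, hrr₀⟩)
    (fun ρ hρ hρr => hbf.hasMorreyBound_source x₀ hx₀ ρ hρ (hρr.trans hrd₀)) s hs hxr
  rw [hx₀_def, sub_add_cancel] at hbound
  have hpow : r ^ α * F ≤ F :=
    mul_le_of_le_one_left hF (Real.rpow_le_one hr.le (by linarith) hα.le)
  calc u x ≤ C * (A / r + F) * s := hbound.trans (by gcongr)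
    _ ≤ C * ((1 / r + 1) * (A + F)) * s := by
        gcongr
        have : 0 ≤ 1 / r * F := by positivity
        rw [← one_div_mul_eq_div]
        linarith
    _ = C * (1 / r + 1) * (A + F) * s := by rw [← mul_assoc]

lemma exists_slope_constant (E : Type*) [NormedAddCommGroup E]
    [InnerProductSpace ℝ E] [FiniteDimensional ℝ E] [MeasurableSpace E] [BorelSpace E]
    [Nontrivial E] (hlam : 0 < lam) (hLam : 0 ≤ Lam) (hα : 0 < α) (hd₀ : 0 < d₀) (B q K : ℝ) :
    ∃ C > 0, ∀ {e : E} {b f u : E → ℝ} {F A : ℝ},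
      IsPositiveSolution lam Lam e b f u → HasCoeffBounds α B q K d₀ e b f F → 0 ≤ A →
      (∀ x ∈ halfClosedBall e 0 (9 / 5), u x ≤ A) →
      ∀ x ∈ halfOpenBall e 0 1, u x / inner ℝ e x ≤ C * (A + F) := by
  obtain ⟨r, hr, C, hC, hflat⟩ := exists_flat_slope_constant E hlam hLam hα hd₀ B q K
  refine ⟨C + 1 / r, by positivity, fun {e b f u F A} hu hbf hA hle x hx => ?_⟩
  have hF := hbf.source_const_nonneg
  have hs : 0 < inner ℝ e x := hx.2
  rw [div_le_iff₀ hs, add_mul, add_mul]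
  rcases le_or_gt (inner ℝ e x) r with hxr | hxr
  · exact (hflat hu hbf hA hle x hx hxr).trans (le_add_of_nonneg_right (by positivity))
  · calc u x ≤ A := hle x ⟨closedBall_subset_closedBall (by norm_num)
          (ball_subset_closedBall hx.1), hs.le⟩
      _ = 1 / r * A * r := by field_simp
      _ ≤ 1 / r * (A + F) * inner ℝ e x := by
          gcongr
          linarith
      _ ≤ _ := le_add_of_nonneg_left (by positivity)

theorem exists_boundary_harnack_constant (E : Type*) [NormedAddCommGroup E]
    [InnerProductSpace ℝ E] [FiniteDimensional ℝ E] [MeasurableSpace E] [BorelSpace E]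
    [Nontrivial E] (hlam : 0 < lam) (hLam : 0 < Lam) (hα : 0 < α) (hq : dim E < q) (hK : 0 ≤ K)
    (hd₀ : 0 < d₀) (B : ℝ) :
    ∃ C > 0, ∀ {e : E} {b f u : E → ℝ} {F : ℝ},
      IsPositiveSolution lam Lam e b f u → HasCoeffBounds α B q K d₀ e b f F →
      ∀ x ∈ halfOpenBall e 0 1, ∀ y ∈ halfOpenBall e 0 (3 / 2),
        u x / inner ℝ e x ≤ C * (u y / inner ℝ e y + F) := by
  obtain ⟨δ, hδ, C₁, hC₁, htouch⟩ := exists_interior_touching_constants E hlam hLam hα hd₀ B q K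
  obtain ⟨C₂, hC₂, hinterior⟩ := exists_interior_harnack_constant E hlam hLam hα hq hK hδ B d₀
  obtain ⟨C₃, hC₃, hslope⟩ := exists_slope_constant E hlam hLam.le hα hd₀ B q K
  refine ⟨C₃ * (C₂ * (C₁ + 1) + 1), by positivity, fun {e b f u F} hu hbf x hx y hy => ?_⟩
  obtain ⟨z, hz, huz⟩ := htouch hu hbf hy
  have huz₀ : 0 < u z := hu.pos z (halfBallDepth_pos_iff.1 (hδ.trans_le hz))
  have hF := hbf.source_const_nonneg
  set Y := u y / inner ℝ e y
  have hY : 0 < Y := div_pos (hu.pos y ⟨ball_subset_ball (by norm_num) hy.1, hy.2⟩) hy.2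
  calc u x / inner ℝ e x ≤ C₃ * (C₂ * (u z + F) + F) :=
        hslope hu hbf (by positivity) (hinterior hu hbf hz) x hx
    _ ≤ C₃ * (C₂ * (C₁ * (Y + F) + (Y + F)) + (Y + F)) := by
        gcongr <;> linarith
    _ = C₃ * (C₂ * (C₁ + 1) + 1) * (Y + F) := by ring

end Harnack

/-! ### Pucci operators on Hessian matrices -/

section PucciMatrix

variable {n : ℕ} {u : EuclideanSpace ℝ (Fin n) → ℝ} {x : EuclideanSpace ℝ (Fin n)}

lemma hess_apply (hu : ContDiffAt ℝ 2 u x) (i j : Fin n) :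
    hess n u x i j = fderiv ℝ (fderiv ℝ u) x (EuclideanSpace.single i 1)
      (EuclideanSpace.single j 1) := by
  rw [hess, fderiv_clm_apply (differentiableAt_fderiv_of_contDiffAt_two hu) (by fun_prop)]
  simp

lemma hess_neg (u : EuclideanSpace ℝ (Fin n) → ℝ) (x : EuclideanSpace ℝ (Fin n)) :
    hess n (fun y => -u y) x = -hess n u x := by
  ext i j
  simp only [hess, fderiv_fun_neg, neg_apply, Matrix.neg_apply]

lemma toEuclideanLin_hess (hu : ContDiffAt ℝ 2 u x) :
    Matrix.toEuclideanLin (hess n u x) = (hessOp u x).toLinearMap := by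
  refine (EuclideanSpace.basisFun (Fin n) ℝ).toBasis.ext fun j => ?_
  ext i
  have hcoord : (hessOp u x (EuclideanSpace.single j 1)) i =
      inner ℝ (hessOp u x (EuclideanSpace.single j 1)) (EuclideanSpace.single i 1) := by
    rw [EuclideanSpace.inner_single_right]
    simp
  simp [hcoord, inner_hessOp, hess_apply hu, Matrix.toLpLin_apply,
    hu.isSymmSndFDerivAt (by simp) (EuclideanSpace.single j 1)]

lemma inner_toEuclideanLin_mem_Icc {A : Matrix (Fin n) (Fin n) ℝ}
    (hA : (A - lam • (1 : Matrix (Fin n) (Fin n) ℝ)).PosSemidef)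
    (hA' : (Lam • (1 : Matrix (Fin n) (Fin n) ℝ) - A).PosSemidef)
    {z : EuclideanSpace ℝ (Fin n)} (hz : ‖z‖ = 1) :
    inner ℝ z (Matrix.toEuclideanLin A z) ∈ Icc lam Lam := by
  have h := (Matrix.isPositive_toEuclideanLin_iff.2 hA).inner_nonneg_right z
  have h' := (Matrix.isPositive_toEuclideanLin_iff.2 hA').inner_nonneg_right z
  simp only [map_sub, map_smul, Matrix.toLpLin_one, LinearMap.sub_apply, LinearMap.smul_apply,
    LinearMap.id_apply, inner_sub_right, inner_smul_right, real_inner_self_eq_norm_sq, hz,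
    one_pow, mul_one, sub_nonneg] at h h'
  exact ⟨h, h'⟩

lemma trace_mul_hess (hu : ContDiffAt ℝ 2 u x) (A : Matrix (Fin n) (Fin n) ℝ) :
    (A * hess n u x).trace = ∑ k,
      inner ℝ ((isSymmetric_hessOp hu).eigenvectorBasis rfl k)
        (Matrix.toEuclideanLin A ((isSymmetric_hessOp hu).eigenvectorBasis rfl k)) *
      hessAt u x ((isSymmetric_hessOp hu).eigenvectorBasis rfl k) := by
  set ξ := (isSymmetric_hessOp hu).eigenvectorBasis rfl
  have htrace : (A * hess n u x).trace =
      LinearMap.trace ℝ _ (Matrix.toEuclideanLin (A * hess n u x)) := by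
    rw [Matrix.toEuclideanLin, Matrix.toLpLin_eq_toLin, Matrix.trace_toLin_eq]
  rw [htrace, LinearMap.trace_eq_sum_inner _ ξ]
  refine Finset.sum_congr rfl fun k _ => ?_
  have heigen : hessOp u x (ξ k) = hessAt u x (ξ k) • ξ k := by
    rw [hessAt_eigenvectorBasis hu]
    exact (isSymmetric_hessOp hu).apply_eigenvectorBasis rfl k
  rw [Matrix.toLpLin_mul_same, LinearMap.comp_apply, toEuclideanLin_hess hu,
    ContinuousLinearMap.coe_coe, heigen, map_smul, inner_smul_right, mul_comm]

lemma pucciPlusGe_pucciPlus (hLam : lam ≤ Lam) (hu : ContDiffAt ℝ 2 u x) :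
    PucciPlusGe lam Lam u x (pucciPlus n lam Lam (hess n u x)) := by
  set ξ := (isSymmetric_hessOp hu).eigenvectorBasis rfl
  refine ⟨ξ, fun k => if 0 ≤ hessAt u x (ξ k) then Lam else lam, fun k => ?_, csSup_le ?_ ?_⟩
  · dsimp only
    split_ifs
    exacts [right_mem_Icc.2 hLam, left_mem_Icc.2 hLam]
  · refine ⟨_, lam • 1, by simp [Matrix.IsSymm], by simp [Matrix.PosSemidef.zero], ?_, rfl⟩
    rw [← sub_smul]
    exact Matrix.PosSemidef.one.smul (sub_nonneg.2 hLam)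
  · rintro _ ⟨A, -, hA, hA', rfl⟩
    rw [trace_mul_hess hu]
    refine Finset.sum_le_sum fun k _ => ?_
    have hk := inner_toEuclideanLin_mem_Icc hA hA' (ξ.norm_eq_one k)
    dsimp only
    split_ifs with hsign
    · exact mul_le_mul_of_nonneg_right hk.2 hsign
    · exact mul_le_mul_of_nonpos_right hk.1 (not_le.1 hsign).le

lemma pucciPlus_neg (n : ℕ) (lam Lam : ℝ) (M : Matrix (Fin n) (Fin n) ℝ) :
    pucciPlus n lam Lam (-M) = -pucciMinus n lam Lam M := by
  rw [pucciMinus, Real.sInf_def, neg_neg, pucciPlus]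
  congr 1
  ext t
  simp only [Matrix.mul_neg, Matrix.trace_neg, Set.mem_neg, mem_ofPred_eq, neg_eq_iff_eq_neg]

lemma pucciPlusGe_neg_pucciMinus (hLam : lam ≤ Lam) (hu : ContDiffAt ℝ 2 u x) :
    PucciPlusGe lam Lam (fun y => -u y) x (-pucciMinus n lam Lam (hess n u x)) := by
  rw [← pucciPlus_neg, ← hess_neg]
  exact pucciPlusGe_pucciPlus hLam hu.neg

end PucciMatrix

/-! ### Half-balls of Euclidean space -/

section Coefficients

section AbsOn

variable {X : Type*} {S : Set X} {g : X → ℝ} {x : X}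

/-- The extension of `|g|` from `S` to the whole space by zero. -/
noncomputable def absOn (S : Set X) (g : X → ℝ) : X → ℝ := S.indicator fun x => |g x|

lemma absOn_nonneg (S : Set X) (g : X → ℝ) (x : X) : 0 ≤ absOn S g x :=
  indicator_nonneg (fun _ _ => abs_nonneg _) x

lemma absOn_of_mem (hx : x ∈ S) : absOn S g x = |g x| := indicator_of_mem hx _

lemma measurable_absOn [MeasurableSpace X] (hS : MeasurableSet S)
    (hg : Measurable fun x : S => g x) : Measurable (absOn S g) := by
  have hin : S.domRestrict (absOn S g) = fun x : S => |g x| := funext fun x => absOn_of_mem x.2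
  have hout : Sᶜ.domRestrict (absOn S g) = fun _ => 0 :=
    funext fun x => indicator_of_notMem x.2 fun y => |g y|
  refine measurable_of_restrict_of_restrict_compl hS ?_ ?_
  · rw [hin]
    exact hg.abs
  · rw [hout]
    exact measurable_const

end AbsOn

variable {S T : Set E} {g : E → ℝ} {p q s N : ℝ} [MeasurableSpace E] [BorelSpace E]

variable [FiniteDimensional ℝ E]

lemma eLpNorm_absOn_le {T' : Set E} (hS : MeasurableSet S) (hT : S ∩ T ⊆ T') (r : ℝ≥0∞) :
    eLpNorm (absOn S g) r (volume.restrict T) ≤ eLpNorm g r (volume.restrict T') := by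
  rw [absOn, eLpNorm_indicator_eq_eLpNorm_restrict hS, Measure.restrict_restrict hS]
  exact (eLpNorm_norm g).le.trans (eLpNorm_mono_measure g (Measure.restrict_mono_set volume hT))

lemma lintegral_ofReal_rpow_le {K : ℝ} (hg : ∀ x, 0 ≤ g x) (hq : 0 < q) (hK : 0 ≤ K)
    (hgK : eLpNorm g (ENNReal.ofReal q) volume ≤ ENNReal.ofReal K) :
    ∫⁻ x, ENNReal.ofReal (g x) ^ q ≤ ENNReal.ofReal (K ^ q) := by
  rw [eLpNorm_eq_lintegral_rpow_enorm_toReal (by simpa) (by simp),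
    ENNReal.toReal_ofReal hq.le, one_div, ENNReal.rpow_inv_le_iff hq,
    ENNReal.ofReal_rpow_of_nonneg hK hq.le] at hgK
  simpa only [Real.enorm_of_nonneg (hg _)] using hgK

lemma dimNorm_absOn_univ_le (hS : MeasurableSet S) (hT : S ⊆ T) :
    dimNorm (absOn S g) univ ≤ dimNorm (absOn S g) T := by
  rw [dimNorm, dimNorm, absOn, eLpNorm_indicator_eq_eLpNorm_restrict hS,
    eLpNorm_indicator_eq_eLpNorm_restrict hS, Measure.restrict_restrict hS,
    Measure.restrict_restrict hS, inter_univ, inter_eq_left.2 hT]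

/-- The factor relating the `Lᵖ` and `L^q` bounds on the source to the bounds of
`HasCoeffBounds`. -/
noncomputable def sourceFactor (E : Type*) [NormedAddCommGroup E] [InnerProductSpace ℝ E]
    [FiniteDimensional ℝ E] [MeasurableSpace E] [BorelSpace E] (p q : ℝ) : ℝ :=
  1 + (ballRoot E * 2) ^ (1 - dim E / p) + ballRoot E ^ (1 - dim E / q)

variable (E p q) in
lemma one_le_sourceFactor : 1 ≤ sourceFactor E p q := by
  have hroot := ballRoot_pos (E := E)
  have : 0 ≤ (ballRoot E * 2) ^ (1 - dim E / p) := by positivity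
  have : 0 ≤ ballRoot E ^ (1 - dim E / q) := by positivity
  rw [sourceFactor]
  linarith

variable [Nontrivial E]

lemma dimNorm_ball_le {ρ : ℝ} (hg : Measurable g) (hs : dim E ≤ s) (hρ : 0 ≤ ρ) (hN : 0 ≤ N)
    (hgN : eLpNorm g (ENNReal.ofReal s) (volume.restrict (ball x ρ)) ≤ ENNReal.ofReal N) :
    dimNorm g (ball x ρ) ≤
      ENNReal.ofReal ((ballRoot E * ρ) ^ (1 - dim E / s) * N) := by
  have hdim : (0 : ℝ) < dim E := by exact_mod_cast finrank_pos
  have hs₀ : 0 < s := hdim.trans_le hs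
  have hbase : 0 ≤ ballRoot E * ρ := mul_nonneg ballRoot_pos.le hρ
  have hexp : 0 ≤ 1 - dim E / s := sub_nonneg.2 ((div_le_one hs₀).2 hs)
  have hvolume : volume (ball x ρ) ^ (1 / (dim E : ℝ) - 1 / s) =
      ENNReal.ofReal ((ballRoot E * ρ) ^ (1 - dim E / s)) := by
    rw [volume_ball_eq_ofReal_pow x hρ, ← ENNReal.rpow_natCast, ← ENNReal.rpow_mul,
      ENNReal.ofReal_rpow_of_nonneg hbase hexp |>.symm]
    congr 1
    field_simp
  have hholder := eLpNorm_le_eLpNorm_mul_rpow_measure_univ (p := (dim E : ℝ≥0∞))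
    (q := ENNReal.ofReal s) (μ := volume.restrict (ball x ρ)) (f := g)
    (by rw [← ENNReal.ofReal_natCast]; exact ENNReal.ofReal_le_ofReal hs) hg.aestronglyMeasurable
  rw [Measure.restrict_apply_univ, ENNReal.toReal_natCast, ENNReal.toReal_ofReal hs₀.le,
    hvolume] at hholder
  rw [mul_comm, ENNReal.ofReal_mul hN]
  exact hholder.trans (by gcongr)

lemma hasMorreyBound_of_eLpNorm_le {r : ℝ} (hg : Measurable g) (hq : dim E ≤ q) (hN : 0 ≤ N)
    (hgN : ∀ ρ ≤ r, eLpNorm g (ENNReal.ofReal q) (volume.restrict (ball x ρ)) ≤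
      ENNReal.ofReal N) :
    HasMorreyBound (1 - dim E / q) (ballRoot E ^ (1 - dim E / q) * N) r g x := by
  intro ρ hρ hρr
  refine (dimNorm_ball_le hg hq hρ.le hN (hgN ρ hρr)).trans_eq ?_
  rw [Real.mul_rpow ballRoot_pos.le hρ.le]
  ring_nf

lemma hasCoeffBounds_absOn {e : E} {b f : E → ℝ} {K d₀ : ℝ} (he : ‖e‖ = 1)
    (hp : dim E ≤ p) (hq : dim E < q) (hK : 0 ≤ K) (hN : 0 ≤ N)
    (hb : Measurable (absOn (halfOpenBall e 0 2) b))
    (hf : Measurable (absOn (halfOpenBall e 0 2) f))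
    (hbK : eLpNorm b (ENNReal.ofReal q) (volume.restrict (halfOpenBall e 0 2)) ≤ ENNReal.ofReal K)
    (hfp : eLpNorm f (ENNReal.ofReal p) (volume.restrict (halfOpenBall e 0 2)) ≤ ENNReal.ofReal N)
    (hfq : eLpNorm f (ENNReal.ofReal q)
      (volume.restrict {x ∈ halfOpenBall e 0 2 | inner ℝ e x < d₀}) ≤ ENNReal.ofReal N) :
    HasCoeffBounds (1 - dim E / q) (ballRoot E ^ (1 - dim E / q) * K) q (K ^ q) d₀ e
      (absOn (halfOpenBall e 0 2) b) (absOn (halfOpenBall e 0 2) f) (sourceFactor E p q * N) := by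
  have hdim : (0 : ℝ) < dim E := by exact_mod_cast finrank_pos
  have hS : MeasurableSet (halfOpenBall e 0 2) := isOpen_halfOpenBall.measurableSet
  have hroot := ballRoot_pos (E := E)
  have hfactor := zero_le_one.trans (one_le_sourceFactor E p q)
  refine ⟨by positivity, by positivity, fun x r => ?_, ?_, ?_, fun x hx ρ hρ hρd => ?_⟩
  · exact hasMorreyBound_of_eLpNorm_le hb hq.le hK fun ρ _ =>
      (eLpNorm_absOn_le hS inter_subset_left _).trans hbK
  · refine lintegral_ofReal_rpow_le (absOn_nonneg _ _) (hdim.trans hq) hK ?_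
    rw [← Measure.restrict_univ (μ := volume)]
    exact (eLpNorm_absOn_le hS inter_subset_left _).trans hbK
  · refine (dimNorm_absOn_univ_le hS inter_subset_left).trans <| (dimNorm_ball_le hf hp
      zero_le_two hN ((eLpNorm_absOn_le hS inter_subset_left _).trans hfp)).trans ?_
    gcongr
    rw [sourceFactor]
    linarith [Real.rpow_nonneg hroot.le (1 - dim E / q)]
  · refine (hasMorreyBound_of_eLpNorm_le hf hq.le hN (fun ρ hρd => ?_) ρ hρ hρd).trans ?_
    · refine (eLpNorm_absOn_le hS (T' := {x ∈ halfOpenBall e 0 2 | inner ℝ e x < d₀})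
        (fun y hy => ⟨hy.1, ?_⟩) _).trans hfq
      have hle := real_inner_le_norm e (y - x)
      rw [he, inner_sub_right, hx, one_mul, sub_zero] at hle
      exact hle.trans_lt ((mem_ball_iff_norm.1 hy.2).trans_le hρd)
    · gcongr
      rw [sourceFactor]
      linarith [Real.rpow_nonneg (mul_nonneg hroot.le zero_le_two) (1 - dim E / p)]

end Coefficients

section HalfBall

variable {n : ℕ} (hn : 1 ≤ n)

/-- The last vector of the standard basis, the inner normal to the flat part of the boundary. -/
noncomputable def lastVec : EuclideanSpace ℝ (Fin n) :=
  EuclideanSpace.single ⟨n - 1, by omega⟩ 1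

lemma norm_lastVec : ‖lastVec hn‖ = 1 := by simp [lastVec]

lemma inner_lastVec (x : EuclideanSpace ℝ (Fin n)) : inner ℝ (lastVec hn) x = lastC n hn x := by
  simp [lastVec, lastC, EuclideanSpace.inner_single_left]

lemma halfBall_eq_halfOpenBall (R : ℝ) : halfBall n hn R = halfOpenBall (lastVec hn) 0 R := by
  ext x
  simp [halfBall, halfOpenBall, inner_lastVec]

lemma LpNormE_eq_eLpNorm {p : ℝ} (hp : 0 < p) (g : EuclideanSpace ℝ (Fin n) → ℝ)
    (S : Set (EuclideanSpace ℝ (Fin n))) :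
    LpNormE n p g S = eLpNorm g (ENNReal.ofReal p) (volume.restrict S) := by
  rw [LpNormE, eLpNorm_eq_lintegral_rpow_enorm_toReal (by simpa) (by simp),
    ENNReal.toReal_ofReal hp.le]
  simp only [Real.enorm_eq_ofReal_abs, ENNReal.ofReal_rpow_of_nonneg (abs_nonneg _) hp.le]

variable {b f u : EuclideanSpace ℝ (Fin n) → ℝ}

lemma isPositiveSolution_of_pucci (hLam : lam ≤ Lam)
    (hb : Measurable fun x : halfBall n hn 2 => b x)
    (hf : Measurable fun x : halfBall n hn 2 => f x)
    (hu : ContinuousOn u (halfBall n hn 2 ∪ flatB n hn 2))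
    (hu₂ : ContDiffOn ℝ 2 u (halfBall n hn 2))
    (hminus : ∀ x ∈ halfBall n hn 2,
      pucciMinus n lam Lam (hess n u x) - b x * gradNorm n u x ≤ max (f x) 0)
    (hplus : ∀ x ∈ halfBall n hn 2,
      -(max (-f x) 0) ≤ pucciPlus n lam Lam (hess n u x) + b x * gradNorm n u x)
    (hpos : ∀ x ∈ halfBall n hn 2, 0 < u x) (hzero : ∀ x ∈ flatB n hn 2, u x = 0) :
    IsPositiveSolution lam Lam (lastVec hn) (absOn (halfBall n hn 2) b)
      (absOn (halfBall n hn 2) f) u := by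
  have hopen : IsOpen (halfBall n hn 2) := halfBall_eq_halfOpenBall hn 2 ▸ isOpen_halfOpenBall
  have hcontDiffAt (x) (hx : x ∈ halfBall n hn 2) : ContDiffAt ℝ 2 u x :=
    hu₂.contDiffAt (hopen.mem_nhds hx)
  have hdrift (x) : b x * ‖fderiv ℝ u x‖ ≤ |b x| * ‖fderiv ℝ u x‖ :=
    mul_le_mul_of_nonneg_right (le_abs_self _) (norm_nonneg _)
  simp only [gradNorm] at hminus hplus
  refine ⟨norm_lastVec hn, hu.mono ?_, ?_, ?_, measurable_absOn hopen.measurableSet hb,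
    measurable_absOn hopen.measurableSet hf, absOn_nonneg _ _, ?_, ?_⟩
  · intro x hx
    rw [mem_ofPred_eq, inner_lastVec] at hx
    exact hx.2.eq_or_lt.elim (fun h => .inr ⟨hx.1.le, h.symm⟩) fun h => .inl ⟨hx.1, h⟩
  · intro x hx hin
    exact hzero x ⟨hx.le, inner_lastVec hn x ▸ hin⟩
  all_goals rw [← halfBall_eq_halfOpenBall]
  · exact hpos
  · refine fun x hx => ⟨hcontDiffAt x hx, (pucciPlusGe_pucciPlus hLam (hcontDiffAt x hx)).mono ?_⟩
    rw [absOn_of_mem hx, absOn_of_mem hx]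
    linarith [hplus x hx, hdrift x, max_le (neg_le_abs (f x)) (abs_nonneg _)]
  · refine fun x hx => ⟨(hcontDiffAt x hx).neg,
      (pucciPlusGe_neg_pucciMinus hLam (hcontDiffAt x hx)).mono ?_⟩
    rw [absOn_of_mem hx, absOn_of_mem hx, fderiv_fun_neg, norm_neg]
    linarith [hminus x hx, hdrift x, max_le (le_abs_self (f x)) (abs_nonneg _)]

lemma hasCoeffBounds_of_LpNormE_le {p q d₀ K : ℝ} (hp : (n : ℝ) ≤ p) (hq : (n : ℝ) < q)
    (hK : 0 ≤ K) (hb : Measurable fun x : halfBall n hn 2 => b x)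
    (hf : Measurable fun x : halfBall n hn 2 => f x)
    (hbK : LpNormE n q b (halfBall n hn 2) ≤ ENNReal.ofReal K)
    (hfin : LpqNormHB n hn p q d₀ 2 f ≠ ∞) :
    HasCoeffBounds (1 - n / q)
      (ballRoot (EuclideanSpace ℝ (Fin n)) ^ (1 - n / q) * K) q (K ^ q) d₀ (lastVec hn)
      (absOn (halfBall n hn 2) b) (absOn (halfBall n hn 2) f)
      (sourceFactor (EuclideanSpace ℝ (Fin n)) p q * (LpqNormHB n hn p q d₀ 2 f).toReal) := by
  have : Nonempty (Fin n) := ⟨⟨0, hn⟩⟩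
  have hn₀ : (0 : ℝ) < n := by exact_mod_cast hn
  have hdim : dim (EuclideanSpace ℝ (Fin n)) = n := finrank_euclideanSpace_fin
  have hmeas : MeasurableSet (halfBall n hn 2) := by
    rw [halfBall_eq_halfOpenBall]
    exact isOpen_halfOpenBall.measurableSet
  have hfp : LpNormE n p f (halfBall n hn 2) ≤
      ENNReal.ofReal (LpqNormHB n hn p q d₀ 2 f).toReal := by
    rw [ENNReal.ofReal_toReal hfin]
    exact le_self_add
  have hfq : LpNormE n q f {x ∈ halfBall n hn 2 | lastC n hn x < d₀} ≤
      ENNReal.ofReal (LpqNormHB n hn p q d₀ 2 f).toReal := by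
    rw [ENNReal.ofReal_toReal hfin]
    exact le_add_self
  rw [LpNormE_eq_eLpNorm (by linarith)] at hbK hfp hfq
  have hb' := measurable_absOn hmeas hb
  have hf' := measurable_absOn hmeas hf
  simp only [halfBall_eq_halfOpenBall, ← inner_lastVec] at hbK hfp hfq hb' hf' ⊢
  have hcoeff := hasCoeffBounds_absOn (norm_lastVec hn) (hdim.symm ▸ hp) (hdim.symm ▸ hq) hK
    ENNReal.toReal_nonneg hb' hf' hbK hfp hfq
  rwa [hdim] at hcoeff

end HalfBall

lemma ofReal_le_mul_ofReal_iInf_add {ι : Type*} [Nonempty ι] {g : ι → ℝ} {a c C N : ℝ}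
    (hg : ∀ i, 0 ≤ g i) (hC : 0 < C) (hc : 1 ≤ c) (hN : 0 ≤ N)
    (h : ∀ i, a ≤ C * (g i + c * N)) :
    ENNReal.ofReal a ≤
      ENNReal.ofReal (C * c) * (ENNReal.ofReal (⨅ i, g i) + ENNReal.ofReal N) := by
  have hinf : 0 ≤ ⨅ i, g i := Real.iInf_nonneg hg
  have hle : a / C - c * N ≤ ⨅ i, g i := le_ciInf fun i => by
    rw [sub_le_iff_le_add, div_le_iff₀' hC]
    exact h i
  rw [← ENNReal.ofReal_add hinf hN, ← ENNReal.ofReal_mul (by positivity)]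
  refine ENNReal.ofReal_le_ofReal ?_
  calc a ≤ C * ((⨅ i, g i) + c * N) := by
        rwa [sub_le_iff_le_add, div_le_iff₀' hC] at hle
    _ ≤ C * (c * (⨅ i, g i) + c * N) := by
        gcongr
        exact le_mul_of_one_le_left hinf hc
    _ = C * c * ((⨅ i, g i) + N) := by ring

end BoundaryHarnack

open BoundaryHarnack in
theorem inhomogeneous_boundary_harnack_inequality_general
    (n : ℕ) (hn : 1 ≤ n) (lam Lam : ℝ) (hlam : 0 < lam) (hLam : lam ≤ Lam)
    (p q d0 K : ℝ) (hq : (n : ℝ) < q) (hp : (n : ℝ) ≤ p) (hd0 : 0 < d0) (hK : 0 ≤ K) :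
    ∃ C : ℝ, 0 < C ∧
      ∀ b f u : EuclideanSpace ℝ (Fin n) → ℝ,
        (Measurable fun x : halfBall n hn 2 => b x) →
        (Measurable fun x : halfBall n hn 2 => f x) →
        LpNormE n q b (halfBall n hn 2) ≤ ENNReal.ofReal K →
        ContinuousOn u (halfBall n hn 2 ∪ flatB n hn 2) →
        ContDiffOn ℝ 2 u (halfBall n hn 2) →
        (∀ x ∈ halfBall n hn 2,
          pucciMinus n lam Lam (hess n u x) - b x * gradNorm n u x ≤ max (f x) 0) →
        (∀ x ∈ halfBall n hn 2,
          -(max (-f x) 0) ≤ pucciPlus n lam Lam (hess n u x) + b x * gradNorm n u x) →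
        (∀ x ∈ halfBall n hn 2, 0 < u x) →
        (∀ x ∈ flatB n hn 2, u x = 0) →
        ∀ x ∈ halfBall n hn 1,
          ENNReal.ofReal (u x / lastC n hn x)
            ≤ ENNReal.ofReal C *
              (ENNReal.ofReal (⨅ y : halfBall n hn (3 / 2), u y.1 / lastC n hn y.1)
                + LpqNormHB n hn p q d0 2 f) := by
  have : Nonempty (Fin n) := ⟨⟨0, hn⟩⟩
  have hq₀ : (0 : ℝ) < q := n.cast_nonneg.trans_lt hq
  obtain ⟨C, hC, hharnack⟩ := exists_boundary_harnack_constant (EuclideanSpace ℝ (Fin n))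
    hlam (hlam.trans_le hLam) (sub_pos.2 ((div_lt_one hq₀).2 hq)) (by simpa using hq)
    (Real.rpow_nonneg hK q) hd0 (ballRoot (EuclideanSpace ℝ (Fin n)) ^ (1 - n / q) * K)
  have hfactor := one_le_sourceFactor (EuclideanSpace ℝ (Fin n)) p q
  have hconst := mul_pos hC (zero_lt_one.trans_le hfactor)
  refine ⟨C * sourceFactor (EuclideanSpace ℝ (Fin n)) p q, hconst, ?_⟩
  intro b f u hb hf hbK hu hu₂ hminus hplus hpos hzero x hx
  by_cases hfin : LpqNormHB n hn p q d0 2 f = ∞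
  · rw [hfin, add_top, ENNReal.mul_top (ENNReal.ofReal_pos.2 hconst).ne']
    exact le_top
  have hsol := isPositiveSolution_of_pucci hn hLam hb hf hu hu₂ hminus hplus hpos hzero
  have hcoeff := hasCoeffBounds_of_LpNormE_le hn hp hq hK hb hf hbK hfin
  have : Nonempty (halfBall n hn (3 / 2)) := ⟨x, by linarith [hx.1], hx.2⟩
  rw [← ENNReal.ofReal_toReal hfin]
  refine ofReal_le_mul_ofReal_iInf_add (fun y => ?_) hC hfactor ENNReal.toReal_nonneg fun y => ?_
  · exact div_nonneg (hpos y ⟨by linarith [y.2.1], y.2.2⟩).le y.2.2.le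
  · simp only [← inner_lastVec]
    exact hharnack hsol hcoeff x (halfBall_eq_halfOpenBall hn 1 ▸ hx) y
      (halfBall_eq_halfOpenBall hn (3 / 2) ▸ y.2)

/-- Inhomogeneous boundary Harnack inequality in half-balls. -/
theorem inhomogeneous_boundary_harnack_inequality
    (n : ℕ) (hn : 2 ≤ n) (lam Lam : ℝ) (hlam : 0 < lam) (hLam : lam ≤ Lam)
    (p q d0 K : ℝ) (hq : (n : ℝ) < q) (hp : (n : ℝ) ≤ p) (hpq : p ≤ q)
    (hd0 : 0 < d0) (hd0' : d0 ≤ 1 / 4) (hK : 0 < K) :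
    ∃ C : ℝ, 0 < C ∧
      ∀ b f u : EuclideanSpace ℝ (Fin n) → ℝ,
        ContinuousOn b (halfBall n (by omega) 2) →
        ContinuousOn f (halfBall n (by omega) 2) →
        (∀ x ∈ halfBall n (by omega) 2, 0 ≤ b x) →
        LpNormE n q b (halfBall n (by omega) 2) ≤ ENNReal.ofReal K →
        ContinuousOn u (halfBall n (by omega) 2 ∪ flatB n (by omega) 2) →
        ContDiffOn ℝ 2 u (halfBall n (by omega) 2) →
        (∀ x ∈ halfBall n (by omega) 2,
          pucciMinus n lam Lam (hess n u x) - b x * gradNorm n u x ≤ max (f x) 0) →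
        (∀ x ∈ halfBall n (by omega) 2,
          -(max (-f x) 0) ≤ pucciPlus n lam Lam (hess n u x) + b x * gradNorm n u x) →
        (∀ x ∈ halfBall n (by omega) 2, 0 < u x) →
        (∀ x ∈ flatB n (by omega : 1 ≤ n) 2, u x = 0) →
        ∀ x ∈ halfBall n (by omega : 1 ≤ n) 1,
          ENNReal.ofReal (u x / lastC n (by omega) x)
            ≤ ENNReal.ofReal C *
              (ENNReal.ofReal (⨅ y : halfBall n (by omega : 1 ≤ n) (3 / 2),
                  u y.1 / lastC n (by omega) y.1)
                + LpqNormHB n (by omega) p q d0 2 f) := by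
  obtain ⟨C, hC, h⟩ := inhomogeneous_boundary_harnack_inequality_general n (by omega) lam Lam
    hlam hLam p q d0 K hq hp hd0 hK.le
  exact ⟨C, hC, fun b f u hb hf _ => h b f u
    (continuousOn_iff_continuous_domRestrict.1 hb).measurable
    (continuousOn_iff_continuous_domRestrict.1 hf).measurable⟩
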